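/- arXiv:2504.17932 — 2 statements merged into one kernel-verified Lean document; each statement's English description precedes it below -/
import Mathlib

section
/- Let d ≥ 2, μ > 0, and ψ ∈ C_c^∞(ℝ^{d−1}) with supp ψ ⊆ {η : 0 < c₀ ≤ |η| ≤ c₁}. Let q > 2 and r ≥ 2 satisfy 1/q = ((d−1)/2)(1/2 − 1/r). Then there exists C > 0, depending only on d, μ, ψ, q, r, such that for every j ≥ 0 and every f₀ ∈ 𝒮(ℝ^{d−1}), the solution f(t, x′) := (2π)^{1−d} ∫_{ℝ^{d−1}} e^{i x′·ξ′} cos(t μ^{1/2} |ξ′|^{1/2}) ψ(2^{−2j} ξ′) f̂₀(ξ′) dξ′ of the initial value problem ∂_t² f + μ|∇_{x′}| f = 0, (f, ∂_t f)(0) = (ψ(2^{−2j}D_{x′}) f₀, 0), satisfies ‖f‖_{L^q([0,1]; L^r(ℝ^{d−1}))} ≤ C · 2^{2j·(3(d−1)/4)(1/2 − 1/r)} ‖ψ(2^{−2j}D_{x′}) f₀‖_{L²(ℝ^{d−1})}. -/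
open Real MeasureTheory
open scoped RealInnerProductSpace

noncomputable section

/-- The Fourier transform `f̂(ξ) = ∫ e^{−ix·ξ} f(x) dx`. -/
def fhat {n : ℕ} (φ : EuclideanSpace ℝ (Fin n) → ℂ)
    (ξ : EuclideanSpace ℝ (Fin n)) : ℂ :=
  ∫ x : EuclideanSpace ℝ (Fin n), Complex.exp (-Complex.I * (⟪x, ξ⟫ : ℝ)) * φ x

/-- The solution `f(t,x′)` of `∂_t²f + μ|∇_{x′}|f = 0` with frequency-localized
initial data `(ψ(2^{−2j}D)f₀, 0)`. -/
def halfWave (d : ℕ) (μ : ℝ) (ψ : EuclideanSpace ℝ (Fin (d - 1)) → ℝ) (j : ℕ)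
    (f₀ : EuclideanSpace ℝ (Fin (d - 1)) → ℂ)
    (t : ℝ) (x' : EuclideanSpace ℝ (Fin (d - 1))) : ℂ :=
  (((2 * π) ^ ((1 : ℤ) - (d : ℤ)) : ℝ) : ℂ) *
    ∫ ξ : EuclideanSpace ℝ (Fin (d - 1)),
      Complex.exp (Complex.I * (⟪x', ξ⟫ : ℝ)) *
        (Real.cos (t * Real.sqrt μ * Real.sqrt ‖ξ‖) : ℂ) *
        (ψ (((2 : ℝ) ^ (2 * j))⁻¹ • ξ) : ℂ) * fhat f₀ ξ

/-- The frequency cutoff `ψ(2^{−2j}D_{x′})f₀`. -/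
def cutoff (d : ℕ) (ψ : EuclideanSpace ℝ (Fin (d - 1)) → ℝ) (j : ℕ)
    (f₀ : EuclideanSpace ℝ (Fin (d - 1)) → ℂ)
    (x' : EuclideanSpace ℝ (Fin (d - 1))) : ℂ :=
  (((2 * π) ^ ((1 : ℤ) - (d : ℤ)) : ℝ) : ℂ) *
    ∫ ξ : EuclideanSpace ℝ (Fin (d - 1)),
      Complex.exp (Complex.I * (⟪x', ξ⟫ : ℝ)) *
        (ψ (((2 : ℝ) ^ (2 * j))⁻¹ • ξ) : ℂ) * fhat f₀ ξ

section Helpers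
set_option linter.unusedVariables false
set_option linter.unusedSectionVars false
open scoped ENNReal ContDiff

lemma near_int (a : ℝ) (ha0 : 0 < a) (ha1 : a < 1) (t R : ℝ) (hR : 0 < R) :
    ∫⁻ s in {s : ℝ | |t - s| < R}, ENNReal.ofReal (|t - s| ^ (-a))
      ≤ ENNReal.ofReal (2 / (1 - a) * R ^ (1 - a)) := by
  have key : ∫⁻ s in Set.Ioo (0:ℝ) R, ENNReal.ofReal (s ^ (-a))
      = ENNReal.ofReal (R ^ (1 - a) / (1 - a)) := by
    have h1 : IntegrableOn (fun s : ℝ => s ^ (-a)) (Set.Ioo 0 R) := by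
      exact (intervalIntegral.integrableOn_Ioo_rpow_iff hR).2 (by linarith)
    rw [← ofReal_integral_eq_lintegral_ofReal h1]
    · rw [← integral_Ioc_eq_integral_Ioo, ← intervalIntegral.integral_of_le hR.le,
        integral_rpow (Or.inl (by linarith))]
      congr 1
      rw [Real.zero_rpow (by linarith)]
      ring_nf
    · filter_upwards [ae_restrict_mem measurableSet_Ioo] with s hs
      exact Real.rpow_nonneg hs.1.le _
  have e1 : ∫⁻ s in {s : ℝ | |t - s| < R}, ENNReal.ofReal (|t - s| ^ (-a))
      = ∫⁻ s in Set.Ioo (-R) R, ENNReal.ofReal (|s| ^ (-a)) := by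
    have hm : MeasurableSet {s : ℝ | |t - s| < R} := measurableSet_lt (by fun_prop) (by fun_prop)
    rw [← lintegral_indicator hm, ← lintegral_indicator measurableSet_Ioo]
    rw [← lintegral_sub_left_eq_self _ t]
    congr 1; ext s
    simp only [Set.indicator, Set.mem_ofPred_eq, Set.mem_Ioo, sub_sub_cancel, abs_lt]
  rw [e1]
  have e2 : Set.Ioo (-R) R ⊆ (Set.Ioo (-R) 0 ∪ Set.Ioo 0 R) ∪ {0} := by
    intro x hx
    rcases lt_trichotomy x 0 with h | h | h
    · exact Or.inl (Or.inl ⟨hx.1, h⟩)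
    · exact Or.inr h
    · exact Or.inl (Or.inr ⟨h, hx.2⟩)
  have e3 : ∫⁻ s in Set.Ioo 0 R, ENNReal.ofReal (|s| ^ (-a)) = ENNReal.ofReal (R ^ (1 - a) / (1 - a)) := by
    rw [← key]
    apply setLIntegral_congr_fun measurableSet_Ioo
    intro s hs
    simp only [abs_of_pos hs.1]
  have e4 : ∫⁻ s in Set.Ioo (-R) 0, ENNReal.ofReal (|s| ^ (-a)) = ENNReal.ofReal (R ^ (1 - a) / (1 - a)) := by
    rw [← e3, ← lintegral_indicator measurableSet_Ioo, ← lintegral_indicator measurableSet_Ioo,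
      ← lintegral_neg_eq_self]
    congr 1; ext s
    simp only [Set.indicator, Set.mem_Ioo, abs_neg]
    congr 1
    apply propext; constructor <;> rintro ⟨h1, h2⟩ <;> constructor <;> linarith
  calc _ ≤ _ := lintegral_mono_set e2
    _ ≤ _ := lintegral_union_le _ _ _
    _ ≤ (ENNReal.ofReal (R ^ (1 - a) / (1 - a)) + ENNReal.ofReal (R ^ (1 - a) / (1 - a))) + 0 := by
        gcongr
        · refine (lintegral_union_le _ _ _).trans ?_
          rw [e3, e4]
        · simp
    _ = _ := by
        have : 0 ≤ R ^ (1 - a) / (1 - a) := div_nonneg (Real.rpow_nonneg hR.le _) (by linarith)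
        rw [add_zero, ← ENNReal.ofReal_add this this]
        congr 1; ring

lemma far_int (t R : ℝ) (hR : 0 < R) :
    ∫⁻ s in {s : ℝ | R ≤ |t - s|}, ENNReal.ofReal (|t - s| ^ (-2 : ℝ))
      ≤ ENNReal.ofReal (2 * R⁻¹) := by
  have key : ∫⁻ s in Set.Ioi R, ENNReal.ofReal (s ^ (-2 : ℝ))
      = ENNReal.ofReal (R⁻¹) := by
    rw [← ofReal_integral_eq_lintegral_ofReal (integrableOn_Ioi_rpow_of_lt (by norm_num) hR)]
    · rw [integral_Ioi_rpow_of_lt (by norm_num) hR]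
      congr 1
      norm_num
      rw [Real.rpow_neg_one]
    · filter_upwards [ae_restrict_mem measurableSet_Ioi] with s hs
      exact Real.rpow_nonneg (hR.le.trans (le_of_lt hs)) _
  have e1 : ∫⁻ s in {s : ℝ | R ≤ |t - s|}, ENNReal.ofReal (|t - s| ^ (-2:ℝ))
      = ∫⁻ s in Set.Iic (-R) ∪ Set.Ici R, ENNReal.ofReal (|s| ^ (-2:ℝ)) := by
    have hm : MeasurableSet {s : ℝ | R ≤ |t - s|} := measurableSet_le (by fun_prop) (by fun_prop)
    rw [← lintegral_indicator hm, ← lintegral_indicator (measurableSet_Iic.union measurableSet_Ici)]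
    rw [← lintegral_sub_left_eq_self _ t]
    congr 1; ext s
    simp only [Set.indicator, Set.mem_ofPred_eq, sub_sub_cancel, le_abs, Set.mem_union, Set.mem_Iic, Set.mem_Ici]
    congr 1
    apply propext; constructor <;> rintro (h1| h2) <;> first | (left; linarith) | (right; linarith)
  rw [e1]
  have e3 : ∫⁻ s in Set.Ici R, ENNReal.ofReal (|s| ^ (-2:ℝ)) = ENNReal.ofReal (R⁻¹) := by
    rw [← key, setLIntegral_congr Ioi_ae_eq_Ici.symm]
    apply setLIntegral_congr_fun measurableSet_Ioi
    intro s hs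
    simp only [abs_of_pos (hR.trans hs)]
  have e4 : ∫⁻ s in Set.Iic (-R), ENNReal.ofReal (|s| ^ (-2:ℝ)) = ENNReal.ofReal (R⁻¹) := by
    rw [← e3, ← lintegral_indicator measurableSet_Iic, ← lintegral_indicator measurableSet_Ici,
      ← lintegral_neg_eq_self]
    congr 1; ext s
    simp only [Set.indicator, Set.mem_Iic, Set.mem_Ici, abs_neg]
    congr 1
    apply propext; constructor <;> intro h <;> linarith
  refine (lintegral_union_le _ _ _).trans ?_
  rw [e3, e4, ← ENNReal.ofReal_add (by positivity) (by positivity)]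
  apply le_of_eq; congr 1; ring

/-- pointwise Hedberg-type bound -/
lemma hedberg (a : ℝ) (ha0 : 0 < a) (ha1 : a < 1) (φ : ℝ → ℝ≥0∞) (hφ : Measurable φ)
    (N h : ℝ) (hN : 0 < N) (hh : 0 < h)
    (hNφ : ∫⁻ s, φ s ^ (2 / (2 - a)) = ENNReal.ofReal N) (t : ℝ) :
    ∫⁻ s, ENNReal.ofReal (|t - s| ^ (-a)) * min (φ s) (ENNReal.ofReal h)
      ≤ ENNReal.ofReal ((2 / (1 - a) + 2 ^ (a / 2)) * (N ^ (1 - a) * h ^ (a / (2 - a)))) := by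
  set R := N * h ^ (-(2 / (2 - a))) with hRdef
  have hR : 0 < R := by positivity
  have hm : MeasurableSet {s : ℝ | |t - s| < R} := measurableSet_lt (by fun_prop) (by fun_prop)
  rw [← lintegral_add_compl _ hm]
  have hcompl : {s : ℝ | |t - s| < R}ᶜ = {s : ℝ | R ≤ |t - s|} := by
    ext s; simp
  rw [hcompl]
  have b1 : ∫⁻ s in {s : ℝ | |t - s| < R}, ENNReal.ofReal (|t - s| ^ (-a)) * min (φ s) (ENNReal.ofReal h)
      ≤ ENNReal.ofReal (2 / (1 - a) * (N ^ (1 - a) * h ^ (a / (2 - a)))) := by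
    calc _ ≤ ∫⁻ s in {s : ℝ | |t - s| < R}, ENNReal.ofReal (|t - s| ^ (-a)) * (ENNReal.ofReal h) := by
          gcongr; exact min_le_right _ _
      _ = (∫⁻ s in {s : ℝ | |t - s| < R}, ENNReal.ofReal (|t - s| ^ (-a))) * (ENNReal.ofReal h) := by
          rw [lintegral_mul_const]; fun_prop
      _ ≤ ENNReal.ofReal (2 / (1 - a) * R ^ (1 - a)) * (ENNReal.ofReal h) := by
          gcongr; exact near_int a ha0 ha1 t R hR
      _ = _ := by
          rw [← ENNReal.ofReal_mul (mul_nonneg (div_nonneg (by norm_num) (by linarith)) (by positivity))]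
          congr 1
          rw [hRdef, Real.mul_rpow hN.le (by positivity), ← Real.rpow_mul hh.le]
          have : h ^ (a / (2 - a)) = h ^ (-(2 / (2 - a)) * (1 - a)) * h := by
            nth_rw 3 [← Real.rpow_one h]
            rw [← Real.rpow_add hh]
            congr 1
            have : (2:ℝ) - a ≠ 0 := by linarith
            field_simp; ring
          rw [this]; ring
  have b2 : ∫⁻ s in {s : ℝ | R ≤ |t - s|}, ENNReal.ofReal (|t - s| ^ (-a)) * min (φ s) (ENNReal.ofReal h)
      ≤ ENNReal.ofReal (2 ^ (a / 2) * (N ^ (1 - a) * h ^ (a / (2 - a)))) := by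
    have hc : (2 / a).HolderConjugate (2 / (2 - a)) := by
      have h2 : 0 < 2 - a := by linarith
      rw [Real.holderConjugate_iff]
      constructor
      · rw [lt_div_iff₀ ha0]; linarith
      · field_simp; ring
    calc _ ≤ ∫⁻ s in {s : ℝ | R ≤ |t - s|}, (fun s => ENNReal.ofReal (|t - s| ^ (-a))) s * φ s := by
          gcongr; exact min_le_left _ _
      _ ≤ (∫⁻ s in {s : ℝ | R ≤ |t - s|}, (ENNReal.ofReal (|t - s| ^ (-a))) ^ (2 / a)) ^ (1 / (2 / a))
           * (∫⁻ s in {s : ℝ | R ≤ |t - s|}, φ s ^ (2 / (2 - a))) ^ (1 / (2 / (2 - a))) := by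
          apply ENNReal.lintegral_mul_le_Lp_mul_Lq _ hc
          · fun_prop
          · fun_prop
      _ ≤ (ENNReal.ofReal (2 * R⁻¹)) ^ (1 / (2 / a)) * (ENNReal.ofReal N) ^ (1 / (2 / (2 - a))) := by
          have h2 : 0 < 2 - a := by linarith
          gcongr
          · refine le_trans (le_of_eq ?_) (far_int t R hR)
            congr 1; ext s
            rw [ENNReal.ofReal_rpow_of_nonneg (by positivity) (by positivity), ← Real.rpow_mul (abs_nonneg _)]
            congr 2; field_simp
          · rw [← hNφ]; exact setLIntegral_le_lintegral _ _
      _ = _ := by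
          have h2 : 0 < 2 - a := by linarith
          rw [ENNReal.ofReal_rpow_of_nonneg (by positivity) (by positivity),
            ENNReal.ofReal_rpow_of_nonneg (by positivity) (by positivity),
            ← ENNReal.ofReal_mul (by positivity)]
          congr 1
          rw [hRdef, mul_inv, ← Real.rpow_neg hh.le, Real.mul_rpow (by norm_num) (by positivity),
            Real.mul_rpow (by positivity) (by positivity), ← Real.rpow_mul hh.le, neg_neg]
          have e1 : N ^ (1 - a) = N⁻¹ ^ (1 / (2 / a)) * N ^ (1 / (2 / (2 - a))) := by
            rw [Real.inv_rpow hN.le, ← Real.rpow_neg hN.le, ← Real.rpow_add hN]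
            congr 1; field_simp; ring
          have e2 : 2 / (2 - a) * (1 / (2 / a)) = a / (2 - a) := by field_simp
          rw [e1, e2, one_div_div]; ring
  calc _ ≤ _ := add_le_add b1 b2
    _ = _ := by
      have h1 : 0 < 1 - a := by linarith
      rw [← ENNReal.ofReal_add (by positivity) (by positivity)]
      congr 1; ring

/-- Hardy-Littlewood-Sobolev, diagonal case in dimension one. -/
lemma hls (a : ℝ) (ha0 : 0 < a) (ha1 : a < 1) (φ : ℝ → ℝ≥0∞) (hφ : Measurable φ)
    (hfin : ∀ t, φ t ≠ ⊤) :
    ∫⁻ t, ∫⁻ s, ENNReal.ofReal (|t - s| ^ (-a)) * (φ t * φ s)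
      ≤ ENNReal.ofReal (2 * (2 / (1 - a) + 2 ^ (a / 2))) * (∫⁻ s, φ s ^ (2 / (2 - a))) ^ (2 - a) := by
  have h1 : 0 < 1 - a := by linarith
  have h2 : 0 < 2 - a := by linarith
  by_cases hNt : ∫⁻ s, φ s ^ (2 / (2 - a)) = ⊤
  · rw [hNt, ENNReal.top_rpow_of_pos h2, ENNReal.mul_top]
    · exact le_top
    · simp only [ne_eq, ENNReal.ofReal_eq_zero, not_le]; positivity
  by_cases hN0 : ∫⁻ s, φ s ^ (2 / (2 - a)) = 0
  · rw [lintegral_eq_zero_iff (by fun_prop)] at hN0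
    have : φ =ᵐ[volume] 0 := by
      filter_upwards [hN0] with s hs
      have := (ENNReal.rpow_eq_zero_iff_of_pos (by positivity)).1 hs
      exact this
    have : ∫⁻ t, ∫⁻ s, ENNReal.ofReal (|t - s| ^ (-a)) * (φ t * φ s) = 0 := by
      rw [lintegral_eq_zero_iff (by fun_prop)]
      filter_upwards [this] with t ht
      simp [ht]
    rw [this]; exact zero_le
  set N := (∫⁻ s, φ s ^ (2 / (2 - a))).toReal with hNdef
  have hNe : ∫⁻ s, φ s ^ (2 / (2 - a)) = ENNReal.ofReal N := (ENNReal.ofReal_toReal hNt).symm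
  have hN : 0 < N := ENNReal.toReal_pos hN0 hNt
  set C := (2 / (1 - a) + 2 ^ (a / 2) : ℝ) with hC
  have hCpos : 0 < C := by positivity
  have step : ∀ t, ∫⁻ s, ENNReal.ofReal (|t - s| ^ (-a)) * (φ t * min (φ s) (φ t))
      ≤ ENNReal.ofReal (C * N ^ (1 - a)) * φ t ^ (2 / (2 - a)) := by
    intro t
    by_cases h0 : φ t = 0
    · simp [h0]
    set h := (φ t).toReal with hhdef
    have hh : 0 < h := ENNReal.toReal_pos h0 (hfin t)
    have hhe : φ t = ENNReal.ofReal h := (ENNReal.ofReal_toReal (hfin t)).symm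
    have := hedberg a ha0 ha1 φ hφ N h hN hh hNe t
    calc _ = φ t * ∫⁻ s, ENNReal.ofReal (|t - s| ^ (-a)) * min (φ s) (φ t) := by
          rw [← lintegral_const_mul _ (by fun_prop)]
          congr 1; ext s; ring
      _ ≤ ENNReal.ofReal h * ENNReal.ofReal (C * (N ^ (1 - a) * h ^ (a / (2 - a)))) := by
          rw [hhe]; gcongr
      _ = _ := by
          rw [hhe, ENNReal.ofReal_rpow_of_pos hh, ← ENNReal.ofReal_mul hh.le, ← ENNReal.ofReal_mul (by positivity)]
          congr 1
          have : h ^ (2 / (2 - a)) = h * h ^ (a / (2 - a)) := by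
            nth_rw 2 [← Real.rpow_one h]
            rw [← Real.rpow_add hh]
            congr 1; field_simp; ring
          rw [this]; ring
  have half : ∫⁻ t, ∫⁻ s, ENNReal.ofReal (|t - s| ^ (-a)) * (φ t * min (φ s) (φ t))
      ≤ ENNReal.ofReal (C * N ^ (1 - a)) * ENNReal.ofReal N := by
    rw [← hNe, ← lintegral_const_mul _ (by fun_prop)]
    exact lintegral_mono step
  have half2 : ∫⁻ t, ∫⁻ s, ENNReal.ofReal (|t - s| ^ (-a)) * (φ s * min (φ s) (φ t))
      = ∫⁻ t, ∫⁻ s, ENNReal.ofReal (|t - s| ^ (-a)) * (φ t * min (φ s) (φ t)) := by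
    rw [lintegral_lintegral_swap (by fun_prop)]
    congr 1; ext t; congr 1; ext s
    rw [abs_sub_comm, min_comm]
  calc _ ≤ ∫⁻ t, ∫⁻ s, (ENNReal.ofReal (|t - s| ^ (-a)) * (φ t * min (φ s) (φ t)) +
        ENNReal.ofReal (|t - s| ^ (-a)) * (φ s * min (φ s) (φ t))) := by
        gcongr with t s
        rw [← mul_add, ← add_mul]
        refine mul_le_mul_right ?_ _
        rcases le_total (φ s) (φ t) with h | h
        · rw [min_eq_left h]; gcongr; exact le_self_add
        · rw [min_eq_right h, mul_comm]; gcongr; exact le_add_self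
    _ = (∫⁻ t, ∫⁻ s, ENNReal.ofReal (|t - s| ^ (-a)) * (φ t * min (φ s) (φ t))) +
       ∫⁻ t, ∫⁻ s, ENNReal.ofReal (|t - s| ^ (-a)) * (φ s * min (φ s) (φ t)) := by
        rw [← lintegral_add_left (by fun_prop)]
        congr 1; ext t
        rw [← lintegral_add_left (by fun_prop)]
    _ ≤ ENNReal.ofReal (C * N ^ (1 - a)) * ENNReal.ofReal N + ENNReal.ofReal (C * N ^ (1 - a)) * ENNReal.ofReal N := by
        rw [half2]; exact add_le_add half half
    _ = _ := by
        rw [hNe, ENNReal.ofReal_rpow_of_pos hN, ← ENNReal.ofReal_mul (by positivity), ← ENNReal.ofReal_mul (by positivity), ← ENNReal.ofReal_add (by positivity) (by positivity)]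
        congr 1
        have : N ^ (2 - a) = N ^ (1 - a) * N := by
          nth_rw 3 [← Real.rpow_one N]
          rw [← Real.rpow_add hN]
          congr 1; ring
        rw [this]; ring

lemma exp_int {Y : Type*} [MeasurableSpace Y] (ρ : Measure Y) [IsFiniteMeasure ρ]
    (c : Y → ℂ) (hc : Measurable c) (Mc : ℝ) (hMc : ∀ y, ‖c y‖ ≤ Mc)
    (L : Y → ℝ) (hL : Measurable L) (ML : ℝ) (hML : ∀ y, |L y| ≤ ML) :
    Differentiable ℂ (fun z : ℂ => ∫ y, c y * Complex.exp (z * (L y : ℂ)) ∂ρ) := by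
  intro z₀
  have hMc0 : ∀ y, 0 ≤ Mc := fun y => (norm_nonneg _).trans (hMc y)
  have bd : ∀ z : ℂ, ∀ y, ‖Complex.exp (z * (L y : ℂ))‖ ≤ Real.exp (‖z‖ * ML) := by
    intro z y
    rw [Complex.norm_exp]
    apply Real.exp_le_exp.2
    rw [Complex.re_mul_ofReal]
    calc z.re * L y ≤ |z.re * L y| := le_abs_self _
      _ = |z.re| * |L y| := abs_mul _ _
      _ ≤ ‖z‖ * ML := by
        gcongr
        · exact Complex.abs_re_le_norm z
        · exact hML y
  have := hasDerivAt_integral_of_dominated_loc_of_deriv_le (𝕜 := ℂ) (μ := ρ)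
    (F := fun z y => c y * Complex.exp (z * (L y : ℂ)))
    (F' := fun z y => c y * (Complex.exp (z * (L y : ℂ)) * (L y : ℂ))) (x₀ := z₀)
    (s := Metric.ball z₀ 1)
    (bound := fun y => Mc * (Real.exp ((‖z₀‖ + 1) * ML) * ML)) (Metric.ball_mem_nhds _ one_pos)
    ?_ ?_ ?_ ?_ ?_ ?_
  · exact this.2.differentiableAt
  · exact Filter.Eventually.of_forall fun z => (by fun_prop : Measurable _).aestronglyMeasurable
  · refine Integrable.of_bound (C := Mc * Real.exp (‖z₀‖ * ML)) (by fun_prop : Measurable _).aestronglyMeasurable ?_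
    refine Filter.Eventually.of_forall fun y => ?_
    rw [norm_mul]
    gcongr
    · exact hMc0 y
    · exact hMc y
    · exact bd z₀ y
  · exact (by fun_prop : Measurable _).aestronglyMeasurable
  · refine Filter.Eventually.of_forall fun y z hz => ?_
    have hz' : ‖z‖ ≤ ‖z₀‖ + 1 := by
      have : ‖z - z₀‖ < 1 := by simpa [dist_eq_norm] using hz
      have := norm_le_norm_add_norm_sub' z z₀
      linarith
    have hML0 : 0 ≤ ML := (abs_nonneg _).trans (hML y)
    rw [norm_mul, norm_mul]
    gcongr
    · exact hMc0 y
    · exact hMc y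
    · refine (bd z y).trans ?_
      gcongr
    · rw [Complex.norm_real]; exact hML y
  · exact integrable_const _
  · refine Filter.Eventually.of_forall fun y z hz => ?_
    apply HasDerivAt.const_mul
    have := ((hasDerivAt_id z).mul_const (L y : ℂ)).cexp
    simpa using this

/-- bounded measurable functions vanishing off `S`. -/
def NiceOn {X : Type*} [MeasurableSpace X] (S : Set X) (F : X → ℂ) : Prop :=
  Measurable F ∧ (∃ M : ℝ, ∀ x, ‖F x‖ ≤ M) ∧ ∀ x, x ∉ S → F x = 0

def Fpow (p : ℝ) {X : Type*} (F : X → ℂ) (z : ℂ) (x : X) : ℂ :=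
  (F x / (‖F x‖ : ℂ)) * Complex.exp ((p * (1 - z / 2)) * (Real.log ‖F x‖ : ℂ))

lemma Fpow_norm (p : ℝ) {X : Type*} (F : X → ℂ) (z : ℂ) (x : X) (h : p * (1 - z.re / 2) ≠ 0) :
    ‖Fpow p F z x‖ = ‖F x‖ ^ (p * (1 - z.re / 2)) := by
  unfold Fpow
  by_cases h0 : F x = 0
  · simp [h0, Real.zero_rpow h]
  · have hn : ‖F x‖ ≠ 0 := norm_ne_zero_iff.2 h0
    rw [norm_mul, norm_div, Complex.norm_real, norm_norm, div_self hn, one_mul, Complex.norm_exp,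
      Complex.re_mul_ofReal, Real.rpow_def_of_pos (norm_pos_iff.2 h0), mul_comm (Real.log _)]
    congr 1
    simp

lemma Fpow_theta (p : ℝ) {X : Type*} (F : X → ℂ) (z : ℂ) (x : X) (h : (p * (1 - z / 2) : ℂ) = 1) :
    Fpow p F z x = F x := by
  unfold Fpow
  by_cases h0 : F x = 0
  · simp [h0]
  · have hn : ‖F x‖ ≠ 0 := norm_ne_zero_iff.2 h0
    rw [h, one_mul, ← Complex.ofReal_exp, Real.exp_log (norm_pos_iff.2 h0)]
    have : (‖F x‖ : ℂ) ≠ 0 := by exact_mod_cast hn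
    field_simp

lemma riesz_thorin {X : Type*} [MeasurableSpace X] (ν : Measure X) [SigmaFinite ν]
    (S : Set X) (hS : MeasurableSet S) (hSf : ν S < ⊤)
    (k : X × X → ℂ) (hk : Measurable k) (A B : ℝ) (hA : 0 ≤ A) (hB : 0 ≤ B)
    (hkA : ∀ z, ‖k z‖ ≤ A)
    (h2 : ∀ F G : X → ℂ, NiceOn S F → NiceOn S G →
      ‖∫ z, k z * (F z.1 * G z.2) ∂(ν.prod ν)‖ ≤
        B * ((∫ x, ‖F x‖ ^ (2:ℝ) ∂ν) ^ (1/2:ℝ) * (∫ x, ‖G x‖ ^ (2:ℝ) ∂ν) ^ (1/2:ℝ)))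
    (r : ℝ) (hr : 2 < r) (F G : X → ℂ) (hF : NiceOn S F) (hG : NiceOn S G)
    (ε : ℝ) (hε : 0 < ε) (hFε : ∀ x, F x = 0 ∨ ε ≤ ‖F x‖) (hGε : ∀ x, G x = 0 ∨ ε ≤ ‖G x‖) :
    ‖∫ z, k z * (F z.1 * G z.2) ∂(ν.prod ν)‖ ≤
      A ^ (1 - 2 / r) * B ^ (2 / r) *
        ((∫ x, ‖F x‖ ^ (r / (r - 1)) ∂ν) ^ (1 - 1 / r) * (∫ x, ‖G x‖ ^ (r / (r - 1)) ∂ν) ^ (1 - 1 / r)) := by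
  set p := r / (r - 1) with hp
  have hr1 : 0 < r - 1 := by linarith
  have hr0 : 0 < r := by linarith
  have hp0 : 0 < p := by positivity
  -- log bounds
  have logbd : ∀ F : X → ℂ, NiceOn S F → (∀ x, F x = 0 ∨ ε ≤ ‖F x‖) →
      ∃ M, 0 ≤ M ∧ ∀ x, |Real.log ‖F x‖| ≤ M := by
    rintro F ⟨-, ⟨M, hM⟩, -⟩ hFε
    refine ⟨|Real.log ε| + |Real.log M|, by positivity, fun x => ?_⟩
    rcases hFε x with h | h
    · rw [h]; simp; positivity
    · have h1 : Real.log ε ≤ Real.log ‖F x‖ := Real.log_le_log hε h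
      have h2 : Real.log ‖F x‖ ≤ Real.log M := Real.log_le_log (hε.trans_le h) (hM x)
      rw [abs_le]
      constructor
      · have := neg_abs_le (Real.log ε); have := abs_nonneg (Real.log M); linarith
      · have := le_abs_self (Real.log M); have := abs_nonneg (Real.log ε); linarith
  obtain ⟨MF, hMF0, hMF⟩ := logbd F hF hFε
  obtain ⟨MG, hMG0, hMG⟩ := logbd G hG hGε
  have hFm := hF.1
  have hGm := hG.1
  -- niceness of the powers
  have nice : ∀ F : X → ℂ, NiceOn S F → ∀ M, 0 ≤ M → (∀ x, |Real.log ‖F x‖| ≤ M) → ∀ z : ℂ,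
      NiceOn S (Fpow p F z) := by
    rintro F ⟨hm, -, hs⟩ M hM0 hM z
    refine ⟨?_, ⟨Real.exp (‖(p * (1 - z / 2) : ℂ)‖ * M), fun x => ?_⟩, fun x hx => ?_⟩
    · unfold Fpow; fun_prop
    · unfold Fpow
      rw [norm_mul]
      have e1 : ‖F x / (‖F x‖ : ℂ)‖ ≤ 1 := by
        rw [norm_div, Complex.norm_real, norm_norm]; exact div_self_le_one _
      have e2 : ‖Complex.exp ((p * (1 - z / 2)) * (Real.log ‖F x‖ : ℂ))‖ ≤ Real.exp (‖(p * (1 - z / 2) : ℂ)‖ * M) := by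
        refine (Complex.norm_exp_le_exp_norm _).trans ?_
        apply Real.exp_le_exp.2
        rw [norm_mul, Complex.norm_real]
        gcongr
        exact hM x
      calc _ ≤ 1 * Real.exp (‖(p * (1 - z / 2) : ℂ)‖ * M) := by gcongr
        _ = _ := one_mul _
    · unfold Fpow; simp [hs x hx]
  set Φ : ℂ → ℂ := fun z => ∫ w, k w * (Fpow p F z w.1 * Fpow p G z w.2) ∂(ν.prod ν) with hΦ
  set ρ := (ν.prod ν).restrict (S ×ˢ S) with hρ
  have : IsFiniteMeasure ρ := by
    refine ⟨?_⟩
    rw [hρ, Measure.restrict_apply_univ, Measure.prod_prod]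
    exact ENNReal.mul_lt_top hSf hSf
  have hΦ2 : ∀ z, Φ z = ∫ w, (k w * ((F w.1 / (‖F w.1‖ : ℂ)) * (G w.2 / (‖G w.2‖ : ℂ))) *
      Complex.exp ((p * (Real.log ‖F w.1‖ + Real.log ‖G w.2‖) : ℝ) : ℂ)) *
        Complex.exp (z * ((-(p / 2) * (Real.log ‖F w.1‖ + Real.log ‖G w.2‖) : ℝ) : ℂ)) ∂ρ := by
    intro z
    rw [hρ, hΦ]
    simp only
    rw [← integral_indicator (hS.prod hS)]
    congr 1
    ext w
    by_cases hw : w ∈ S ×ˢ S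
    · rw [Set.indicator_of_mem hw]
      unfold Fpow
      rw [mul_assoc (k w * _), ← Complex.exp_add, mul_mul_mul_comm, ← Complex.exp_add, mul_assoc (k w)]
      have : ∀ u v w' : ℂ, v = w' → k w * (u * Complex.exp v) = k w * (u * Complex.exp w') := by
        intro u v w' h; rw [h]
      apply this
      push_cast; ring
    · rw [Set.indicator_of_notMem hw]
      have : w.1 ∉ S ∨ w.2 ∉ S := by
        by_contra! h; exact hw ⟨h.1, h.2⟩
      rcases this with h | h
      · simp [Fpow, hF.2.2 _ h]
      · simp [Fpow, hG.2.2 _ h]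
  have hlogL : ∀ w : X × X, |Real.log ‖F w.1‖ + Real.log ‖G w.2‖| ≤ MF + MG := fun w =>
    (abs_add_le _ _).trans (add_le_add (hMF _) (hMG _))
  set c : X × X → ℂ := fun w => (k w * ((F w.1 / (‖F w.1‖ : ℂ)) * (G w.2 / (‖G w.2‖ : ℂ))) *
      Complex.exp ((p * (Real.log ‖F w.1‖ + Real.log ‖G w.2‖) : ℝ) : ℂ)) with hc
  have hcm : Measurable c := by rw [hc]; fun_prop
  have hcb : ∀ w, ‖c w‖ ≤ A * Real.exp (p * (MF + MG)) := by
    intro w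
    rw [hc]; simp only
    rw [norm_mul, norm_mul, norm_mul]
    have e1 : ‖F w.1 / (‖F w.1‖ : ℂ)‖ ≤ 1 := by
      rw [norm_div, Complex.norm_real, norm_norm]; exact div_self_le_one _
    have e2 : ‖G w.2 / (‖G w.2‖ : ℂ)‖ ≤ 1 := by
      rw [norm_div, Complex.norm_real, norm_norm]; exact div_self_le_one _
    have e3 : ‖Complex.exp ((p * (Real.log ‖F w.1‖ + Real.log ‖G w.2‖) : ℝ) : ℂ)‖ ≤ Real.exp (p * (MF + MG)) := by
      rw [← Complex.ofReal_exp, Complex.norm_real, Real.norm_eq_abs, abs_of_pos (Real.exp_pos _)]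
      apply Real.exp_le_exp.2
      exact mul_le_mul_of_nonneg_left ((le_abs_self _).trans (hlogL w)) hp0.le
    calc _ ≤ A * (1 * 1) * Real.exp (p * (MF + MG)) := by
          gcongr
          exact hkA w
      _ = _ := by ring
  have hdiff : Differentiable ℂ Φ := by
    have := exp_int ρ c hcm _ hcb (fun w => (-(p / 2) * (Real.log ‖F w.1‖ + Real.log ‖G w.2‖)))
      (by fun_prop) ((p / 2) * (MF + MG)) (fun w => by
        rw [abs_mul, abs_neg, abs_of_pos (by positivity : 0 < p / 2)]
        gcongr; exact hlogL w)
    have e : Φ = _ := funext hΦ2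
    rw [e]; exact this
  have hbdd : BddAbove ((norm ∘ Φ) '' Complex.HadamardThreeLines.verticalClosedStrip 0 1) := by
    refine ⟨A * Real.exp (p * (MF + MG)) * Real.exp ((p / 2) * (MF + MG)) * ρ.real Set.univ, ?_⟩
    rintro _ ⟨z, hz, rfl⟩
    simp only [Function.comp]
    rw [hΦ2]
    apply norm_integral_le_of_norm_le_const
    refine Filter.Eventually.of_forall fun w => ?_
    rw [norm_mul]
    refine mul_le_mul (hcb w) ?_ (norm_nonneg _) (by positivity)
    rw [Complex.norm_exp]
    apply Real.exp_le_exp.2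
    rw [Complex.re_mul_ofReal]
    have hz0 : 0 ≤ z.re := hz.1
    have hz1 : z.re ≤ 1 := hz.2
    refine (le_abs_self _).trans ?_
    rw [abs_mul, abs_mul, abs_neg, abs_of_pos (by positivity : 0 < p / 2), abs_of_nonneg hz0]
    calc _ ≤ 1 * (p / 2 * (MF + MG)) := by
          gcongr; exact hlogL w
      _ = _ := one_mul _
  set a := ∫ x, ‖F x‖ ^ p ∂ν with ha
  set b := ∫ x, ‖G x‖ ^ p ∂ν with hb
  have ha0 : 0 ≤ a := integral_nonneg fun x => by positivity
  have hb0 : 0 ≤ b := integral_nonneg fun x => by positivity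
  have hlt : ∀ z ∈ Complex.re ⁻¹' {(0:ℝ)}, ‖Φ z‖ ≤ A * (a * b) := by
    intro z hz
    have hz : z.re = 0 := hz
    have nF : ∀ x, ‖Fpow p F z x‖ = ‖F x‖ ^ p := fun x => by
      rw [Fpow_norm p F z x (by rw [hz]; simp; exact hp0.ne'), hz]; simp
    have nG : ∀ x, ‖Fpow p G z x‖ = ‖G x‖ ^ p := fun x => by
      rw [Fpow_norm p G z x (by rw [hz]; simp; exact hp0.ne'), hz]; simp
    rw [hΦ]; simp only
    refine (norm_integral_le_integral_norm _).trans ?_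
    have int1 : ∀ F : X → ℂ, NiceOn S F → Integrable F ν := by
      rintro F ⟨hm, ⟨M, hM⟩, hs⟩
      have : IntegrableOn F S ν := by
        have : IsFiniteMeasure (ν.restrict S) := ⟨by simpa using hSf⟩
        exact Integrable.of_bound hm.aestronglyMeasurable M (Filter.Eventually.of_forall hM)
      exact this.integrable_of_forall_notMem_eq_zero hs
    have hi := ((int1 _ (nice F hF MF hMF0 hMF z)).norm.mul_prod (int1 _ (nice G hG MG hMG0 hMG z)).norm).const_mul A
    refine (integral_mono_of_nonneg (Filter.Eventually.of_forall fun w => norm_nonneg _) hi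
      (Filter.Eventually.of_forall fun w => ?_)).trans ?_
    · simp only [norm_mul]
      gcongr
      exact hkA w
    · rw [integral_const_mul, integral_prod_mul (fun x => ‖Fpow p F z x‖) (fun x => ‖Fpow p G z x‖)]
      simp only [nF, nG]; exact le_rfl
  have hrt : ∀ z ∈ Complex.re ⁻¹' {(1:ℝ)}, ‖Φ z‖ ≤ B * (a ^ (1/2:ℝ) * b ^ (1/2:ℝ)) := by
    intro z hz
    have hz : z.re = 1 := hz
    have hne : p * (1 - z.re / 2) ≠ 0 := by rw [hz]; norm_num; exact hp0.ne'
    have nF : ∀ x, ‖Fpow p F z x‖ ^ (2:ℝ) = ‖F x‖ ^ p := fun x => by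
      rw [Fpow_norm p F z x hne, ← Real.rpow_mul (norm_nonneg _), hz]; congr 1; ring
    have nG : ∀ x, ‖Fpow p G z x‖ ^ (2:ℝ) = ‖G x‖ ^ p := fun x => by
      rw [Fpow_norm p G z x hne, ← Real.rpow_mul (norm_nonneg _), hz]; congr 1; ring
    have := h2 _ _ (nice F hF MF hMF0 hMF z) (nice G hG MG hMG0 hMG z)
    simp only [nF, nG] at this
    exact this
  have hθ0 : 0 < 2 / r := by positivity
  have hθ1 : 2 / r < 1 := by rw [div_lt_one hr0]; exact hr
  have main := Complex.HadamardThreeLines.norm_le_interp_of_mem_verticalClosedStrip₀₁' Φ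
    (z := ((2 / r : ℝ) : ℂ)) (a := A * (a * b)) (b := B * (a ^ (1/2:ℝ) * b ^ (1/2:ℝ)))
    (by simp only [Complex.HadamardThreeLines.verticalClosedStrip, Set.mem_preimage, Complex.ofReal_re]; exact ⟨hθ0.le, hθ1.le⟩)
    hdiff.diffContOnCl hbdd hlt hrt
  rw [Complex.ofReal_re] at main
  have hone : ((p : ℂ) * (1 - ((2 / r : ℝ) : ℂ) / 2)) = 1 := by
    have : p * (1 - (2 / r) / 2) = 1 := by rw [hp]; field_simp
    exact_mod_cast this
  have hΦθ : Φ ((2 / r : ℝ) : ℂ) = ∫ z, k z * (F z.1 * G z.2) ∂(ν.prod ν) := by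
    rw [hΦ]; simp only
    congr 1; ext w
    rw [Fpow_theta p F _ _ hone, Fpow_theta p G _ _ hone]
  rw [hΦθ] at main
  refine main.trans (le_of_eq ?_)
  have e : ∀ a : ℝ, 0 ≤ a → a ^ (1 - 1 / r) = a ^ (1 - 2 / r) * (a ^ (1/2:ℝ)) ^ (2 / r) := by
    intro a ha
    rw [← Real.rpow_mul ha, ← Real.rpow_add_of_nonneg ha (by linarith) (by positivity)]
    congr 1; field_simp; ring
  rw [e a ha0, e b hb0, Real.mul_rpow hA (by positivity), Real.mul_rpow hB (by positivity),
    Real.mul_rpow ha0 hb0, Real.mul_rpow (by positivity) (by positivity)]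
  ring

/-- derivative in the second variable -/
def Dsnd {P E G : Type*} [NormedAddCommGroup P] [NormedSpace ℝ P] [NormedAddCommGroup E] [NormedSpace ℝ E]
    [NormedAddCommGroup G] [NormedSpace ℝ G] (F : P × E → G) (v : E) (w : P × E) : G :=
  fderiv ℝ F w (0, v)

section nsp
variable {P E G : Type*} [NormedAddCommGroup P] [NormedSpace ℝ P] [NormedAddCommGroup E] [NormedSpace ℝ E]
    [NormedAddCommGroup G] [NormedSpace ℝ G]

lemma Dsnd_contDiff {F : P × E → G} (hF : ContDiff ℝ ∞ F) (v : E) : ContDiff ℝ ∞ (Dsnd F v) := by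
  unfold Dsnd
  exact (hF.fderiv_right (m := ∞) (by simp)).clm_apply contDiff_const

lemma sec_hasFDerivAt {F : P × E → G} (hF : ContDiff ℝ ∞ F) (p : P) (ξ : E) :
    HasFDerivAt (fun ξ => F (p, ξ)) ((fderiv ℝ F (p, ξ)).comp (ContinuousLinearMap.inr ℝ P E)) ξ := by
  have h1 : HasFDerivAt F (fderiv ℝ F (p, ξ)) (p, ξ) :=
    (hF.differentiable (by simp) _).hasFDerivAt
  exact h1.comp ξ (hasFDerivAt_prodMk_right p ξ)

lemma sec_fderiv {F : P × E → G} (hF : ContDiff ℝ ∞ F) (p : P) (ξ v : E) :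
    fderiv ℝ (fun ξ => F (p, ξ)) ξ v = Dsnd F v (p, ξ) := by
  rw [(sec_hasFDerivAt hF p ξ).fderiv]; simp [Dsnd]

variable [FiniteDimensional ℝ E] [MeasurableSpace E] [BorelSpace E] (μE : Measure E) [μE.IsAddHaarMeasure]

lemma nsp {ι : Type*} [Fintype ι] (e : ι → E) (Φ ζ : P × E → ℝ) (hΦ : ContDiff ℝ ∞ Φ)
    (hζ : ContDiff ℝ ∞ ζ) (Pc : Set P) (hPc : IsCompact Pc) (K : Set E) (hK : IsCompact K) (N : ℕ) :
    ∀ a : P × E → ℂ, ContDiff ℝ ∞ a →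
      (∀ p ∈ Pc, ∀ ξ, a (p, ξ) ≠ 0 → ξ ∈ K ∧ ζ (p, ξ) * ∑ i, (Dsnd Φ (e i) (p, ξ)) ^ 2 = 1) →
      ∃ C : ℝ, 0 ≤ C ∧ ∀ p ∈ Pc, ∀ l : ℝ, 0 < l →
        ‖∫ ξ, Complex.exp (Complex.I * ((l * Φ (p, ξ) : ℝ) : ℂ)) * a (p, ξ) ∂μE‖ ≤ C / l ^ N := by
  induction N with
  | zero =>
    intro a ha hsupp
    obtain ⟨C, hC⟩ := (hPc.prod hK).exists_bound_of_continuousOn ha.continuous.continuousOn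
    refine ⟨|C| * μE.real K, by positivity, fun p hp l hl => ?_⟩
    rw [pow_zero, div_one]
    rw [← setIntegral_eq_integral_of_forall_compl_eq_zero (s := K)]
    · apply norm_setIntegral_le_of_norm_le_const (hK.measure_lt_top)
      intro ξ hξ
      rw [norm_mul, mul_comm Complex.I, Complex.norm_exp_ofReal_mul_I, one_mul]
      exact (hC (p, ξ) ⟨hp, hξ⟩).trans (le_abs_self _)
    · intro ξ hξ
      have : a (p, ξ) = 0 := by
        by_contra h
        exact hξ (hsupp p hp ξ h).1
      rw [this, mul_zero]
  | succ N ih =>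
    intro a ha hsupp
    set f : ι → P × E → ℂ := fun i w => a w * ((ζ w * Dsnd Φ (e i) w : ℝ) : ℂ) with hf
    have hfs : ∀ i, ContDiff ℝ ∞ (f i) := fun i => by
      apply ha.mul
      exact Complex.ofRealCLM.contDiff.comp (hζ.mul (Dsnd_contDiff hΦ _))
    set a' : P × E → ℂ := fun w => ∑ i, Dsnd (f i) (e i) w with ha'
    have ha's : ContDiff ℝ ∞ a' := ContDiff.sum fun i _ => Dsnd_contDiff (hfs i) _
    have hfK : ∀ p ∈ Pc, ∀ i ξ, f i (p, ξ) ≠ 0 → ξ ∈ K := by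
      intro p hp i ξ h
      apply (hsupp p hp ξ _).1
      intro h0; apply h; simp [hf, h0]
    -- support of a'
    have hsupp' : ∀ p ∈ Pc, ∀ ξ, a' (p, ξ) ≠ 0 → ξ ∈ K ∧ ζ (p, ξ) * ∑ i, (Dsnd Φ (e i) (p, ξ)) ^ 2 = 1 := by
      intro p hp ξ h
      set T : Set E := {ξ | ξ ∈ K ∧ ζ (p, ξ) * ∑ i, (Dsnd Φ (e i) (p, ξ)) ^ 2 = 1} with hT
      have hTc : IsClosed T := by
        apply hK.isClosed.inter
        apply isClosed_eq _ continuous_const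
        have h1 : Continuous fun ξ : E => ζ (p, ξ) := hζ.continuous.comp (by fun_prop)
        have h2 : ∀ i, Continuous fun ξ : E => Dsnd Φ (e i) (p, ξ) := fun i =>
          (Dsnd_contDiff hΦ _).continuous.comp (by fun_prop)
        fun_prop
      by_contra hξ
      apply h
      have hev : ∀ᶠ ξ' in nhds ξ, ξ' ∉ T := hTc.isOpen_compl.mem_nhds hξ
      rw [ha']
      apply Finset.sum_eq_zero
      intro i _
      rw [← sec_fderiv (hfs i)]
      have : (fun ξ => f i (p, ξ)) =ᶠ[nhds ξ] fun _ => 0 := by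
        filter_upwards [hev] with ξ' hξ'
        by_contra hne
        apply hξ'
        apply hsupp p hp ξ'
        intro h0; apply hne; simp [hf, h0]
      rw [this.fderiv_eq]; simp
    obtain ⟨C, hC0, hC⟩ := ih a' ha's hsupp'
    refine ⟨C, hC0, fun p hp l hl => ?_⟩
    set g : E → ℂ := fun ξ => Complex.exp (Complex.I * ((l * Φ (p, ξ) : ℝ) : ℂ)) with hg
    have hgs : ContDiff ℝ ∞ g := by
      apply Complex.contDiff_exp.comp
      apply contDiff_const.mul
      apply Complex.ofRealCLM.contDiff.comp
      apply contDiff_const.mul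
      exact hΦ.comp (contDiff_const.prodMk contDiff_id)
    have hgd : ∀ ξ v, fderiv ℝ g ξ v = g ξ * (Complex.I * ((l * Dsnd Φ v (p, ξ) : ℝ) : ℂ)) := by
      intro ξ v
      have h1 := ((sec_hasFDerivAt hΦ p ξ).const_mul l)
      have h2 := (Complex.ofRealCLM.hasFDerivAt.comp ξ h1)
      have h3 := (h2.const_mul Complex.I).cexp
      have h4 : HasFDerivAt g _ ξ := h3
      rw [h4.fderiv]
      simp [Dsnd, hg]
    have secs : ∀ i, ContDiff ℝ ∞ (fun ξ => f i (p, ξ)) := fun i =>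
      (hfs i).comp (contDiff_const.prodMk contDiff_id)
    have hcs : ∀ i, HasCompactSupport (fun ξ => f i (p, ξ)) := fun i =>
      HasCompactSupport.intro hK fun ξ hξ => by
        by_contra h; exact hξ (hfK p hp i ξ h)
    have ibp : ∀ i, ∫ ξ, f i (p, ξ) * fderiv ℝ g ξ (e i) ∂μE
        = - ∫ ξ, fderiv ℝ (fun ξ => f i (p, ξ)) ξ (e i) * g ξ ∂μE := by
      intro i
      apply integral_mul_fderiv_eq_neg_fderiv_mul_of_integrable
      · apply Continuous.integrable_of_hasCompactSupport
        · exact (((secs i).continuous_fderiv (by simp)).clm_apply continuous_const).mul hgs.continuous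
        · exact ((hcs i).fderiv_apply ℝ (e i)).mul_right
      · apply Continuous.integrable_of_hasCompactSupport
        · exact (secs i).continuous.mul ((hgs.continuous_fderiv (by simp)).clm_apply continuous_const)
        · exact (hcs i).mul_right
      · apply Continuous.integrable_of_hasCompactSupport
        · exact (secs i).continuous.mul hgs.continuous
        · exact (hcs i).mul_right
      · exact fun ξ _ => (secs i).differentiable (by simp) ξ
      · exact fun ξ _ => hgs.differentiable (by simp) ξ
    have int1 : ∀ i, Integrable (fun ξ => f i (p, ξ) * fderiv ℝ g ξ (e i)) μE := by
      intro i
      apply Continuous.integrable_of_hasCompactSupport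
      · exact (secs i).continuous.mul ((hgs.continuous_fderiv (by simp)).clm_apply continuous_const)
      · exact (hcs i).mul_right
    have int2 : ∀ i, Integrable (fun ξ => fderiv ℝ (fun ξ => f i (p, ξ)) ξ (e i) * g ξ) μE := by
      intro i
      apply Continuous.integrable_of_hasCompactSupport
      · exact (((secs i).continuous_fderiv (by simp)).clm_apply continuous_const).mul hgs.continuous
      · exact ((hcs i).fderiv_apply ℝ (e i)).mul_right
    have key : (Complex.I * (l : ℂ)) * ∫ ξ, g ξ * a (p, ξ) ∂μE = - ∫ ξ, g ξ * a' (p, ξ) ∂μE := by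
      calc _ = ∫ ξ, ∑ i, f i (p, ξ) * fderiv ℝ g ξ (e i) ∂μE := by
            rw [← integral_const_mul]
            congr 1; ext ξ
            simp only [hgd]
            by_cases h0 : a (p, ξ) = 0
            · simp [hf, h0]
            · have h1 := (hsupp p hp ξ h0).2
              have h1' : (ζ (p, ξ) : ℂ) * ∑ i, ((Dsnd Φ (e i) (p, ξ) : ℝ) : ℂ) ^ 2 = 1 := by
                exact_mod_cast h1
              calc _ = (Complex.I * (l : ℂ)) * (g ξ * a (p, ξ)) * ((ζ (p, ξ) : ℂ) * ∑ i, ((Dsnd Φ (e i) (p, ξ) : ℝ) : ℂ) ^ 2) := by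
                    rw [h1', mul_one]
                _ = _ := by
                    rw [Finset.mul_sum, Finset.mul_sum]
                    apply Finset.sum_congr rfl
                    intro i _
                    simp only [hf]; push_cast; ring
        _ = ∑ i, ∫ ξ, f i (p, ξ) * fderiv ℝ g ξ (e i) ∂μE := integral_finsetSum _ fun i _ => int1 i
        _ = - ∑ i, ∫ ξ, fderiv ℝ (fun ξ => f i (p, ξ)) ξ (e i) * g ξ ∂μE := by
            rw [← Finset.sum_neg_distrib]
            exact Finset.sum_congr rfl fun i _ => ibp i
        _ = _ := by
            rw [← integral_finsetSum _ fun i _ => int2 i]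
            congr 2; ext ξ
            simp only [ha', Finset.mul_sum]
            apply Finset.sum_congr rfl
            intro i _
            rw [sec_fderiv (hfs i), mul_comm]
    have hn := congrArg norm key
    rw [norm_mul, norm_neg, norm_mul, Complex.norm_I, one_mul, Complex.norm_real, Real.norm_eq_abs, abs_of_pos hl] at hn
    have := hC p hp l hl
    change ‖∫ ξ, g ξ * a' (p, ξ) ∂μE‖ ≤ _ at this
    rw [← hn] at this
    rw [le_div_iff₀ (by positivity)] at this ⊢
    calc _ = l * ‖∫ ξ, g ξ * a (p, ξ) ∂μE‖ * l ^ N := by rw [pow_succ]; ring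
      _ ≤ C := this
end nsp

lemma exists_eta (m : ℝ) (hm : 0 < m) : ∃ η : ℝ → ℝ, ContDiff ℝ ∞ η ∧ (∀ y, 0 < η y) ∧ ∀ y, m ≤ y → η y = y := by
  refine ⟨fun y => Real.smoothTransition (2 * y / m - 1) * y + (1 - Real.smoothTransition (2 * y / m - 1)), ?_, ?_, ?_⟩
  · have : ContDiff ℝ ∞ fun y : ℝ => Real.smoothTransition (2 * y / m - 1) :=
      Real.smoothTransition.contDiff.comp (by fun_prop)
    fun_prop
  · intro y
    have h0 := Real.smoothTransition.nonneg (2 * y / m - 1)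
    have h1 := Real.smoothTransition.le_one (2 * y / m - 1)
    beta_reduce
    rcases le_or_gt y 0 with hy | hy
    · rw [Real.smoothTransition.zero_of_nonpos]
      · simp
      · have : 2 * y / m ≤ 0 := div_nonpos_of_nonpos_of_nonneg (by linarith) hm.le
        linarith
    · rcases h1.lt_or_eq with h | h
      · have := mul_nonneg h0 hy.le
        linarith
      · rw [h]; simpa using hy
  · intro y hy
    beta_reduce
    rw [Real.smoothTransition.one_of_one_le]
    · ring
    · have : 2 ≤ 2 * y / m := by rw [le_div_iff₀ hm]; linarith
      linarith

section phase
variable {E : Type*} [NormedAddCommGroup E] [InnerProductSpace ℝ E]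

lemma exists_W (α : ℝ) (hα : 0 < α) : ∃ W : E → ℝ, ContDiff ℝ ∞ W ∧ (∀ ξ, 0 < W ξ) ∧
    (∀ ξ, α ≤ ‖ξ‖ → W ξ = √‖ξ‖) ∧
    ∀ ξ, α ≤ ‖ξ‖ → (∀ᶠ y in nhds ξ, W y ^ 4 = ‖y‖ ^ 2) ∧
      HasFDerivAt W ((1 / (2 * W ξ ^ 3)) • innerSL ℝ ξ) ξ := by
  obtain ⟨η, h1, h2, h3⟩ := exists_eta (α ^ 2 / 2) (by positivity)
  have hpos : ∀ ξ : E, 0 < (η (‖ξ‖ ^ 2)) ^ (1 / 4 : ℝ) := fun ξ => rpow_pos_of_pos (h2 _) _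
  have hsm : ContDiff ℝ ∞ fun ξ : E => (η (‖ξ‖ ^ 2)) ^ (1 / 4 : ℝ) :=
    ContDiff.rpow_const_of_ne (h1.comp (contDiff_norm_sq ℝ)) (fun ξ => (h2 _).ne')
  have h4 : ∀ ξ : E, α ≤ ‖ξ‖ → ∀ᶠ y in nhds ξ, ((η (‖y‖ ^ 2)) ^ (1 / 4 : ℝ)) ^ 4 = ‖y‖ ^ 2 := by
    intro ξ hξ
    have : ∀ᶠ y in nhds ξ, α ^ 2 / 2 < ‖y‖ ^ 2 := by
      apply (continuous_norm.pow 2).continuousAt.eventually_const_lt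
      change α ^ 2 / 2 < ‖ξ‖ ^ 2
      nlinarith [norm_nonneg ξ]
    filter_upwards [this] with y hy
    rw [← Real.rpow_natCast, ← Real.rpow_mul (h2 _).le, h3 _ hy.le]
    norm_num
  refine ⟨fun ξ => (η (‖ξ‖ ^ 2)) ^ (1 / 4 : ℝ), hsm, hpos, ?_, ?_⟩
  · intro ξ hξ
    have := (h4 ξ hξ).self_of_nhds
    have h5 : (√‖ξ‖) ^ 4 = ‖ξ‖ ^ 2 := by
      rw [show 4 = 2 * 2 from rfl, pow_mul, Real.sq_sqrt (norm_nonneg _)]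
    exact (pow_left_inj₀ (hpos ξ).le (Real.sqrt_nonneg _) (by norm_num)).1 (this.trans h5.symm)
  · intro ξ hξ
    refine ⟨h4 ξ hξ, ?_⟩
    set W : E → ℝ := fun ξ => (η (‖ξ‖ ^ 2)) ^ (1 / 4 : ℝ) with hW
    have hd : HasFDerivAt W (fderiv ℝ W ξ) ξ := (hsm.differentiable (by simp) _).hasFDerivAt
    have hd4 := hd.pow 4
    have hn : HasFDerivAt (fun y : E => ‖y‖ ^ 2) (2 • innerSL ℝ ξ) ξ := (hasStrictFDerivAt_norm_sq ξ).hasFDerivAt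
    have he := hd4.unique (hn.congr_of_eventuallyEq (h4 ξ hξ))
    have : fderiv ℝ W ξ = (1 / (2 * W ξ ^ 3)) • innerSL ℝ ξ := by
      ext v
      have h6 := DFunLike.congr_fun he v
      have hp : 0 < W ξ := hpos ξ
      simp at h6 ⊢
      generalize W ξ = y at *
      field_simp
      linarith
    rw [← this]; exact hd

lemma exists_phase (α : ℝ) (hα : 0 < α) : ∃ Φ : (ℝ × E) × E → ℝ, ContDiff ℝ ∞ Φ ∧
    (∀ κ o ξ, ‖o‖ = 1 → α ≤ ‖ξ‖ → α ≤ ‖ξ + κ • o‖ → κ * Φ ((κ, o), ξ) = √‖ξ + κ • o‖ - √‖ξ‖) ∧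
    (∀ κ o ξ, ‖o‖ = 1 → α ≤ ‖ξ‖ → α ≤ ‖ξ + κ • o‖ → ∃ v, Dsnd Φ v ((κ, o), ξ) ≠ 0) := by
  obtain ⟨W, hWs, hWp, hWe, hWd⟩ := exists_W (E := E) α hα
  set Φ : (ℝ × E) × E → ℝ := fun w =>
    (2 * ⟪w.2, w.1.2⟫ + w.1.1 * ‖w.1.2‖ ^ 2) /
      ((W (w.2 + w.1.1 • w.1.2) + W w.2) * (W (w.2 + w.1.1 • w.1.2) ^ 2 + W w.2 ^ 2)) with hΦ
  have hden : ∀ w : (ℝ × E) × E, 0 < (W (w.2 + w.1.1 • w.1.2) + W w.2) * (W (w.2 + w.1.1 • w.1.2) ^ 2 + W w.2 ^ 2) := by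
    intro w
    have := hWp w.2
    have := hWp (w.2 + w.1.1 • w.1.2)
    positivity
  have hsum : ContDiff ℝ ∞ fun w : (ℝ × E) × E => w.2 + w.1.1 • w.1.2 := by fun_prop
  have hW1 : ContDiff ℝ ∞ fun w : (ℝ × E) × E => W (w.2 + w.1.1 • w.1.2) := hWs.comp hsum
  have hW2 : ContDiff ℝ ∞ fun w : (ℝ × E) × E => W w.2 := hWs.comp contDiff_snd
  have hΦs : ContDiff ℝ ∞ Φ := by
    apply ContDiff.div
    · apply ContDiff.add
      · exact contDiff_const.mul (contDiff_snd.inner ℝ (by fun_prop))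
      · exact ContDiff.mul (by fun_prop) (ContDiff.norm_sq ℝ (by fun_prop))
    · exact (hW1.add hW2).mul ((hW1.pow 2).add (hW2.pow 2))
    · exact fun w => (hden w).ne'
  have key : ∀ κ : ℝ, ∀ o ξ : E, W (ξ + κ • o) ^ 4 = ‖ξ + κ • o‖ ^ 2 → W ξ ^ 4 = ‖ξ‖ ^ 2 →
      κ * Φ ((κ, o), ξ) = W (ξ + κ • o) - W ξ := by
    intro κ o ξ h1 h2
    have hd := hden ((κ, o), ξ)
    simp only [hΦ] at hd ⊢
    rw [mul_div_assoc', div_eq_iff hd.ne']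
    have : ‖ξ + κ • o‖ ^ 2 = ‖ξ‖ ^ 2 + 2 * (κ * ⟪ξ, o⟫) + κ ^ 2 * ‖o‖ ^ 2 := by
      rw [norm_add_sq_real, inner_smul_right, norm_smul, mul_pow, Real.norm_eq_abs, sq_abs]
    linear_combination - this - h1 + h2
  refine ⟨Φ, hΦs, ?_, ?_⟩
  · intro κ o ξ _ h1 h2
    rw [key _ _ _ (hWd _ h2).1.self_of_nhds (hWd _ h1).1.self_of_nhds, hWe _ h1, hWe _ h2]
  · intro κ o ξ ho h1 h2
    by_contra! hv
    have hD := sec_hasFDerivAt hΦs (κ, o) ξ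
    have hD0 : (fderiv ℝ Φ ((κ, o), ξ)).comp (ContinuousLinearMap.inr ℝ (ℝ × E) E) = 0 := by
      ext v
      exact hv v
    rw [hD0] at hD
    have hw := hWp ξ
    by_cases hκ : κ = 0
    · subst hκ
      have hI : HasFDerivAt (fun y : E => ⟪y, o⟫) (innerSL ℝ o) ξ := by
        have := (innerSL ℝ o).hasFDerivAt (x := ξ)
        convert this using 2 with y
        exact real_inner_comm _ _
      have hP := hD.mul (((hWd ξ h1).2.pow 3).const_mul 2)
      have hfe : (fun y : E => Φ ((0, o), y) * (2 * W y ^ 3)) = fun y : E => ⟪y, o⟫ := by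
        funext y
        simp only [hΦ]
        have := hWp y
        simp
        field_simp
        ring
      have he := hI.unique (hP.congr_of_eventuallyEq (Filter.Eventually.of_forall fun y => (congrFun hfe y).symm))
      have e1 := DFunLike.congr_fun he ξ
      have e2 := DFunLike.congr_fun he o
      have hf := congrFun hfe ξ
      have h4 := (hWd ξ h1).1.self_of_nhds
      simp [ho] at e1 e2 
      rw [real_inner_comm, ← hf, ← h4] at e1
      field_simp at e1
      have : Φ ((0, o), ξ) = 0 := by
        linarith
      rw [this] at e2
      simp at e2
    · have hA : HasFDerivAt (fun y : E => W (y + κ • o)) ((1 / (2 * W (ξ + κ • o) ^ 3)) • innerSL ℝ (ξ + κ • o)) ξ :=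
        (hasFDerivAt_comp_add_right _).2 (hWd _ h2).2
      have hP := hA.sub (hWd ξ h1).2
      have hfe : ∀ᶠ y in nhds ξ, κ * Φ ((κ, o), y) = W (y + κ • o) - W y := by
        have ht : Filter.Tendsto (fun y => y + κ • o) (nhds ξ) (nhds (ξ + κ • o)) :=
          Continuous.tendsto (by fun_prop) _
        filter_upwards [ht.eventually (hWd _ h2).1, (hWd _ h1).1] with y h3 h4
        exact key κ o y h3 h4
      have he := (hP.congr_of_eventuallyEq hfe).unique (hD.const_mul κ)
      have hw2 := hWp (ξ + κ • o)
      have e0 : (1 / (2 * W (ξ + κ • o) ^ 3)) • (ξ + κ • o) = (1 / (2 * W ξ ^ 3)) • ξ := by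
        apply ext_inner_right ℝ
        intro v
        have := DFunLike.congr_fun he v
        simp at this
        simp only [smul_add, inner_add_left, inner_smul_left]
        simp
        linarith
      have h4 := (hWd ξ h1).1.self_of_nhds
      have h5 := (hWd _ h2).1.self_of_nhds
      have n4 : ‖ξ‖ = W ξ ^ 2 := by
        rw [← sq_eq_sq₀ (norm_nonneg _) (by positivity), ← h4]; ring
      have n5 : ‖ξ + κ • o‖ = W (ξ + κ • o) ^ 2 := by
        rw [← sq_eq_sq₀ (norm_nonneg _) (by positivity), ← h5]; ring
      have e1 := congrArg norm e0
      rw [norm_smul, norm_smul, n4, n5, Real.norm_of_nonneg (by positivity), Real.norm_of_nonneg (by positivity)] at e1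
      have e2 : W (ξ + κ • o) = W ξ := by
        field_simp at e1
        linarith
      rw [e2] at e0
      have e3 := smul_right_injective E (show (1 / (2 * W ξ ^ 3)) ≠ 0 by positivity) e0
      have e4 : κ • o = 0 := by simpa using e3
      rcases smul_eq_zero.1 e4 with h | h
      · exact hκ h
      · simp [h] at ho
end phase

section disp
variable {E : Type*} [NormedAddCommGroup E] [InnerProductSpace ℝ E] [FiniteDimensional ℝ E]
  [MeasurableSpace E] [BorelSpace E]

lemma J_decay1 (χ : E → ℝ) (hχ : ContDiff ℝ ∞ χ) (α β : ℝ) (hα : 0 < α)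
    (hs : ∀ ξ, χ ξ ≠ 0 → α ≤ ‖ξ‖ ∧ ‖ξ‖ ≤ β) (N : ℕ) :
    ∃ C : ℝ, 0 ≤ C ∧ ∀ s : ℝ, 0 < s → ∀ h : E, h ≠ 0 →
      ‖∫ ξ, Complex.exp (Complex.I * ((s * (√‖ξ + h‖ - √‖ξ‖) : ℝ) : ℂ)) * ((χ (ξ + h) * χ ξ : ℝ) : ℂ)‖
        ≤ C / (s * ‖h‖) ^ N := by
  obtain ⟨Φ, hΦ, hΦe, hΦd⟩ := exists_phase (E := E) α hα
  set e := stdOrthonormalBasis ℝ E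
  set g : (ℝ × E) × E → ℝ := fun w => ∑ i, (Dsnd Φ (e i) w) ^ 2 with hg
  have hgs : ContDiff ℝ ∞ g := ContDiff.sum fun i _ => (Dsnd_contDiff hΦ _).pow 2
  set K : Set ((ℝ × E) × E) := ((Set.Icc 0 (2 * β) ×ˢ Metric.sphere 0 1) ×ˢ Metric.closedBall 0 β) ∩
    {w | α ≤ ‖w.2‖ ∧ α ≤ ‖w.2 + w.1.1 • w.1.2‖} with hK
  have hPc : IsCompact (Set.Icc 0 (2 * β) ×ˢ Metric.sphere (0 : E) 1) :=
    isCompact_Icc.prod (isCompact_sphere _ _)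
  have hKc : IsCompact K := by
    apply (hPc.prod (isCompact_closedBall _ _)).inter_right
    have c1 : Continuous fun w : (ℝ × E) × E => ‖w.2‖ := by fun_prop
    have c2 : Continuous fun w : (ℝ × E) × E => ‖w.2 + w.1.1 • w.1.2‖ := by fun_prop
    exact (isClosed_le continuous_const c1).inter (isClosed_le continuous_const c2)
  have hgpos : ∀ w ∈ K, 0 < g w := by
    rintro ⟨⟨κ, o⟩, ξ⟩ ⟨⟨⟨h1, h2⟩, h3⟩, h4, h5⟩
    obtain ⟨v, hv⟩ := hΦd κ o ξ (by simpa using h2) h4 h5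
    apply lt_of_le_of_ne (Finset.sum_nonneg fun i _ => sq_nonneg _)
    intro h0
    have h0' := (Finset.sum_eq_zero_iff_of_nonneg (fun i _ => sq_nonneg _)).1 h0.symm
    apply hv
    have hz : (fderiv ℝ Φ ((κ, o), ξ)).comp (ContinuousLinearMap.inr ℝ (ℝ × E) E) = 0 := by
      apply ContinuousLinearMap.coe_injective
      apply e.toBasis.ext
      intro i
      have := h0' i (Finset.mem_univ _)
      simpa [Dsnd] using this
    exact DFunLike.congr_fun hz v
  obtain ⟨m, hm, hmg⟩ := hKc.exists_forall_le' hgs.continuous.continuousOn hgpos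
  obtain ⟨η, h1, h2, h3⟩ := exists_eta m hm
  set ζ : (ℝ × E) × E → ℝ := fun w => (η (g w))⁻¹
  have hζ : ContDiff ℝ ∞ ζ := (h1.comp hgs).inv fun w => (h2 _).ne'
  set a : (ℝ × E) × E → ℂ := fun w => ((χ (w.2 + w.1.1 • w.1.2) * χ w.2 : ℝ) : ℂ) with ha
  have has : ContDiff ℝ ∞ a := by
    apply Complex.ofRealCLM.contDiff.comp
    apply ContDiff.mul
    · exact hχ.comp (by fun_prop)
    · exact hχ.comp (by fun_prop)
  have hane : ∀ w, a w ≠ 0 → χ (w.2 + w.1.1 • w.1.2) ≠ 0 ∧ χ w.2 ≠ 0 := by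
    intro w hw
    have : χ (w.2 + w.1.1 • w.1.2) * χ w.2 ≠ 0 := by simpa only [ha, ne_eq, Complex.ofReal_eq_zero] using hw
    exact mul_ne_zero_iff.1 this
  obtain ⟨C, hC0, hC⟩ := nsp volume (fun i => e i) Φ ζ hΦ hζ _ hPc _ (isCompact_closedBall (0:E) β) N a has (by
    rintro ⟨κ, o⟩ hp ξ hne
    obtain ⟨ha1, ha2⟩ := hane _ hne
    have hb1 := hs _ ha1
    have hb2 := hs _ ha2
    have hξ : ξ ∈ Metric.closedBall (0:E) β := by simpa using hb2.2
    have hw : ((κ, o), ξ) ∈ K := ⟨⟨hp, hξ⟩, hb2.1, hb1.1⟩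
    refine ⟨hξ, ?_⟩
    change (η (g _))⁻¹ * g _ = 1
    rw [h3 _ (hmg _ hw)]
    exact inv_mul_cancel₀ (hgpos _ hw).ne')
  refine ⟨C, hC0, fun s hs0 h hh => ?_⟩
  have hn : 0 < ‖h‖ := norm_pos_iff.2 hh
  have hno : ‖(‖h‖⁻¹ • h)‖ = 1 := by
    rw [norm_smul, norm_inv, norm_norm, inv_mul_cancel₀ hn.ne']
  have hhe : ‖h‖ • (‖h‖⁻¹ • h) = h := by rw [smul_smul, mul_inv_cancel₀ hn.ne', one_smul]
  by_cases hβ : ‖h‖ ≤ 2 * β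
  · have := hC (‖h‖, ‖h‖⁻¹ • h) ⟨⟨hn.le, hβ⟩, by simpa using hno⟩ (s * ‖h‖) (by positivity)
    refine le_trans (le_of_eq ?_) this
    congr 1
    apply integral_congr_ae
    filter_upwards with ξ
    simp only [ha, hhe]
    by_cases hz : χ (ξ + h) * χ ξ = 0
    · simp only [hz]; simp
    · obtain ⟨ha1, ha2⟩ := mul_ne_zero_iff.1 hz
      have hb1 := hs _ ha1
      have hb2 := hs _ ha2
      have := hΦe ‖h‖ (‖h‖⁻¹ • h) ξ hno hb2.1 (by rw [hhe]; exact hb1.1)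
      rw [hhe] at this
      rw [mul_assoc, this]
  · have hz : ∀ ξ, χ (ξ + h) * χ ξ = 0 := by
      intro ξ
      by_contra hz
      obtain ⟨ha1, ha2⟩ := mul_ne_zero_iff.1 hz
      have hb1 := hs _ ha1
      have hb2 := hs _ ha2
      have : ‖h‖ ≤ ‖ξ + h‖ + ‖ξ‖ := by
        have := norm_sub_le (ξ + h) ξ
        simpa using this
      linarith
    simp only [hz]
    simp
    positivity

lemma J_decay (χ : E → ℝ) (hχ : ContDiff ℝ ∞ χ) (α β : ℝ) (hα : 0 < α)
    (hs : ∀ ξ, χ ξ ≠ 0 → α ≤ ‖ξ‖ ∧ ‖ξ‖ ≤ β) (N : ℕ) :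
    ∃ C : ℝ, 0 < C ∧ ∀ s : ℝ, 0 < s → ∀ h : E,
      ‖∫ ξ, Complex.exp (Complex.I * ((s * (√‖ξ + h‖ - √‖ξ‖) : ℝ) : ℂ)) * ((χ (ξ + h) * χ ξ : ℝ) : ℂ)‖
        ≤ C * (1 + ‖s • h‖) ^ (-(N : ℝ)) := by
  obtain ⟨C1, hC1, h1⟩ := J_decay1 χ hχ α β hα hs N
  have hcs : HasCompactSupport χ := by
    apply HasCompactSupport.of_support_subset_isCompact (isCompact_closedBall (0:E) β)
    intro ξ hξ
    simpa using (hs ξ hξ).2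
  obtain ⟨M, hM⟩ := hχ.continuous.bounded_above_of_compact_support hcs
  have hM0 : 0 ≤ M := (norm_nonneg _).trans (hM 0)
  set C0 := M * ∫ ξ, ‖χ ξ‖
  have hC0 : 0 ≤ C0 := mul_nonneg hM0 (integral_nonneg fun _ => norm_nonneg _)
  refine ⟨2 ^ N * (C0 + C1 + 1), by positivity, fun s hs0 h => ?_⟩
  have hrw : ‖s • h‖ = s * ‖h‖ := by rw [norm_smul, Real.norm_of_nonneg hs0.le]
  rw [hrw, Real.rpow_neg (by positivity), Real.rpow_natCast]
  rcases le_or_gt (s * ‖h‖) 1 with hle | hlt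
  · have : ‖∫ ξ, Complex.exp (Complex.I * ((s * (√‖ξ + h‖ - √‖ξ‖) : ℝ) : ℂ)) * ((χ (ξ + h) * χ ξ : ℝ) : ℂ)‖ ≤ C0 := by
      rw [show C0 = ∫ ξ, M * ‖χ ξ‖ from (integral_const_mul _ _).symm]
      apply norm_integral_le_of_norm_le
      · exact (hχ.continuous.integrable_of_hasCompactSupport hcs).norm.const_mul M
      · filter_upwards with ξ
        rw [norm_mul, mul_comm Complex.I, Complex.norm_exp_ofReal_mul_I, one_mul, Complex.norm_real, norm_mul]
        gcongr
        exact hM _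
    refine this.trans ?_
    rw [← div_eq_mul_inv, le_div_iff₀ (by positivity)]
    have : (1 + s * ‖h‖) ^ N ≤ 2 ^ N := by gcongr; linarith
    calc C0 * (1 + s * ‖h‖) ^ N ≤ (C0 + C1 + 1) * 2 ^ N := by gcongr; linarith
      _ = _ := by ring
  · have hh : h ≠ 0 := by rintro rfl; simp at hlt; linarith
    refine (h1 s hs0 h hh).trans ?_
    rw [← div_eq_mul_inv, div_le_div_iff₀ (by positivity) (by positivity)]
    have : (1 + s * ‖h‖) ^ N ≤ (2 * (s * ‖h‖)) ^ N := by gcongr; linarith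
    calc C1 * (1 + s * ‖h‖) ^ N ≤ (C0 + C1 + 1) * (2 * (s * ‖h‖)) ^ N := by gcongr; linarith
      _ = _ := by ring

lemma disp1 (χ : E → ℝ) (hχ : ContDiff ℝ ∞ χ) (α β : ℝ) (hα : 0 < α)
    (hs : ∀ ξ, χ ξ ≠ 0 → α ≤ ‖ξ‖ ∧ ‖ξ‖ ≤ β) :
    ∃ C : ℝ, 0 < C ∧ ∀ s : ℝ, 0 < s → ∀ x : E,
      ‖∫ ξ, Complex.exp (Complex.I * ((⟪x, ξ⟫ + s * √‖ξ‖ : ℝ) : ℂ)) * (χ ξ : ℂ)‖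
        ≤ C * s ^ (-(Module.finrank ℝ E : ℝ) / 2) := by
  set n := Module.finrank ℝ E with hn
  obtain ⟨C, hC, hJ⟩ := J_decay χ hχ α β hα hs (n + 1)
  have hcs : HasCompactSupport χ := by
    apply HasCompactSupport.of_support_subset_isCompact (isCompact_closedBall (0:E) β)
    intro ξ hξ
    simpa using (hs ξ hξ).2
  have hint : Integrable (fun h : E => (1 + ‖h‖) ^ (-((n + 1 : ℕ) : ℝ))) :=
    integrable_one_add_norm (by push_cast; linarith)
  set A := ∫ h : E, (1 + ‖h‖) ^ (-((n + 1 : ℕ) : ℝ)) with hA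
  have hA0 : 0 ≤ A := integral_nonneg fun h => by positivity
  refine ⟨√(C * A) + 1, by positivity, fun s hs0 x => ?_⟩
  set f : E → ℂ := fun ξ => Complex.exp (Complex.I * ((⟪x, ξ⟫ + s * √‖ξ‖ : ℝ) : ℂ)) * (χ ξ : ℂ) with hf
  have hfc : Continuous f := by
    apply Continuous.mul
    · fun_prop
    · exact Complex.continuous_ofReal.comp hχ.continuous
  have hfcs : HasCompactSupport f := by
    apply HasCompactSupport.mul_left
    exact hcs.comp_left (g := fun x : ℝ => (x : ℂ)) (by simp)
  have hfi : Integrable f := hfc.integrable_of_hasCompactSupport hfcs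
  have hci : Integrable (fun ξ => (starRingEnd ℂ) (f ξ)) := by
    refine hfi.norm.mono' (by fun_prop) ?_
    filter_upwards with ξ
    simp
  have hpi : Integrable (fun z : E × E => f (z.1 + z.2) * (starRingEnd ℂ) (f z.1)) (volume.prod volume) := by
    have h1 := hci.mul_prod hfi
    have h2 := (measurePreserving_prod_add (volume : Measure E) (volume : Measure E)).integrable_comp_of_integrable h1
    refine h2.congr ?_
    filter_upwards with z
    simp [mul_comm]
  have hsq : (‖∫ ξ, f ξ‖ ^ 2 : ℂ) = ∫ h, ∫ ξ, f (ξ + h) * (starRingEnd ℂ) (f ξ) := by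
    rw [← Complex.mul_conj', ← integral_conj, ← integral_integral_swap hpi, ← integral_const_mul]
    congr 1
    funext ξ
    rw [integral_mul_const, integral_add_left_eq_self]
  have hb : ‖∫ ξ, f ξ‖ ^ 2 ≤ C * (A * s ^ (-(n : ℝ))) := by
    have h1 : ‖∫ ξ, f ξ‖ ^ 2 = ‖(‖∫ ξ, f ξ‖ ^ 2 : ℂ)‖ := by simp
    rw [h1, hsq]
    have hsc : ∫ h : E, (1 + ‖s • h‖) ^ (-((n + 1 : ℕ) : ℝ)) = A * s ^ (-(n : ℝ)) := by
      rw [Measure.integral_comp_smul volume (fun h : E => (1 + ‖h‖) ^ (-((n + 1 : ℕ) : ℝ))) s, ← hA, ← hn,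
        abs_of_nonneg (by positivity), Real.rpow_neg hs0.le, Real.rpow_natCast, smul_eq_mul, mul_comm]
    rw [← hsc, ← integral_const_mul]
    apply norm_integral_le_of_norm_le
    · exact ((integrable_comp_smul_iff volume (fun h : E => (1 + ‖h‖) ^ (-((n + 1 : ℕ) : ℝ))) hs0.ne').2 hint).const_mul C
    · filter_upwards with h
      refine le_trans (le_of_eq ?_) (hJ s hs0 h)
      have : ∀ ξ, f (ξ + h) * (starRingEnd ℂ) (f ξ) = Complex.exp (Complex.I * ((⟪x, h⟫ : ℝ) : ℂ)) *
          (Complex.exp (Complex.I * ((s * (√‖ξ + h‖ - √‖ξ‖) : ℝ) : ℂ)) * ((χ (ξ + h) * χ ξ : ℝ) : ℂ)) := by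
        intro ξ
        simp only [hf, map_mul, ← Complex.exp_conj, Complex.conj_I, Complex.conj_ofReal]
        rw [show ∀ a b c d : ℂ, a * b * (c * d) = (a * c) * (b * d) by intros; ring, ← Complex.exp_add,
          ← mul_assoc (Complex.exp (Complex.I * ((⟪x, h⟫ : ℝ) : ℂ))), ← Complex.exp_add, inner_add_right]
        push_cast
        congr 2
        ring
      simp_rw [this]
      rw [integral_const_mul, norm_mul, mul_comm Complex.I, Complex.norm_exp_ofReal_mul_I, one_mul]
  have h2 : ‖∫ ξ, f ξ‖ ≤ √(C * A) * s ^ (-(n : ℝ) / 2) := by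
    rw [← pow_le_pow_iff_left₀ (norm_nonneg _) (by positivity) two_ne_zero]
    rw [mul_pow, Real.sq_sqrt (by positivity), ← Real.rpow_natCast (s ^ _), ← Real.rpow_mul hs0.le]
    refine hb.trans (le_of_eq ?_)
    rw [mul_assoc]; congr 3; push_cast; ring
  refine h2.trans ?_
  gcongr
  linarith


lemma disp2 (χ : E → ℝ) (hχ : ContDiff ℝ ∞ χ) (α β : ℝ) (hα : 0 < α)
    (hs : ∀ ξ, χ ξ ≠ 0 → α ≤ ‖ξ‖ ∧ ‖ξ‖ ≤ β) :
    ∃ C : ℝ, 0 < C ∧ ∀ s : ℝ, 0 < s → ∀ x : E,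
      ‖∫ ξ, Complex.exp (Complex.I * ((⟪x, ξ⟫ : ℝ) : ℂ)) * (Real.cos (s * √‖ξ‖) : ℂ) * (χ ξ : ℂ)‖
        ≤ C * s ^ (-(Module.finrank ℝ E : ℝ) / 2) := by
  obtain ⟨C, hC, hd⟩ := disp1 χ hχ α β hα hs
  have hcs : HasCompactSupport χ := by
    apply HasCompactSupport.of_support_subset_isCompact (isCompact_closedBall (0:E) β)
    intro ξ hξ
    simpa using (hs ξ hξ).2
  refine ⟨C, hC, fun s hs0 x => ?_⟩
  set F : E → E → ℂ := fun x ξ => Complex.exp (Complex.I * ((⟪x, ξ⟫ + s * √‖ξ‖ : ℝ) : ℂ)) * (χ ξ : ℂ) with hF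
  have hFi : ∀ x, Integrable (F x) := by
    intro x
    apply Continuous.integrable_of_hasCompactSupport
    · apply Continuous.mul
      · fun_prop
      · exact Complex.continuous_ofReal.comp hχ.continuous
    · apply HasCompactSupport.mul_left
      exact hcs.comp_left (g := fun x : ℝ => (x : ℂ)) (by simp)
  have hci : Integrable (fun ξ => (starRingEnd ℂ) (F (-x) ξ)) := by
    refine (hFi (-x)).norm.mono' ?_ ?_
    · exact Complex.continuous_conj.comp_aestronglyMeasurable (hFi (-x)).1
    · filter_upwards with ξ
      simp
  have : ∀ ξ, Complex.exp (Complex.I * ((⟪x, ξ⟫ : ℝ) : ℂ)) * (Real.cos (s * √‖ξ‖) : ℂ) * (χ ξ : ℂ) =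
      (1 / 2 : ℂ) * (F x ξ + (starRingEnd ℂ) (F (-x) ξ)) := by
    intro ξ
    simp only [hF, map_mul, ← Complex.exp_conj, Complex.conj_I, Complex.conj_ofReal]
    rw [Complex.ofReal_cos, Complex.cos, inner_neg_left]
    push_cast
    rw [show Complex.I * ((⟪x, ξ⟫ : ℂ) + s * (√‖ξ‖ : ℂ)) = Complex.I * (⟪x, ξ⟫ : ℂ) + s * (√‖ξ‖ : ℂ) * Complex.I by ring,
      show -Complex.I * (-(⟪x, ξ⟫ : ℂ) + s * (√‖ξ‖ : ℂ)) = Complex.I * (⟪x, ξ⟫ : ℂ) + -((s : ℂ) * (√‖ξ‖ : ℂ)) * Complex.I by ring,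
      Complex.exp_add, Complex.exp_add]
    ring
  simp_rw [this]
  rw [integral_const_mul, integral_add (hFi x) hci, integral_conj, norm_mul]
  have h1 := hd s hs0 x
  have h2 := hd s hs0 (-x)
  have h3 : ‖(∫ ξ, F x ξ) + (starRingEnd ℂ) (∫ ξ, F (-x) ξ)‖ ≤ _ := (norm_add_le _ _).trans (add_le_add h1 ((RCLike.norm_conj _).trans_le h2))
  rw [show ‖(1/2 : ℂ)‖ = 1 / 2 by norm_num]
  linarith

lemma disp3 (χ : E → ℝ) (hχ : ContDiff ℝ ∞ χ) (α β : ℝ) (hα : 0 < α)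
    (hs : ∀ ξ, χ ξ ≠ 0 → α ≤ ‖ξ‖ ∧ ‖ξ‖ ≤ β) (m : ℝ) (hm : 0 < m) :
    ∃ C : ℝ, 0 < C ∧ ∀ L : ℝ, 0 < L → ∀ s : ℝ, 0 < s → ∀ x : E,
      ‖∫ ξ, Complex.exp (Complex.I * ((⟪x, ξ⟫ : ℝ) : ℂ)) * (Real.cos (s * m * √‖ξ‖) : ℂ) * (χ (L⁻¹ • ξ) : ℂ)‖
        ≤ C * L ^ (3 * (Module.finrank ℝ E : ℝ) / 4) * s ^ (-(Module.finrank ℝ E : ℝ) / 2) := by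
  obtain ⟨C, hC, hd⟩ := disp2 χ hχ α β hα hs
  refine ⟨C * m ^ (-(Module.finrank ℝ E : ℝ) / 2), by positivity, fun L hL s hs0 x => ?_⟩
  have h1 := hd (s * m * √L) (by positivity) (L • x)
  have h2 := Measure.integral_comp_smul volume (fun ξ : E => Complex.exp (Complex.I * ((⟪L • x, ξ⟫ : ℝ) : ℂ)) * (Real.cos (s * m * √L * √‖ξ‖) : ℂ) * (χ ξ : ℂ)) L⁻¹
  have h3 : ∀ ξ : E, Complex.exp (Complex.I * ((⟪L • x, L⁻¹ • ξ⟫ : ℝ) : ℂ)) * (Real.cos (s * m * √L * √‖L⁻¹ • ξ‖) : ℂ) * (χ (L⁻¹ • ξ) : ℂ)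
      = Complex.exp (Complex.I * ((⟪x, ξ⟫ : ℝ) : ℂ)) * (Real.cos (s * m * √‖ξ‖) : ℂ) * (χ (L⁻¹ • ξ) : ℂ) := by
    intro ξ
    have e1 : ⟪L • x, L⁻¹ • ξ⟫ = ⟪x, ξ⟫ := by
      rw [inner_smul_left, inner_smul_right]; simp; field_simp
    have e2 : s * m * √L * √‖L⁻¹ • ξ‖ = s * m * √‖ξ‖ := by
      rw [norm_smul, Real.norm_of_nonneg (by positivity), mul_assoc (s * m), ← Real.sqrt_mul hL.le, mul_inv_cancel_left₀ hL.ne']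
    rw [e1, e2]
  simp_rw [h3] at h2
  rw [h2, norm_smul]
  have hn : ‖|((L⁻¹) ^ (Module.finrank ℝ E))⁻¹|‖ = L ^ (Module.finrank ℝ E : ℝ) := by
    rw [norm_of_nonneg (abs_nonneg _), abs_of_nonneg (by positivity), Real.rpow_natCast]; simp
  rw [hn]
  calc _ ≤ L ^ (Module.finrank ℝ E : ℝ) * (C * (s * m * √L) ^ (-(Module.finrank ℝ E : ℝ) / 2)) := by gcongr
    _ = _ := by
      rw [Real.mul_rpow (by positivity) (by positivity), Real.mul_rpow (by positivity) (by positivity),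
        Real.sqrt_eq_rpow, ← Real.rpow_mul hL.le]
      rw [show 3 * (Module.finrank ℝ E : ℝ) / 4 = (Module.finrank ℝ E : ℝ) + 1 / 2 * (-(Module.finrank ℝ E : ℝ) / 2) by ring,
        Real.rpow_add hL]
      ring

/-- kernel of the truncated TT* operator -/
def kern (χ : E → ℝ) (m L t s : ℝ) (x : E) : ℂ :=
  ∫ ξ, Complex.exp (Complex.I * ((⟪x, ξ⟫ : ℝ) : ℂ)) *
    ((Real.cos (t * m * √‖ξ‖) * Real.cos (s * m * √‖ξ‖) : ℝ) : ℂ) * (χ (L⁻¹ • ξ) : ℂ)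

lemma kern_bound (χ : E → ℝ) (hχ : ContDiff ℝ ∞ χ) (α β : ℝ) (hα : 0 < α)
    (hs : ∀ ξ, χ ξ ≠ 0 → α ≤ ‖ξ‖ ∧ ‖ξ‖ ≤ β) (m : ℝ) (hm : 0 < m) :
    ∃ C : ℝ, 0 < C ∧ ∀ L : ℝ, 0 < L → ∀ t s : ℝ, 0 ≤ t → 0 ≤ s → t ≠ s → ∀ x : E,
      ‖kern χ m L t s x‖
        ≤ C * L ^ (3 * (Module.finrank ℝ E : ℝ) / 4) * |t - s| ^ (-(Module.finrank ℝ E : ℝ) / 2) := by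
  obtain ⟨C, hC, hd⟩ := disp3 χ hχ α β hα hs m hm
  have hcs : HasCompactSupport χ := by
    apply HasCompactSupport.of_support_subset_isCompact (isCompact_closedBall (0:E) β)
    intro ξ hξ
    simpa using (hs ξ hξ).2
  refine ⟨C, hC, fun L hL t s ht hs0 hts x => ?_⟩
  have hpos : 0 < |t - s| := abs_pos.2 (sub_ne_zero.2 hts)
  have hle : |t - s| ≤ t + s := by rw [abs_le]; constructor <;> linarith
  set F : ℝ → E → ℂ := fun s ξ => Complex.exp (Complex.I * ((⟪x, ξ⟫ : ℝ) : ℂ)) * (Real.cos (s * m * √‖ξ‖) : ℂ) * (χ (L⁻¹ • ξ) : ℂ) with hF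
  have hFi : ∀ s, Integrable (F s) := by
    intro s
    apply Continuous.integrable_of_hasCompactSupport
    · apply Continuous.mul
      · fun_prop
      · exact Complex.continuous_ofReal.comp (hχ.continuous.comp (by fun_prop))
    · apply HasCompactSupport.mul_left
      exact (hcs.comp_smul (inv_ne_zero hL.ne')).comp_left (g := fun x : ℝ => (x : ℂ)) (by simp)
  have he : kern χ m L t s x = (1 / 2 : ℂ) * ((∫ ξ, F |t - s| ξ) + ∫ ξ, F (t + s) ξ) := by
    rw [← integral_add (hFi _) (hFi _), ← integral_const_mul]
    unfold kern
    congr 1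
    funext ξ
    simp only [hF]
    have : Real.cos (t * m * √‖ξ‖) * Real.cos (s * m * √‖ξ‖) = 1 / 2 * (Real.cos (|t - s| * m * √‖ξ‖) + Real.cos ((t + s) * m * √‖ξ‖)) := by
      have h1 : Real.cos (|t - s| * m * √‖ξ‖) = Real.cos ((t - s) * m * √‖ξ‖) := by
        rcases abs_choice (t - s) with h | h <;> rw [h]
        rw [← Real.cos_neg]; congr 1; ring
      rw [h1, sub_mul, sub_mul, add_mul, add_mul, Real.cos_sub, Real.cos_add]; ring
    rw [this]
    push_cast
    ring
  rw [he, norm_mul]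
  have h1 := hd L hL _ hpos x
  have h2 : ‖∫ ξ, F (t + s) ξ‖ ≤ C * L ^ (3 * (Module.finrank ℝ E : ℝ) / 4) * |t - s| ^ (-(Module.finrank ℝ E : ℝ) / 2) := by
    refine (hd L hL (t + s) (by linarith) x).trans ?_
    gcongr 1
    exact Real.rpow_le_rpow_of_nonpos hpos hle (by have : (0:ℝ) ≤ (Module.finrank ℝ E : ℝ) := by positivity
                                                   linarith)
  have h3 := (norm_add_le (∫ ξ, F |t - s| ξ) (∫ ξ, F (t + s) ξ)).trans (add_le_add h1 h2)
  rw [show ‖(1/2 : ℂ)‖ = 1 / 2 by norm_num]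
  linarith

end disp

lemma cs_int {X : Type*} [MeasurableSpace X] (ν : Measure X) (f g : X → ℂ) (hf : MemLp f 2 ν) (hg : MemLp g 2 ν) :
    ‖∫ x, f x * g x ∂ν‖ ≤ √(∫ x, ‖f x‖ ^ 2 ∂ν) * √(∫ x, ‖g x‖ ^ 2 ∂ν) := by
  have h := integral_mul_norm_le_Lp_mul_Lq (μ := ν) (f := f) (g := g) Real.HolderConjugate.two_two
    (by simpa using hf) (by simpa using hg)
  refine (norm_integral_le_integral_norm _).trans ?_
  simp_rw [norm_mul]
  rw [Real.sqrt_eq_rpow, Real.sqrt_eq_rpow]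
  simpa using h

section four
variable {E : Type*} [NormedAddCommGroup E] [InnerProductSpace ℝ E] [FiniteDimensional ℝ E]
  [MeasurableSpace E] [BorelSpace E]

/-- unnormalised inverse Fourier transform -/
def ft (H : E → ℂ) (x : E) : ℂ := ∫ ξ, Complex.exp (Complex.I * ((⟪x, ξ⟫ : ℝ) : ℂ)) * H ξ

open scoped FourierTransform

lemma ft_eq (H : E → ℂ) (x : E) : ft H x = 𝓕 H ((-(2 * π)⁻¹) • x) := by
  rw [Real.fourier_eq', ft]
  congr 1
  funext ξ
  rw [smul_eq_mul, inner_smul_right, real_inner_comm]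
  congr 2
  push_cast
  field_simp

lemma ft_contDiff (F : E → ℂ) (hF : ∀ k : ℕ, Integrable fun v => ‖v‖ ^ k * ‖F v‖) : ContDiff ℝ ∞ (ft F) := by
  have h : ContDiff ℝ ∞ (𝓕 F) := Real.contDiff_fourier (N := ⊤) fun k _ => hF k
  have : ft F = fun x => 𝓕 F ((-(2 * π)⁻¹) • x) := by funext x; exact ft_eq F x
  rw [this]
  exact h.comp (by fun_prop)

lemma ft_plancherel (H : E → ℂ) (hH : ContDiff ℝ ∞ H) (hc : HasCompactSupport H) :
    MemLp (ft H) 2 ∧ ∫ x, ‖ft H x‖ ^ 2 = (2 * π) ^ (Module.finrank ℝ E) * ∫ ξ, ‖H ξ‖ ^ 2 := by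
  set S := hc.toSchwartzMap hH with hS
  have hSH : ∀ ξ, S ξ = H ξ := fun ξ => rfl
  have hpl := SchwartzMap.integral_norm_sq_fourier S
  have he : ∀ x, ft H x = (𝓕 S) ((-(2 * π)⁻¹) • x) := by
    intro x
    rw [ft_eq, SchwartzMap.fourier_coe]
    rfl
  have hc0 : (-(2 * π)⁻¹ : ℝ) ≠ 0 := by have := pi_pos; simp
  constructor
  · have h1 : MemLp (𝓕 S : SchwartzMap E ℂ) 2 := SchwartzMap.memLp _ _ _
    rw [memLp_two_iff_integrable_sq_norm]
    · have h2 := (memLp_two_iff_integrable_sq_norm h1.1).1 h1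
      have h3 := (integrable_comp_smul_iff volume (fun x => ‖(𝓕 S : SchwartzMap E ℂ) x‖ ^ 2) hc0).2 h2
      refine h3.congr ?_
      filter_upwards with x
      rw [he]
    · have : Continuous (ft H) := by
        have : ft H = fun x => (𝓕 S : SchwartzMap E ℂ) ((-(2 * π)⁻¹) • x) := funext he
        rw [this]
        exact (SchwartzMap.continuous _).comp (by fun_prop)
      exact this.aestronglyMeasurable
  · simp_rw [he]
    rw [Measure.integral_comp_smul volume (fun x => ‖(𝓕 S : SchwartzMap E ℂ) x‖ ^ 2), hpl]
    simp_rw [hSH]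
    rw [smul_eq_mul]
    congr 1
    rw [abs_inv, abs_pow, abs_neg, abs_inv, inv_pow, inv_inv, abs_of_nonneg (by positivity)]

lemma NiceOn.integrable_pow {S : Set E} (hS : MeasurableSet S) (hb : Bornology.IsBounded S) {F : E → ℂ} (hF : NiceOn S F) (k : ℕ) :
    Integrable fun v => ‖v‖ ^ k * ‖F v‖ := by
  obtain ⟨hm, ⟨M, hM⟩, h0⟩ := hF
  obtain ⟨R, hR⟩ := hb.exists_norm_le
  have hM0 : 0 ≤ M := (norm_nonneg _).trans (hM 0)
  have : IntegrableOn (fun v => ‖v‖ ^ k * ‖F v‖) S := by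
    apply Measure.integrableOn_of_bounded (M := |R| ^ k * M) hb.measure_lt_top.ne (by fun_prop)
    filter_upwards [ae_restrict_mem hS] with x hx
    rw [norm_mul, norm_pow, norm_norm, norm_norm]
    gcongr
    · exact (hR x hx).trans (le_abs_self _)
    · exact hM x
  apply this.integrable_of_forall_notMem_eq_zero
  intro x hx
  rw [h0 x hx]; simp

lemma NiceOn.memLp {S : Set E} (hS : MeasurableSet S) (hb : Bornology.IsBounded S) {F : E → ℂ} (hF : NiceOn S F) :
    MemLp F 2 ∧ Integrable F := by
  have h0 := hF.integrable_pow hS hb 0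
  have hi : Integrable F := by
    simp at h0
    exact (integrable_norm_iff hF.1.aestronglyMeasurable).1 h0
  obtain ⟨hm, ⟨M, hM⟩, _⟩ := hF
  refine ⟨?_, hi⟩
  rw [memLp_two_iff_integrable_sq_norm hi.1]
  refine (hi.norm.const_mul M).mono' (by fun_prop) ?_
  filter_upwards with x
  rw [norm_pow, norm_norm, sq]
  gcongr
  exact hM x

lemma bessel {S : Set E} (hS : MeasurableSet S) (hb : Bornology.IsBounded S) {F : E → ℂ} (hF : NiceOn S F)
    (χ : E → ℝ) (hχ : ContDiff ℝ ∞ χ) (hχc : HasCompactSupport χ) (h0 : ∀ ξ, 0 ≤ χ ξ) (h1 : ∀ ξ, χ ξ ≤ 1) :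
    ∫ ξ, χ ξ * ‖ft F ξ‖ ^ 2 ≤ (2 * π) ^ (Module.finrank ℝ E) * ∫ x, ‖F x‖ ^ 2 := by
  have hft : ContDiff ℝ ∞ (ft F) := ft_contDiff F (hF.integrable_pow hS hb)
  obtain ⟨hF2, hF1⟩ := hF.memLp hS hb
  set H : E → ℂ := fun ξ => (χ ξ : ℂ) * (starRingEnd ℂ) (ft F ξ) with hH
  have hHs : ContDiff ℝ ∞ H := by
    apply ContDiff.mul
    · exact Complex.ofRealCLM.contDiff.comp hχ
    · exact Complex.conjCLE.contDiff.comp hft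
  have hHc : HasCompactSupport H := by
    apply HasCompactSupport.mul_right
    exact hχc.comp_left (g := fun x : ℝ => (x : ℂ)) (by simp)
  obtain ⟨hH2, hHp⟩ := ft_plancherel H hHs hHc
  have hHi : Integrable H := hHs.continuous.integrable_of_hasCompactSupport hHc
  set X := ∫ ξ, χ ξ * ‖ft F ξ‖ ^ 2 with hX
  have hXi : Integrable fun ξ => χ ξ * ‖ft F ξ‖ ^ 2 := by
    apply Continuous.integrable_of_hasCompactSupport
    · have := hχ.continuous; have := hft.continuous; fun_prop
    · exact hχc.mul_right
  have hX0 : 0 ≤ X := integral_nonneg fun ξ => mul_nonneg (h0 _) (by positivity)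
  have hXH : ∫ ξ, ‖H ξ‖ ^ 2 ≤ X := by
    apply integral_mono_of_nonneg
    · filter_upwards with ξ; positivity
    · exact hXi
    · filter_upwards with ξ
      simp only [hH, norm_mul, mul_pow, RCLike.norm_conj, Complex.norm_real, Real.norm_eq_abs, sq_abs]
      gcongr
      nlinarith [h0 ξ, h1 ξ]
  have hfub : (X : ℂ) = ∫ x, F x * ft H x := by
    rw [hX, ← integral_complex_ofReal]
    have e1 : ∀ ξ, ((χ ξ * ‖ft F ξ‖ ^ 2 : ℝ) : ℂ) = ∫ x, Complex.exp (Complex.I * ((⟪ξ, x⟫ : ℝ) : ℂ)) * F x * H ξ := by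
      intro ξ
      rw [integral_mul_const]
      change _ = ft F ξ * _
      simp only [hH]
      push_cast
      rw [← Complex.mul_conj']; ring
    simp_rw [e1]
    rw [integral_integral_swap]
    · congr 1; funext x
      rw [ft, ← integral_const_mul]
      congr 1; funext ξ
      rw [real_inner_comm]; ring
    · have := hHi.mul_prod hF1
      refine this.norm.mono' ?_ ?_
      · apply AEStronglyMeasurable.mul
        · apply AEStronglyMeasurable.mul
          · apply Continuous.aestronglyMeasurable; fun_prop
          · exact hF1.1.comp_snd
        · exact hHi.1.comp_fst
      · filter_upwards with z
        simp only [Function.uncurry, norm_mul]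
        rw [mul_comm Complex.I, Complex.norm_exp_ofReal_mul_I, one_mul, mul_comm]
  have hcs := cs_int volume F (ft H) hF2 hH2
  rw [← hfub, Complex.norm_real, Real.norm_of_nonneg hX0, hHp] at hcs
  have hb2 : X ≤ √(∫ x, ‖F x‖ ^ 2) * √((2 * π) ^ (Module.finrank ℝ E) * X) :=
    hcs.trans (by gcongr)
  have hI : 0 ≤ ∫ x, ‖F x‖ ^ 2 := integral_nonneg fun x => by positivity
  rw [← Real.sqrt_mul hI] at hb2
  by_cases hXz : X = 0
  · rw [hXz]; positivity
  · have hXp : 0 < X := lt_of_le_of_ne hX0 (Ne.symm hXz)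
    rw [Real.le_sqrt' hXp] at hb2
    refine le_of_mul_le_mul_right (a := X) ?_ hXp
    linarith

lemma ft_neg_conj (G : E → ℂ) (ξ : E) : ft G (-ξ) = (starRingEnd ℂ) (ft (fun x => (starRingEnd ℂ) (G x)) ξ) := by
  rw [ft, ft, ← integral_conj]
  congr 1; funext x
  simp only [map_mul, ← Complex.exp_conj, Complex.conj_I, Complex.conj_ofReal, Complex.conj_conj, inner_neg_left]
  push_cast
  congr 2; ring

lemma kern_fub (χ : E → ℝ) (hχ : ContDiff ℝ ∞ χ) (hχc : HasCompactSupport χ)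
    (m L t s : ℝ) (hL : 0 < L) (F G : E → ℂ) (hF1 : Integrable F) (hG1 : Integrable G) :
    ∫ z : E × E, kern χ m L t s (z.1 - z.2) * (F z.1 * G z.2) ∂volume.prod volume =
      ∫ ξ, ((Real.cos (t * m * √‖ξ‖) * Real.cos (s * m * √‖ξ‖) : ℝ) : ℂ) * (χ (L⁻¹ • ξ) : ℂ) *
        (ft F ξ * ft G (-ξ)) := by
  set χL : E → ℝ := fun ξ => χ (L⁻¹ • ξ) with hχL
  have hχLs : ContDiff ℝ ∞ χL := hχ.comp (by fun_prop)
  have hχLc : HasCompactSupport χL := hχc.comp_smul (inv_ne_zero hL.ne')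
  set cc : E → ℝ := fun ξ => Real.cos (t * m * √‖ξ‖) * Real.cos (s * m * √‖ξ‖) with hcc
  have hccb : ∀ ξ, |cc ξ| ≤ 1 := by
    intro ξ
    rw [hcc, abs_mul]
    exact mul_le_one₀ (Real.abs_cos_le_one _) (abs_nonneg _) (Real.abs_cos_le_one _)
  have hccc : Continuous cc := by fun_prop
  have hχi : Integrable χL := hχLs.continuous.integrable_of_hasCompactSupport hχLc
  have e1 : ∀ z : E × E, kern χ m L t s (z.1 - z.2) * (F z.1 * G z.2) =
      ∫ ξ, Complex.exp (Complex.I * ((⟪z.1 - z.2, ξ⟫ : ℝ) : ℂ)) * (cc ξ : ℂ) * (χL ξ : ℂ) * (F z.1 * G z.2) := by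
    intro z
    rw [integral_mul_const]; rfl
  simp_rw [e1]
  rw [integral_integral_swap]
  · congr 1; funext ξ
    have e2 : ∀ z : E × E, Complex.exp (Complex.I * ((⟪z.1 - z.2, ξ⟫ : ℝ) : ℂ)) * (cc ξ : ℂ) * (χL ξ : ℂ) * (F z.1 * G z.2)
        = ((cc ξ : ℂ) * (χL ξ : ℂ)) * ((Complex.exp (Complex.I * ((⟪ξ, z.1⟫ : ℝ) : ℂ)) * F z.1) * (Complex.exp (Complex.I * ((⟪-ξ, z.2⟫ : ℝ) : ℂ)) * G z.2)) := by
      intro z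
      rw [inner_sub_left, real_inner_comm ξ z.1, real_inner_comm (ξ) z.2, inner_neg_left]
      push_cast
      rw [mul_sub, Complex.exp_sub, mul_neg, Complex.exp_neg]; field_simp
    simp_rw [e2]
    rw [integral_const_mul, integral_prod_mul (fun x => Complex.exp (Complex.I * ((⟪ξ, x⟫ : ℝ) : ℂ)) * F x) (fun x => Complex.exp (Complex.I * ((⟪-ξ, x⟫ : ℝ) : ℂ)) * G x)]
    rfl
  · have := (hF1.mul_prod hG1).mul_prod (hχi.ofReal (𝕜 := ℂ))
    refine this.norm.mono' ?_ ?_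
    · apply AEStronglyMeasurable.mul
      · apply Continuous.aestronglyMeasurable
        have := hχLs.continuous
        fun_prop
      · exact (hF1.mul_prod hG1).1.comp_fst
    · filter_upwards with z
      simp only [Function.uncurry, norm_mul, Complex.norm_real, Complex.coe_algebraMap]
      rw [mul_comm Complex.I, Complex.norm_exp_ofReal_mul_I, one_mul, mul_comm]
      gcongr
      exact mul_le_of_le_one_left (norm_nonneg _) (hccb _)

lemma kern_l2 {S : Set E} (hS : MeasurableSet S) (hb : Bornology.IsBounded S) 
    (χ : E → ℝ) (hχ : ContDiff ℝ ∞ χ) (hχc : HasCompactSupport χ) (h0 : ∀ ξ, 0 ≤ χ ξ) (h1 : ∀ ξ, χ ξ ≤ 1)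
    (m L t s : ℝ) (hL : 0 < L) (F G : E → ℂ) (hF : NiceOn S F) (hG : NiceOn S G) :
    ‖∫ z : E × E, kern χ m L t s (z.1 - z.2) * (F z.1 * G z.2) ∂volume.prod volume‖ ≤
      (2 * π) ^ (Module.finrank ℝ E) * ((∫ x, ‖F x‖ ^ (2 : ℝ)) ^ (1 / 2 : ℝ) * (∫ x, ‖G x‖ ^ (2 : ℝ)) ^ (1 / 2 : ℝ)) := by
  set χL : E → ℝ := fun ξ => χ (L⁻¹ • ξ) with hχL
  have hχLs : ContDiff ℝ ∞ χL := hχ.comp (by fun_prop)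
  have hχLc : HasCompactSupport χL := hχc.comp_smul (inv_ne_zero hL.ne')
  set cc : E → ℝ := fun ξ => Real.cos (t * m * √‖ξ‖) * Real.cos (s * m * √‖ξ‖) with hcc
  have hccb : ∀ ξ, |cc ξ| ≤ 1 := by
    intro ξ
    rw [hcc, abs_mul]
    exact mul_le_one₀ (Real.abs_cos_le_one _) (abs_nonneg _) (Real.abs_cos_le_one _)
  have hccc : Continuous cc := by fun_prop
  set G' : E → ℂ := fun x => (starRingEnd ℂ) (G x) with hG'
  have hGn : NiceOn S G' := by
    obtain ⟨a, ⟨M, b⟩, c⟩ := hG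
    refine ⟨by fun_prop, ⟨M, fun x => by simpa [hG'] using b x⟩, fun x hx => by simp [hG', c x hx]⟩
  have hFt := (ft_contDiff F (hF.integrable_pow hS hb)).continuous
  have hGt := (ft_contDiff G' (hGn.integrable_pow hS hb)).continuous
  obtain ⟨hF2, hF1⟩ := hF.memLp hS hb
  obtain ⟨hG2, hG1⟩ := hG.memLp hS hb
  have hsx : Continuous fun ξ => √(χL ξ) := Real.continuous_sqrt.comp hχLs.continuous
  have hmem : ∀ K : E → ℂ, Continuous K → MemLp (fun ξ => ((√(χL ξ) : ℝ) : ℂ) * K ξ) 2 := by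
    intro K hK
    apply Continuous.memLp_of_hasCompactSupport
    · fun_prop
    · apply HasCompactSupport.mul_right
      exact hχLc.comp_left (g := fun x : ℝ => ((√x : ℝ) : ℂ)) (by simp)
  have hχi : Integrable χL := hχLs.continuous.integrable_of_hasCompactSupport hχLc
  have hfub : ∫ z : E × E, kern χ m L t s (z.1 - z.2) * (F z.1 * G z.2) ∂volume.prod volume =
      ∫ ξ, (((√(χL ξ) : ℝ) : ℂ) * ((cc ξ : ℂ) * ft F ξ)) * (((√(χL ξ) : ℝ) : ℂ) * (starRingEnd ℂ) (ft G' ξ)) := by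
    rw [kern_fub χ hχ hχc m L t s hL F G hF1 hG1]
    congr 1; funext ξ
    rw [ft_neg_conj]
    have : (χL ξ : ℂ) = ((√(χL ξ) : ℝ) : ℂ) * ((√(χL ξ) : ℝ) : ℂ) := by
      rw [← Complex.ofReal_mul, Real.mul_self_sqrt (h0 _)]
    change (cc ξ : ℂ) * (χL ξ : ℂ) * _ = _
    rw [this]; ring
  have hcs := cs_int volume (fun ξ => ((√(χL ξ) : ℝ) : ℂ) * ((cc ξ : ℂ) * ft F ξ)) (fun ξ => ((√(χL ξ) : ℝ) : ℂ) * (starRingEnd ℂ) (ft G' ξ))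
    (hmem _ (by fun_prop)) (hmem _ (by fun_prop))
  rw [hfub]
  refine hcs.trans ?_
  have hb1 := bessel hS hb hF χL hχLs hχLc (fun ξ => h0 _) (fun ξ => h1 _)
  have hb2 := bessel hS hb hGn χL hχLs hχLc (fun ξ => h0 _) (fun ξ => h1 _)
  have i1 : ∫ ξ, ‖((√(χL ξ) : ℝ) : ℂ) * ((cc ξ : ℂ) * ft F ξ)‖ ^ 2 ≤ ∫ ξ, χL ξ * ‖ft F ξ‖ ^ 2 := by
    apply integral_mono_of_nonneg
    · filter_upwards with ξ; positivity
    · apply Continuous.integrable_of_hasCompactSupport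
      · have := hχLs.continuous; fun_prop
      · exact hχLc.mul_right
    · filter_upwards with ξ
      simp only [norm_mul, mul_pow, Complex.norm_real, Real.norm_eq_abs, sq_abs]
      rw [Real.sq_sqrt (h0 _)]
      have : cc ξ ^ 2 ≤ 1 := by rw [sq_le_one_iff_abs_le_one]; exact hccb ξ
      have h0' := h0 (L⁻¹ • ξ)
      gcongr
      exact mul_le_of_le_one_left (by positivity) this
  have i2 : ∫ ξ, ‖((√(χL ξ) : ℝ) : ℂ) * (starRingEnd ℂ) (ft G' ξ)‖ ^ 2 = ∫ ξ, χL ξ * ‖ft G' ξ‖ ^ 2 := by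
    congr 1; funext ξ
    simp only [norm_mul, mul_pow, Complex.norm_real, Real.norm_eq_abs, sq_abs, RCLike.norm_conj]
    rw [Real.sq_sqrt (h0 _)]
  have i3 : ∀ x, ‖G' x‖ = ‖G x‖ := fun x => by simp [hG']
  simp_rw [i3] at hb2
  have hp : (0:ℝ) ≤ (2 * π) ^ (Module.finrank ℝ E) := by positivity
  have j1 := Real.sqrt_le_sqrt (i1.trans hb1)
  have j2 := Real.sqrt_le_sqrt (i2.le.trans hb2)
  rw [Real.sqrt_mul hp] at j1 j2
  calc _ ≤ _ := mul_le_mul j1 j2 (Real.sqrt_nonneg _) (by positivity)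
    _ = (√((2 * π) ^ (Module.finrank ℝ E)) * √((2 * π) ^ (Module.finrank ℝ E))) * (√(∫ x, ‖F x‖ ^ 2) * √(∫ x, ‖G x‖ ^ 2)) := by ring
    _ = _ := by
      rw [Real.mul_self_sqrt hp, Real.sqrt_eq_rpow, Real.sqrt_eq_rpow]
      simp

end four

section tt
variable {E : Type*} [NormedAddCommGroup E] [InnerProductSpace ℝ E] [FiniteDimensional ℝ E]
  [MeasurableSpace E] [BorelSpace E]

lemma kern_continuous (χ : E → ℝ) (hχ : ContDiff ℝ ∞ χ) (hχc : HasCompactSupport χ)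
    (m L t s : ℝ) (hL : 0 < L) : Continuous (kern χ m L t s) := by
  have hχLs : Continuous fun ξ : E => χ (L⁻¹ • ξ) := hχ.continuous.comp (by fun_prop)
  have hχLc : HasCompactSupport fun ξ : E => χ (L⁻¹ • ξ) := hχc.comp_smul (inv_ne_zero hL.ne')
  have hχi := hχLs.integrable_of_hasCompactSupport hχLc (μ := volume)
  unfold kern
  refine continuous_of_dominated (bound := fun ξ => ‖χ (L⁻¹ • ξ)‖) ?_ ?_ hχi.norm ?_
  · intro x
    apply Continuous.aestronglyMeasurable
    fun_prop
  · intro x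
    filter_upwards with ξ
    rw [norm_mul, norm_mul, mul_comm Complex.I, Complex.norm_exp_ofReal_mul_I, one_mul, Complex.norm_real, Complex.norm_real]
    apply mul_le_of_le_one_left (norm_nonneg _)
    rw [norm_mul]
    exact mul_le_one₀ (Real.abs_cos_le_one _) (abs_nonneg _) (Real.abs_cos_le_one _)
  · filter_upwards with ξ
    fun_prop

lemma kern_interp (χ : E → ℝ) (hχ : ContDiff ℝ ∞ χ) (hχc : HasCompactSupport χ) (h0 : ∀ ξ, 0 ≤ χ ξ) (h1 : ∀ ξ, χ ξ ≤ 1)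
    (m L t s : ℝ) (hL : 0 < L) (R : ℝ) (A : ℝ) (hA : 0 ≤ A) (hkA : ∀ x, ‖kern χ m L t s x‖ ≤ A) (r : ℝ) (hr : 2 < r)
    (F G : E → ℂ) (hF : NiceOn (Metric.closedBall 0 R) F) (hG : NiceOn (Metric.closedBall 0 R) G)
    (hFε : ∃ ε > 0, ∀ x, F x = 0 ∨ ε ≤ ‖F x‖) (hGε : ∃ ε > 0, ∀ x, G x = 0 ∨ ε ≤ ‖G x‖) :
    ‖∫ z : E × E, kern χ m L t s (z.1 - z.2) * (F z.1 * G z.2) ∂volume.prod volume‖ ≤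
      A ^ (1 - 2 / r) * ((2 * π) ^ (Module.finrank ℝ E)) ^ (2 / r) *
        ((∫ x, ‖F x‖ ^ (r / (r - 1))) ^ (1 - 1 / r) * (∫ x, ‖G x‖ ^ (r / (r - 1))) ^ (1 - 1 / r)) := by
  obtain ⟨ε1, he1, hf⟩ := hFε
  obtain ⟨ε2, he2, hg⟩ := hGε
  have hc := kern_continuous χ hχ hχc m L t s hL
  exact riesz_thorin volume (Metric.closedBall (0:E) R) measurableSet_closedBall
    (Metric.isBounded_closedBall).measure_lt_top
    (fun z => kern χ m L t s (z.1 - z.2)) (Continuous.measurable (by fun_prop)) A _ hA (by positivity) (fun z => hkA _)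
    (fun F G hF hG => kern_l2 measurableSet_closedBall Metric.isBounded_closedBall χ hχ hχc h0 h1 m L t s hL F G hF hG)
    r hr F G hF hG (min ε1 ε2) (lt_min he1 he2)
    (fun x => (hf x).imp_right (min_le_left _ _).trans) (fun x => (hg x).imp_right (min_le_right _ _).trans)

/-- the time-restricted measure -/
abbrev rho : Measure ℝ := volume.restrict (Set.Icc (0:ℝ) 1)

/-- dual operator -/
def Pop (m : ℝ) (F : ℝ × E → ℂ) (ξ : E) : ℂ :=
  ∫ t, (Real.cos (t * m * √‖ξ‖) : ℂ) * ft (fun x => F (t, x)) ξ ∂rho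

lemma ft_joint (F : ℝ × E → ℂ) (hF : Measurable F) :
    Measurable fun z : ℝ × E => ft (fun x => F (z.1, x)) z.2 := by
  have : Measurable fun w : (ℝ × E) × E => Complex.exp (Complex.I * ((⟪w.1.2, w.2⟫ : ℝ) : ℂ)) * F (w.1.1, w.2) := by
    apply Measurable.mul
    · apply Continuous.measurable; fun_prop
    · exact hF.comp (by fun_prop)
  exact this.stronglyMeasurable.integral_prod_right.measurable

lemma ft_norm_le (F : E → ℂ) (ξ : E) : ‖ft F ξ‖ ≤ ∫ x, ‖F x‖ := by
  refine (norm_integral_le_integral_norm _).trans (le_of_eq ?_)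
  congr 1; funext x
  rw [norm_mul, mul_comm Complex.I, Complex.norm_exp_ofReal_mul_I, one_mul]

lemma ttstar (χ : E → ℝ) (hχ : ContDiff ℝ ∞ χ) (hχc : HasCompactSupport χ) (h0 : ∀ ξ, 0 ≤ χ ξ) (h1 : ∀ ξ, χ ξ ≤ 1)
    (m L : ℝ) (hL : 0 < L) (R : ℝ) (A : ℝ) (hA : 0 ≤ A) (r a : ℝ) (hr : 2 < r) (ha0 : 0 < a) (ha1 : a < 1)
    (ha : a = (Module.finrank ℝ E : ℝ) / 2 * (1 - 2 / r))
    (hk : ∀ t s, 0 ≤ t → 0 ≤ s → t ≠ s → ∀ x : E, ‖kern χ m L t s x‖ ≤ A * |t - s| ^ (-(Module.finrank ℝ E : ℝ) / 2))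
    (F : ℝ × E → ℂ) (hF : Measurable F) (hFi : Integrable F (rho.prod volume))
    (hFn : ∀ t, NiceOn (Metric.closedBall 0 R) fun x => F (t, x))
    (hFε : ∀ t, ∃ ε > 0, ∀ x, F (t, x) = 0 ∨ ε ≤ ‖F (t, x)‖) :
    ENNReal.ofReal (∫ ξ, χ (L⁻¹ • ξ) * ‖Pop m F ξ‖ ^ 2) ≤
      ENNReal.ofReal (A ^ (1 - 2 / r) * ((2 * π) ^ (Module.finrank ℝ E)) ^ (2 / r)) *
       (ENNReal.ofReal (2*(2/(1-a)+2^(a/2))) *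
        (∫⁻ t, (ENNReal.ofReal ((∫ x, ‖F (t, x)‖ ^ (r / (r - 1))) ^ (1 - 1 / r))) ^ (2 / (2 - a))) ^ (2 - a)) := by
  set χL : E → ℝ := fun ξ => χ (L⁻¹ • ξ) with hχL
  have hχLs : Continuous χL := hχ.continuous.comp (by fun_prop)
  have hχLc : HasCompactSupport χL := hχc.comp_smul (inv_ne_zero hL.ne')
  have hχi : Integrable χL := hχLs.integrable_of_hasCompactSupport hχLc
  set φ : ℝ → ℝ≥0∞ := fun t => ENNReal.ofReal ((∫ x, ‖F (t, x)‖ ^ (r / (r - 1))) ^ (1 - 1 / r)) with hφ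
  have hφm : Measurable φ := by
    apply ENNReal.measurable_ofReal.comp
    apply Measurable.pow_const
    have : Measurable fun z : ℝ × E => ‖F z‖ ^ (r / (r - 1)) := hF.norm.pow_const _
    exact this.stronglyMeasurable.integral_prod_right.measurable
  set N : ℝ → ℝ := fun t => ∫ x, ‖F (t, x)‖ with hN
  have hNi : Integrable N rho := hFi.norm.integral_prod_left
  have hjm := ft_joint F hF
  set g : E → ℝ × ℝ → ℂ := fun ξ w => (χL ξ : ℂ) * (((Real.cos (w.1 * m * √‖ξ‖) : ℂ) * ft (fun x => F (w.1, x)) ξ) *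
     (starRingEnd ℂ) ((Real.cos (w.2 * m * √‖ξ‖) : ℂ) * ft (fun x => F (w.2, x)) ξ)) with hg
  have hgi : Integrable (Function.uncurry g) (volume.prod (rho.prod rho)) := by
    refine (hχi.mul_prod (hNi.mul_prod hNi)).mono' ?_ ?_
    · apply Measurable.aestronglyMeasurable
      apply Measurable.mul
      · exact Complex.measurable_ofReal.comp (hχLs.measurable.comp measurable_fst)
      · apply Measurable.mul
        · apply Measurable.mul
          · apply Continuous.measurable; fun_prop
          · exact hjm.comp (f := fun z : E × (ℝ × ℝ) => (z.2.1, z.1)) (by fun_prop)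
        · apply Complex.continuous_conj.measurable.comp
          apply Measurable.mul
          · apply Continuous.measurable; fun_prop
          · exact hjm.comp (f := fun z : E × (ℝ × ℝ) => (z.2.2, z.1)) (by fun_prop)
    · filter_upwards with z
      simp only [Function.uncurry, hg, norm_mul, RCLike.norm_conj, Complex.norm_real]
      have e0 : ‖χL z.1‖ = χL z.1 := Real.norm_of_nonneg (h0 _)
      rw [e0]
      have hb : ∀ t, ‖Real.cos (t * m * √‖z.1‖)‖ * ‖ft (fun x => F (t, x)) z.1‖ ≤ N t := by
        intro t
        refine (mul_le_of_le_one_left (norm_nonneg _) (Real.abs_cos_le_one _)).trans (ft_norm_le _ _)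
      have := h0 (L⁻¹ • z.1)
      exact mul_le_mul_of_nonneg_left (mul_le_mul (hb _) (hb _) (by positivity) ((by positivity : (0:ℝ) ≤ _).trans (hb z.2.1))) this
  have hX : ((∫ ξ, χL ξ * ‖Pop m F ξ‖ ^ 2 : ℝ) : ℂ) = ∫ t, ∫ s, (∫ z : E × E, kern χ m L t s (z.1 - z.2) *
      (F (t, z.1) * (starRingEnd ℂ) (F (s, z.2))) ∂volume.prod volume) ∂rho ∂rho := by
    rw [← integral_complex_ofReal]
    have e1 : ∀ ξ, ((χL ξ * ‖Pop m F ξ‖ ^ 2 : ℝ) : ℂ) = ∫ w, g ξ w ∂rho.prod rho := by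
      intro ξ
      simp only [hg]
      rw [integral_const_mul, integral_prod_mul (fun t => (Real.cos (t * m * √‖ξ‖) : ℂ) * ft (fun x => F (t, x)) ξ)
        (fun t => (starRingEnd ℂ) ((Real.cos (t * m * √‖ξ‖) : ℂ) * ft (fun x => F (t, x)) ξ)), integral_conj]
      rw [Complex.ofReal_mul, Complex.ofReal_pow, ← Complex.mul_conj']; rfl
    simp_rw [e1]
    rw [integral_integral_swap hgi, integral_prod (fun w => ∫ ξ, g ξ w) hgi.integral_prod_right]
    congr 1; funext t; congr 1; funext s
    have i1 := ((hFn t).memLp measurableSet_closedBall Metric.isBounded_closedBall).2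
    have i2 := ((hFn s).memLp measurableSet_closedBall Metric.isBounded_closedBall).2
    rw [kern_fub χ hχ hχc m L t s hL (fun x => F (t, x)) (fun x => (starRingEnd ℂ) (F (s, x))) i1
      ((Complex.conjCLE : ℂ →L[ℝ] ℂ).integrable_comp i2)]
    congr 1; funext ξ
    rw [ft_neg_conj]
    simp only [hg, Complex.conj_conj, map_mul, Complex.conj_ofReal]
    push_cast
    ring
  have hXn : 0 ≤ ∫ ξ, χL ξ * ‖Pop m F ξ‖ ^ 2 := integral_nonneg fun ξ => mul_nonneg (h0 _) (by positivity)
  set D := A ^ (1 - 2 / r) * ((2 * π) ^ (Module.finrank ℝ E)) ^ (2 / r) with hD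
  have hD0 : 0 ≤ D := by positivity
  have hQ : ∀ t ∈ Set.Icc (0:ℝ) 1, ∀ s ∈ Set.Icc (0:ℝ) 1, s ≠ t → ‖∫ z : E × E, kern χ m L t s (z.1 - z.2) *
      (F (t, z.1) * (starRingEnd ℂ) (F (s, z.2))) ∂volume.prod volume‖ₑ ≤
      ENNReal.ofReal D * (ENNReal.ofReal (|t-s|^(-a)) * (φ t * φ s)) := by
    intro t ht s hs hst
    have hp : 0 < |t - s| := abs_pos.2 (sub_ne_zero.2 (Ne.symm hst))
    have hGn : NiceOn (Metric.closedBall 0 R) fun x => (starRingEnd ℂ) (F (s, x)) := by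
      obtain ⟨a, ⟨M, b⟩, c⟩ := hFn s
      refine ⟨Complex.continuous_conj.measurable.comp a, ⟨M, fun x => by simpa using b x⟩, fun x hx => by simp [c x hx]⟩
    have hGε : ∃ ε > 0, ∀ x, (starRingEnd ℂ) (F (s, x)) = 0 ∨ ε ≤ ‖(starRingEnd ℂ) (F (s, x))‖ := by
      obtain ⟨ε, he, h⟩ := hFε s
      exact ⟨ε, he, fun x => by simpa using h x⟩
    have := kern_interp χ hχ hχc h0 h1 m L t s hL R _ (by positivity) (hk t s ht.1 hs.1 hst.symm) r hr _ _ (hFn t) hGn (hFε t) hGε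
    rw [← ofReal_norm_eq_enorm]
    refine (ENNReal.ofReal_le_ofReal this).trans (le_of_eq ?_)
    simp only [hφ, RCLike.norm_conj]
    rw [← ENNReal.ofReal_mul (by positivity), ← ENNReal.ofReal_mul (by positivity), ← ENNReal.ofReal_mul hD0]
    congr 1
    rw [Real.mul_rpow hA (by positivity), ← Real.rpow_mul hp.le,
      show -(Module.finrank ℝ E : ℝ) / 2 * (1 - 2 / r) = - a by rw [ha]; ring]
    ring
  calc ENNReal.ofReal (∫ ξ, χL ξ * ‖Pop m F ξ‖ ^ 2)
      = ‖((∫ ξ, χL ξ * ‖Pop m F ξ‖ ^ 2 : ℝ) : ℂ)‖ₑ := by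
        rw [← ofReal_norm_eq_enorm, Complex.norm_real, Real.norm_of_nonneg hXn]
    _ ≤ ∫⁻ t, ∫⁻ s, ‖∫ z : E × E, kern χ m L t s (z.1 - z.2) *
      (F (t, z.1) * (starRingEnd ℂ) (F (s, z.2))) ∂volume.prod volume‖ₑ ∂rho ∂rho := by
        rw [hX]
        refine (enorm_integral_le_lintegral_enorm _).trans (lintegral_mono fun t => ?_)
        exact enorm_integral_le_lintegral_enorm _
    _ ≤ ∫⁻ t, ∫⁻ s, ENNReal.ofReal D * (ENNReal.ofReal (|t-s|^(-a)) * (φ t * φ s)) ∂rho ∂rho := by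
        apply setLIntegral_mono_ae' measurableSet_Icc
        filter_upwards with t ht
        apply setLIntegral_mono_ae' measurableSet_Icc
        have : ∀ᵐ s : ℝ, s ≠ t := by simp [ae_iff]
        filter_upwards [this] with s hst hs
        exact hQ t ht s hs hst
    _ ≤ ∫⁻ t, ∫⁻ s, ENNReal.ofReal D * (ENNReal.ofReal (|t-s|^(-a)) * (φ t * φ s)) := by
        refine (setLIntegral_le_lintegral _ _).trans (lintegral_mono fun t => ?_)
        exact setLIntegral_le_lintegral _ _
    _ = ENNReal.ofReal D * ∫⁻ t, ∫⁻ s, ENNReal.ofReal (|t-s|^(-a)) * (φ t * φ s) := by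
        simp_rw [lintegral_const_mul' _ _ ENNReal.ofReal_ne_top]
    _ ≤ _ := by
        gcongr
        exact hls a ha0 ha1 φ hφm (fun t => ENNReal.ofReal_ne_top)
end tt

section pairing
variable {E : Type*} [NormedAddCommGroup E] [InnerProductSpace ℝ E] [FiniteDimensional ℝ E]
  [MeasurableSpace E] [BorelSpace E]

/-- wave -/
def wv (m : ℝ) (G : E → ℂ) (t : ℝ) (x : E) : ℂ :=
  ft (fun ξ => (Real.cos (t * m * √‖ξ‖) : ℂ) * G ξ) x

lemma wv_continuous (m : ℝ) (G : E → ℂ) (hG : Continuous G) (hc : HasCompactSupport G) :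
    Continuous fun z : ℝ × E => wv m G z.1 z.2 := by
  have hi := hG.integrable_of_hasCompactSupport hc (μ := volume)
  unfold wv ft
  refine continuous_of_dominated (bound := fun ξ => ‖G ξ‖) ?_ ?_ hi.norm ?_
  · intro x
    apply Continuous.aestronglyMeasurable
    fun_prop
  · intro x
    filter_upwards with ξ
    rw [norm_mul, mul_comm Complex.I, Complex.norm_exp_ofReal_mul_I, one_mul, norm_mul, Complex.norm_real]
    exact mul_le_of_le_one_left (norm_nonneg _) (Real.abs_cos_le_one _)
  · filter_upwards with ξ
    fun_prop

lemma pairing_eq (m : ℝ) (G : E → ℂ) (hG : Continuous G) (hc : HasCompactSupport G)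
    (F : ℝ × E → ℂ) (hFi : Integrable F (rho.prod volume)) :
    ∫ z, F z * wv m G z.1 z.2 ∂(rho.prod volume) = ∫ ξ, G ξ * Pop m F ξ := by
  have hi := hG.integrable_of_hasCompactSupport hc (μ := volume)
  set k : (ℝ × E) → E → ℂ := fun z ξ => Complex.exp (Complex.I * ((⟪z.2, ξ⟫ : ℝ) : ℂ)) * (Real.cos (z.1 * m * √‖ξ‖) : ℂ) with hk
  have hkn : ∀ z ξ, ‖k z ξ‖ ≤ 1 := by
    intro z ξ
    rw [hk, norm_mul, mul_comm Complex.I, Complex.norm_exp_ofReal_mul_I, one_mul, Complex.norm_real]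
    exact Real.abs_cos_le_one _
  have hkc : Continuous fun w : (ℝ × E) × E => k w.1 w.2 := by simp only [hk]; fun_prop
  have hint : Integrable (fun w : (ℝ × E) × E => k w.1 w.2 * (F w.1 * G w.2)) ((rho.prod volume).prod volume) := by
    refine (hFi.mul_prod hi).bdd_mul (c := 1) hkc.aestronglyMeasurable ?_
    filter_upwards with w using hkn _ _
  have h1 : ∀ z : ℝ × E, F z * wv m G z.1 z.2 = ∫ ξ, k z ξ * (F z * G ξ) := by
    intro z
    unfold wv ft
    rw [← integral_const_mul]
    congr 1; funext ξ
    simp only [hk]; ring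
  simp_rw [h1]
  rw [integral_integral_swap (f := fun z ξ => k z ξ * (F z * G ξ)) hint]
  congr 1; funext ξ
  have : Integrable (fun z : ℝ × E => k z ξ * F z) (rho.prod volume) := by
    refine hFi.bdd_mul (c := 1) ?_ ?_
    · exact (hkc.comp (by fun_prop : Continuous fun z : ℝ × E => (z, ξ))).aestronglyMeasurable
    · filter_upwards with w using hkn _ _
  have e : ∀ z : ℝ × E, k z ξ * (F z * G ξ) = G ξ * (k z ξ * F z) := fun z => by ring
  simp_rw [e]
  rw [integral_const_mul, integral_prod _ this]
  congr 1
  unfold Pop ft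
  congr 1; funext t
  rw [← integral_const_mul]
  congr 1; funext x
  simp only [hk]
  rw [real_inner_comm]; ring

lemma pairing_le (χ : E → ℝ) (hχ : Continuous χ) (hχc : HasCompactSupport χ) (h0 : ∀ ξ, 0 ≤ χ ξ) (h1 : ∀ ξ, χ ξ ≤ 1)
    (m L : ℝ) (hL : 0 < L) (G : E → ℂ) (hG : Continuous G) (hc : HasCompactSupport G)
    (hGχ : ∀ ξ, G ξ ≠ 0 → χ (L⁻¹ • ξ) = 1)
    (F : ℝ × E → ℂ) (hF : Measurable F) (hFi : Integrable F (rho.prod volume)) :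
    ‖∫ z, F z * wv m G z.1 z.2 ∂(rho.prod volume)‖ ≤ √(∫ ξ, ‖G ξ‖ ^ 2) * √(∫ ξ, χ (L⁻¹ • ξ) * ‖Pop m F ξ‖ ^ 2) := by
  rw [pairing_eq m G hG hc F hFi]
  have hχLs : Continuous fun ξ : E => χ (L⁻¹ • ξ) := hχ.comp (by fun_prop)
  have hχLc : HasCompactSupport fun ξ : E => χ (L⁻¹ • ξ) := hχc.comp_smul (inv_ne_zero hL.ne')
  have hPm : Measurable (Pop m F) := by
    have : Measurable fun w : E × ℝ => (Real.cos (w.2 * m * √‖w.1‖) : ℂ) * ft (fun x => F (w.2, x)) w.1 := by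
      apply Measurable.mul
      · apply Continuous.measurable; fun_prop
      · exact (ft_joint F hF).comp measurable_swap
    exact this.stronglyMeasurable.integral_prod_right.measurable
  have hPb : ∀ ξ, ‖Pop m F ξ‖ ≤ ∫ t, (∫ x, ‖F (t, x)‖) ∂rho := by
    intro ξ
    refine norm_integral_le_of_norm_le hFi.norm.integral_prod_left ?_
    filter_upwards with t
    rw [norm_mul, Complex.norm_real]
    exact (mul_le_of_le_one_left (norm_nonneg _) (Real.abs_cos_le_one _)).trans (ft_norm_le _ _)
  have hm : MemLp (fun ξ => (χ (L⁻¹ • ξ) : ℂ) * Pop m F ξ) 2 volume := by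
    have hx : MemLp (fun ξ : E => χ (L⁻¹ • ξ) * ∫ t, (∫ x, ‖F (t, x)‖) ∂rho) 2 volume :=
      (hχLs.memLp_of_hasCompactSupport hχLc).mul_const _
    refine hx.mono ?_ ?_
    · exact (((Complex.continuous_ofReal.comp hχLs).measurable).mul hPm).aestronglyMeasurable
    · filter_upwards with ξ
      rw [norm_mul, norm_mul, Complex.norm_real]
      gcongr
      exact (hPb ξ).trans (le_abs_self _)
  have e : ∀ ξ, G ξ * Pop m F ξ = G ξ * ((χ (L⁻¹ • ξ) : ℂ) * Pop m F ξ) := by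
    intro ξ
    by_cases h : G ξ = 0
    · simp [h]
    · rw [hGχ ξ h]; simp
  simp_rw [e]
  refine (cs_int volume _ _ (hG.memLp_of_hasCompactSupport hc) hm).trans ?_
  gcongr ?_ * √?_
  have hm2 := hm.integrable_norm_pow (by norm_num)
  refine integral_mono_of_nonneg (by filter_upwards with ξ; positivity) ?_ ?_
  · have : Integrable (fun ξ : E => χ (L⁻¹ • ξ)) volume := hχLs.integrable_of_hasCompactSupport hχLc
    refine this.mul_bdd (c := (∫ t, (∫ x, ‖F (t, x)‖) ∂rho)^2) (hPm.norm.pow_const 2).aestronglyMeasurable ?_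
    filter_upwards with ξ
    rw [norm_pow, norm_norm]
    gcongr
    exact hPb ξ
  · filter_upwards with ξ
    simp only [norm_mul, Complex.norm_real, mul_pow, Real.norm_of_nonneg (h0 _)]
    gcongr
    nlinarith [h0 (L⁻¹ • ξ), h1 (L⁻¹ • ξ)]
end pairing

section dual
variable {E : Type*} [NormedAddCommGroup E] [InnerProductSpace ℝ E] [FiniteDimensional ℝ E]
  [MeasurableSpace E] [BorelSpace E]

/-- truncation set -/
def Sset (u : ℝ × E → ℂ) (R : ℝ) : Set (ℝ × E) :=
  {z | z.1 ∈ Set.Icc (0:ℝ) 1 ∧ ‖z.2‖ ≤ R ∧ R⁻¹ ≤ ‖u z‖}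

lemma Sset_closed (u : ℝ × E → ℂ) (hu : Continuous u) (R : ℝ) : IsClosed (Sset u R) := by
  have h1 : IsClosed {z : ℝ × E | z.1 ∈ Set.Icc (0:ℝ) 1} := isClosed_Icc.preimage continuous_fst
  have h2 : IsClosed {z : ℝ × E | ‖z.2‖ ≤ R} := isClosed_le (by fun_prop) (by fun_prop)
  have h3 : IsClosed {z : ℝ × E | R⁻¹ ≤ ‖u z‖} := isClosed_le (by fun_prop) (by fun_prop)
  exact h1.inter (h2.inter h3)

/-- truncated power -/
def gtr (u : ℝ × E → ℂ) (R r : ℝ) : ℝ × E → ℝ := (Sset u R).indicator fun z => ‖u z‖ ^ r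

lemma gtr_meas (u : ℝ × E → ℂ) (hu : Continuous u) (R r : ℝ) : Measurable (gtr u R r) :=
  (hu.measurable.norm.pow_const r).indicator (Sset_closed u hu R).measurableSet

lemma gtr_nonneg (u : ℝ × E → ℂ) (R r : ℝ) (z) : 0 ≤ gtr u R r z :=
  Set.indicator_nonneg (fun _ _ => by positivity) _

/-- the dual estimate hypothesis -/
def DualBound (u : ℝ × E → ℂ) (r q : ℝ) (B : ℝ≥0∞) : Prop :=
  ∀ (R : ℝ) (F : ℝ × E → ℂ), Measurable F → Integrable F (rho.prod volume) →
    (∀ t, NiceOn (Metric.closedBall 0 R) fun x => F (t, x)) →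
    (∀ t, ∃ ε > 0, ∀ x, F (t, x) = 0 ∨ ε ≤ ‖F (t, x)‖) →
    ‖∫ z, F z * u z ∂(rho.prod volume)‖ₑ ≤ B * (∫⁻ t, (ENNReal.ofReal
      ((∫ x, ‖F (t, x)‖ ^ (r / (r - 1))) ^ (1 - 1 / r))) ^ (q / (q - 1))) ^ (1 - 1 / q)

lemma dual_trunc (u : ℝ × E → ℂ) (hu : Continuous u) (r q : ℝ) (hr : 2 < r) (hq : 2 < q) (B : ℝ≥0∞)
    (hB : DualBound u r q B) (R : ℝ) (hR : 0 < R) :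
    ∫⁻ t in Set.Icc (0:ℝ) 1, (ENNReal.ofReal (∫ x, gtr u R r (t, x))) ^ (q / r) ≤ B ^ q := by
  have hSm := (Sset_closed u hu R).measurableSet
  set g := gtr u R r with hg
  have hgm : Measurable g := gtr_meas u hu R r
  have hg0 : ∀ z, 0 ≤ g z := gtr_nonneg u R r
  set m : ℝ → ℝ := fun t => ∫ x, g (t, x) with hm
  have hmm : Measurable m := (StronglyMeasurable.integral_prod_right (f := fun t x => g (t, x)) (by exact hgm.stronglyMeasurable)).measurable
  have hm0 : ∀ t, 0 ≤ m t := fun t => integral_nonneg fun x => hg0 _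
  obtain ⟨M, hM⟩ : ∃ M, ∀ z ∈ Sset u R, ‖u z‖ ≤ M := by
    have hK : IsCompact (Set.Icc (0:ℝ) 1 ×ˢ Metric.closedBall (0:E) R) :=
      isCompact_Icc.prod (isCompact_closedBall _ _)
    obtain ⟨M, h⟩ := hK.exists_bound_of_continuousOn hu.continuousOn
    exact ⟨M, fun z hz => h z ⟨hz.1, by simpa using hz.2.1⟩⟩
  have hM' : ∀ z ∈ Sset u R, ‖u z‖ ≤ max M 0 := fun z hz => (hM z hz).trans (le_max_left _ _)
  set M1 := max M 0
  have hM1 : 0 ≤ M1 := le_max_right _ _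
  have hball : ∀ t x, x ∉ Metric.closedBall (0:E) R → (t, x) ∉ Sset u R := by
    intro t x hx h
    exact hx (by simpa using h.2.1)
  have hupos : ∀ z ∈ Sset u R, 0 < ‖u z‖ := fun z hz => lt_of_lt_of_le (by positivity) hz.2.2
  have hgle : ∀ t x, g (t, x) ≤ (Metric.closedBall (0:E) R).indicator (fun _ => M1 ^ r) x := by
    intro t x
    by_cases h : (t, x) ∈ Sset u R
    · have hx : x ∈ Metric.closedBall (0:E) R := by by_contra hx; exact hball t x hx h
      rw [Set.indicator_of_mem hx, hg, gtr, Set.indicator_of_mem h]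
      exact Real.rpow_le_rpow (norm_nonneg _) (hM' _ h) (by linarith)
    · rw [hg, gtr, Set.indicator_of_notMem h]
      exact Set.indicator_nonneg (fun _ _ => by positivity) _
  have hbi : Integrable ((Metric.closedBall (0:E) R).indicator (fun _ => M1 ^ r)) volume :=
    (integrable_indicator_iff measurableSet_closedBall).2 (integrableOn_const (Metric.isBounded_closedBall.measure_lt_top.ne))
  have hgi : ∀ t, Integrable (fun x => g (t, x)) := by
    intro t
    refine hbi.mono' (hgm.comp (by fun_prop)).aestronglyMeasurable ?_
    filter_upwards with x
    rw [Real.norm_of_nonneg (hg0 _)]; exact hgle t x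
  set M2 := ∫ x, (Metric.closedBall (0:E) R).indicator (fun _ => M1 ^ r) x with hM2
  have hmle : ∀ t, m t ≤ M2 := fun t => integral_mono (hgi t) hbi (hgle t)
  set p : ℝ → ℝ := fun t => m t ^ ((q - r) / r) with hp
  have hp0 : ∀ t, 0 ≤ p t := fun t => Real.rpow_nonneg (hm0 t) _
  have hpm : Measurable p := hmm.pow_const _
  have hr0 : 0 < r := by linarith
  have hpmul : ∀ t, p t * m t = m t ^ (q / r) := by
    intro t
    rcases (hm0 t).eq_or_lt with h | h
    · rw [← h, mul_zero, Real.zero_rpow]; positivity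
    · rw [hp, ← Real.rpow_add_one h.ne']; congr 1; field_simp; ring
  set F : ℝ × E → ℂ := (Sset u R).indicator fun z =>
    (starRingEnd ℂ) (u z) * ((‖u z‖ ^ (r - 2) * p z.1 : ℝ) : ℂ) with hF
  have hFm : Measurable F := by
    refine Measurable.indicator ?_ hSm
    refine ((Complex.continuous_conj.measurable).comp hu.measurable).mul ?_
    exact Complex.measurable_ofReal.comp ((hu.measurable.norm.pow_const _).mul (hpm.comp measurable_fst))
  have hFn : ∀ z ∈ Sset u R, ‖F z‖ = ‖u z‖ ^ (r - 1) * p z.1 := by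
    intro z hz
    rw [hF, Set.indicator_of_mem hz, norm_mul, RCLike.norm_conj, Complex.norm_real,
      Real.norm_of_nonneg (mul_nonneg (by positivity) (hp0 _)), ← mul_assoc]
    congr 1
    rw [← Real.rpow_one_add' (norm_nonneg _) (by linarith)]; congr 1; ring
  have hF0 : ∀ z, z ∉ Sset u R → F z = 0 := fun z hz => by rw [hF, Set.indicator_of_notMem hz]
  have hnice : ∀ t, NiceOn (Metric.closedBall 0 R) fun x => F (t, x) := by
    intro t
    refine ⟨hFm.comp (by fun_prop), ⟨M1 ^ (r - 1) * p t, fun x => ?_⟩, fun x hx => hF0 _ (hball t x hx)⟩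
    by_cases h : (t, x) ∈ Sset u R
    · rw [hFn _ h]
      exact mul_le_mul_of_nonneg_right (Real.rpow_le_rpow (norm_nonneg _) (hM' _ h) (by linarith)) (hp0 _)
    · simp only [hF0 _ h, norm_zero]; exact mul_nonneg (by positivity) (hp0 _)
  have hFi : Integrable F (rho.prod volume) := by
    rw [integrable_prod_iff hFm.aestronglyMeasurable]
    constructor
    · filter_upwards with t
      exact ((hnice t).memLp measurableSet_closedBall Metric.isBounded_closedBall).2
    · refine Integrable.of_bound (C := R * M2 ^ (q / r)) ?_ ?_
      · exact (hFm.norm.stronglyMeasurable.integral_prod_right).aestronglyMeasurable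
      · filter_upwards with t
        rw [Real.norm_of_nonneg (integral_nonneg fun x => norm_nonneg _)]
        calc ∫ x, ‖F (t, x)‖ ≤ ∫ x, (R * p t) * g (t, x) := by
              refine integral_mono ((hnice t).memLp measurableSet_closedBall Metric.isBounded_closedBall).2.norm
                ((hgi t).const_mul _) fun x => ?_
              by_cases h : (t, x) ∈ Sset u R
              · simp only
                rw [hFn _ h, hg, gtr, Set.indicator_of_mem h]
                have h1 : 1 ≤ R * ‖u (t, x)‖ := by
                  have := h.2.2
                  rwa [inv_le_iff_one_le_mul₀ hR, mul_comm] at this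
                have h2 : ‖u (t, x)‖ ^ r = ‖u (t,x)‖ * ‖u (t, x)‖ ^ (r - 1) := by
                  rw [← Real.rpow_one_add' (norm_nonneg _) (by linarith)]; congr 1; ring
                rw [h2]
                have := mul_le_mul_of_nonneg_right h1 (mul_nonneg (Real.rpow_nonneg (norm_nonneg (u (t,x))) (r-1)) (hp0 t))
                calc _ ≤ _ := by simpa using this
                  _ = _ := by ring
              · simp only [hF0 _ h, norm_zero]
                exact mul_nonneg (mul_nonneg hR.le (hp0 _)) (hg0 _)
          _ = R * (p t * m t) := by rw [integral_const_mul]; ring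
          _ ≤ R * M2 ^ (q / r) := by
              rw [hpmul]
              gcongr
              · exact hm0 t
              · exact hmle t
  have hε : ∀ t, ∃ ε > 0, ∀ x, F (t, x) = 0 ∨ ε ≤ ‖F (t, x)‖ := by
    intro t
    rcases (hp0 t).eq_or_lt with h | h
    · refine ⟨1, one_pos, fun x => Or.inl ?_⟩
      by_cases hh : (t, x) ∈ Sset u R
      · rw [← norm_eq_zero, hFn _ hh]; simp [← h]
      · exact hF0 _ hh
    · refine ⟨(R⁻¹) ^ (r - 1) * p t, by positivity, fun x => ?_⟩
      by_cases hh : (t, x) ∈ Sset u R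
      · right
        rw [hFn _ hh]
        exact mul_le_mul_of_nonneg_right (Real.rpow_le_rpow (by positivity) hh.2.2 (by linarith)) h.le
      · exact Or.inl (hF0 _ hh)
  have key := hB R F hFm hFi hnice hε
  have hr1 : r - 1 ≠ 0 := by linarith
  have hq1 : q - 1 ≠ 0 := by linarith
  have hφ : ∀ t, (ENNReal.ofReal ((∫ x, ‖F (t, x)‖ ^ (r / (r - 1))) ^ (1 - 1 / r))) ^ (q / (q - 1)) =
      (ENNReal.ofReal (m t)) ^ (q / r) := by
    intro t
    have e1 : ∀ x, ‖F (t, x)‖ ^ (r / (r - 1)) = p t ^ (r / (r - 1)) * g (t, x) := by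
      intro x
      by_cases hh : (t, x) ∈ Sset u R
      · rw [hFn _ hh, hg, gtr, Set.indicator_of_mem hh, Real.mul_rpow (by positivity) (hp0 _), ← Real.rpow_mul (norm_nonneg _),
          mul_div_cancel₀ _ hr1, mul_comm]
      · rw [hF0 _ hh, hg, gtr, Set.indicator_of_notMem hh, norm_zero, mul_zero, Real.zero_rpow]
        exact (div_pos hr0 (by linarith)).ne'
    simp_rw [e1]
    rw [integral_const_mul, Real.mul_rpow (Real.rpow_nonneg (hp0 t) _) (hm0 t), ← Real.rpow_mul (hp0 t)]
    have e2 : r / (r - 1) * (1 - 1 / r) = 1 := by field_simp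
    rw [e2, Real.rpow_one]
    have hq2 : 0 < q / (q - 1) := div_pos (by linarith) (by linarith)
    change ENNReal.ofReal (p t * m t ^ (1 - 1 / r)) ^ _ = _
    have h11 : 0 < 1 - 1 / r := by
      have : 1 / r < 1 := by rw [div_lt_one hr0]; linarith
      linarith
    rcases (hm0 t).eq_or_lt with h | h
    · rw [← h, Real.zero_rpow h11.ne', mul_zero, ENNReal.ofReal_zero,
        ENNReal.zero_rpow_of_pos hq2, ENNReal.zero_rpow_of_pos (by positivity)]
    · rw [hp, ← Real.rpow_add h, ENNReal.ofReal_rpow_of_nonneg (by positivity) hq2.le, ENNReal.ofReal_rpow_of_nonneg h.le (by positivity), ← Real.rpow_mul h.le]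
      congr 2; field_simp; ring
  simp_rw [hφ] at key
  have hmout : ∀ t, t ∉ Set.Icc (0:ℝ) 1 → m t = 0 := by
    intro t ht
    simp only [hm]
    apply integral_eq_zero_of_ae
    filter_upwards with x
    rw [hg, gtr, Set.indicator_of_notMem]; · rfl
    exact fun h => ht h.1
  have hN : ∫⁻ t, (ENNReal.ofReal (m t)) ^ (q / r) = ∫⁻ t in Set.Icc (0:ℝ) 1, (ENNReal.ofReal (m t)) ^ (q / r) := by
    rw [← lintegral_indicator measurableSet_Icc]
    congr 1; funext t
    by_cases ht : t ∈ Set.Icc (0:ℝ) 1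
    · rw [Set.indicator_of_mem ht]
    · rw [Set.indicator_of_notMem ht, hmout t ht, ENNReal.ofReal_zero, ENNReal.zero_rpow_of_pos (by positivity)]
  rw [hN] at key
  set N := ∫⁻ t in Set.Icc (0:ℝ) 1, (ENNReal.ofReal (m t)) ^ (q / r) with hNdef
  have hNl : N = ∫⁻ t in Set.Icc (0:ℝ) 1, ENNReal.ofReal (m t ^ (q / r)) := by
    rw [hNdef]; congr 1; funext t; rw [ENNReal.ofReal_rpow_of_nonneg (hm0 t) (by positivity)]
  have hmi : Integrable (fun t => m t ^ (q / r)) rho := by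
    refine Integrable.of_bound (C := M2 ^ (q / r)) (hmm.pow_const _).aestronglyMeasurable ?_
    filter_upwards with t
    rw [Real.norm_of_nonneg (Real.rpow_nonneg (hm0 t) _)]
    exact Real.rpow_le_rpow (hm0 t) (hmle t) (by positivity)
  have hNi : N = ENNReal.ofReal (∫ t, m t ^ (q / r) ∂rho) := by
    rw [hNl, ofReal_integral_eq_lintegral_ofReal hmi]
    filter_upwards with t using Real.rpow_nonneg (hm0 t) _
  have hLHS : ‖∫ z, F z * u z ∂(rho.prod volume)‖ₑ = N := by
    have e : ∀ z, F z * u z = ((p z.1 * g z : ℝ) : ℂ) := by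
      intro z
      by_cases hh : z ∈ Sset u R
      · rw [hF, hg, gtr, Set.indicator_of_mem hh, Set.indicator_of_mem hh]
        have : ‖u z‖ ^ r = ‖u z‖ ^ 2 * ‖u z‖ ^ (r - 2) := by
          rw [← Real.rpow_natCast, ← Real.rpow_add (hupos z hh)]; congr 1; push_cast; ring
        rw [this]
        push_cast
        rw [← Complex.mul_conj']; ring
      · rw [hF0 _ hh, hg, gtr, Set.indicator_of_notMem hh]; simp
    have hii : Integrable (fun z : ℝ × E => p z.1 * g z) (rho.prod volume) := by
      have hbd : Integrable (fun z => F z * u z) (rho.prod volume) := by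
        refine (hFi.norm.mul_const M1).mono (hFm.mul hu.measurable).aestronglyMeasurable ?_
        filter_upwards with z
        rw [norm_mul, norm_mul, norm_norm, Real.norm_of_nonneg hM1]
        by_cases hh : z ∈ Sset u R
        · gcongr; exact hM' z hh
        · rw [hF0 _ hh]; simp
      simp_rw [e] at hbd
      exact hbd.re
    simp_rw [e]
    rw [integral_complex_ofReal, integral_prod _ hii]
    simp_rw [integral_const_mul]
    change ‖((∫ t, p t * m t ∂rho : ℝ) : ℂ)‖ₑ = N
    simp_rw [hpmul]
    rw [hNi, ← ofReal_norm, Complex.norm_real, Real.norm_of_nonneg]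
    exact integral_nonneg fun t => Real.rpow_nonneg (hm0 t) _
  rw [hLHS] at key
  have hNfin : N ≠  ⊤ := by rw [hNi]; exact ENNReal.ofReal_ne_top
  by_cases hN0 : N = 0
  · rw [hN0]; exact zero_le
  have hq0 : 0 < q := by linarith
  have h1 : N ^ (1 / q) ≤ B := by
    have hne : N ^ (1 - 1 / q) ≠ 0 := by simp [ENNReal.rpow_eq_zero_iff, hN0, hNfin]
    have hnt : N ^ (1 - 1 / q) ≠  ⊤ := by simp [ENNReal.rpow_eq_top_iff, hN0, hNfin]
    rw [← ENNReal.mul_le_mul_iff_left hne hnt, ← ENNReal.rpow_add _ _ hN0 hNfin]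
    simpa using key
  calc N = (N ^ (1 / q)) ^ q := by rw [← ENNReal.rpow_mul, one_div_mul_cancel hq0.ne', ENNReal.rpow_one]
    _ ≤ B ^ q := ENNReal.rpow_le_rpow h1 hq0.le

lemma dual_full (u : ℝ × E → ℂ) (hu : Continuous u) (r q : ℝ) (hr : 2 < r) (hq : 2 < q) (B : ℝ) (hB0 : 0 ≤ B)
    (hB : DualBound u r q (ENNReal.ofReal B)) :
    (∫ t in Set.Icc (0:ℝ) 1, ((∫ x, ‖u (t, x)‖ ^ r) ^ (1 / r)) ^ q) ^ (1 / q) ≤ B := by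
  have hr0 : 0 < r := by linarith
  have hq0 : 0 < q := by linarith
  have hlim : ∀ t ∈ Set.Icc (0:ℝ) 1, Filter.Tendsto (fun k : ℕ => ∫⁻ x, ENNReal.ofReal (gtr u (k+1) r (t, x))) Filter.atTop
      (nhds (∫⁻ x, ENNReal.ofReal (‖u (t, x)‖ ^ r))) := by
    intro t ht
    apply lintegral_tendsto_of_tendsto_of_monotone
    · intro k
      exact (ENNReal.measurable_ofReal.comp ((gtr_meas u hu _ r).comp (by fun_prop))).aemeasurable
    · filter_upwards with x
      intro k l hkl
      apply ENNReal.ofReal_le_ofReal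
      apply Set.indicator_le_indicator_of_subset
      · have hkl' : (k:ℝ) + 1 ≤ l + 1 := by exact_mod_cast Nat.succ_le_succ hkl
        intro z hz
        exact ⟨hz.1, hz.2.1.trans hkl', le_trans (inv_anti₀ (by positivity) hkl') hz.2.2⟩
      · intro z; simp only; positivity
    · filter_upwards with x
      apply tendsto_const_nhds.congr'
      by_cases h : u (t, x) = 0
      · filter_upwards with k
        rw [gtr, Set.indicator_of_notMem, h, norm_zero, Real.zero_rpow hr0.ne']
        intro hz
        have := hz.2.2
        rw [h, norm_zero] at this
        exact absurd this (not_le.2 (by positivity))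
      · have hp : 0 < ‖u (t, x)‖ := norm_pos_iff.2 h
        filter_upwards [Filter.eventually_ge_atTop (⌈max ‖x‖ ‖u (t, x)‖⁻¹⌉₊)] with k hk
        have hk' : max ‖x‖ ‖u (t, x)‖⁻¹ ≤ (k:ℝ) := Nat.ceil_le.1 hk
        rw [gtr, Set.indicator_of_mem]
        refine ⟨ht, ?_, ?_⟩
        · have := le_trans (le_max_left _ _) hk'
          simp only; linarith
        · have := le_trans (le_max_right _ _) hk'
          exact inv_le_of_inv_le₀ hp (by linarith)
  have hgi : ∀ (k : ℕ) t, ENNReal.ofReal (∫ x, gtr u (k+1) r (t, x)) = ∫⁻ x, ENNReal.ofReal (gtr u (k+1) r (t, x)) := by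
    intro k t
    rw [ofReal_integral_eq_lintegral_ofReal]
    · obtain ⟨M, hM⟩ := ((isCompact_closedBall (0:E) (k+1)).exists_bound_of_continuousOn
        (f := fun x => ‖u (t, x)‖ ^ r) (Continuous.continuousOn (by
          apply Continuous.rpow_const (by fun_prop); intro x; right; exact hr0.le)))
      have hbi : Integrable ((Metric.closedBall (0:E) (k+1)).indicator (fun _ => M)) volume :=
        (integrable_indicator_iff measurableSet_closedBall).2 (integrableOn_const (Metric.isBounded_closedBall.measure_lt_top.ne))
      refine hbi.mono ((gtr_meas u hu _ r).comp (by fun_prop)).aestronglyMeasurable ?_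
      filter_upwards with x
      by_cases h : (t, x) ∈ Sset u ((k:ℝ)+1)
      · have hx : x ∈ Metric.closedBall (0:E) (k+1) := by simpa using h.2.1
        rw [Set.indicator_of_mem hx, gtr, Set.indicator_of_mem h]
        exact (hM x hx).trans (le_abs_self _)
      · rw [gtr, Set.indicator_of_notMem h, norm_zero]; positivity
    · filter_upwards with x using gtr_nonneg _ _ _ _
  set V : ℝ → ℝ≥0∞ := fun t => ∫⁻ x, ENNReal.ofReal (‖u (t, x)‖ ^ r) with hV
  have hmain : ∫⁻ t in Set.Icc (0:ℝ) 1, (V t) ^ (q / r) ≤ (ENNReal.ofReal B) ^ q := by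
    calc ∫⁻ t in Set.Icc (0:ℝ) 1, (V t) ^ (q / r)
        ≤ ∫⁻ t in Set.Icc (0:ℝ) 1, Filter.liminf (fun k : ℕ => (ENNReal.ofReal (∫ x, gtr u (k+1) r (t, x))) ^ (q / r)) Filter.atTop := by
          refine setLIntegral_mono_ae' measurableSet_Icc ?_
          filter_upwards with t ht
          have := (ENNReal.continuous_rpow_const (y := q / r)).continuousAt.tendsto.comp (hlim t ht)
          apply le_of_eq
          rw [← this.liminf_eq]
          congr 1; funext k; simp only [Function.comp, hgi]
      _ ≤ Filter.liminf (fun k : ℕ => ∫⁻ t in Set.Icc (0:ℝ) 1, (ENNReal.ofReal (∫ x, gtr u (k+1) r (t, x))) ^ (q / r)) Filter.atTop := by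
          apply lintegral_liminf_le
          intro k
          exact (ENNReal.measurable_ofReal.comp (StronglyMeasurable.integral_prod_right (f := fun t x => gtr u (k+1) r (t, x)) (by exact (gtr_meas u hu _ r).stronglyMeasurable)).measurable).pow_const _
      _ ≤ (ENNReal.ofReal B) ^ q := by
          apply Filter.liminf_le_of_frequently_le'
          apply Filter.Eventually.frequently
          filter_upwards with k
          exact dual_trunc u hu r q hr hq _ hB _ (by positivity)
  have hI0 : ∀ t, 0 ≤ ∫ x, ‖u (t, x)‖ ^ r := fun t => integral_nonneg fun x => by positivity
  have hV2 : ∀ t, ENNReal.ofReal (∫ x, ‖u (t, x)‖ ^ r) ≤ V t := by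
    intro t
    have := enorm_integral_le_lintegral_enorm (μ := volume) (fun x => ‖u (t, x)‖ ^ r)
    rw [Real.enorm_eq_ofReal (hI0 t)] at this
    refine this.trans (le_of_eq ?_)
    congr 1; funext x; rw [Real.enorm_eq_ofReal (by positivity)]
  have hJ : ENNReal.ofReal (∫ t in Set.Icc (0:ℝ) 1, ((∫ x, ‖u (t, x)‖ ^ r) ^ (1 / r)) ^ q) ≤ ENNReal.ofReal (B ^ q) := by
    have h := enorm_integral_le_lintegral_enorm (μ := rho) (fun t => ((∫ x, ‖u (t, x)‖ ^ r) ^ (1 / r)) ^ q)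
    have hnn : ∀ t, 0 ≤ ((∫ x, ‖u (t, x)‖ ^ r) ^ (1 / r)) ^ q := fun t => Real.rpow_nonneg (Real.rpow_nonneg (hI0 t) _) _
    rw [Real.enorm_eq_ofReal (integral_nonneg hnn)] at h
    refine h.trans (le_trans (lintegral_mono fun t => ?_) (hmain.trans (le_of_eq ?_)))
    · simp only
      rw [Real.enorm_eq_ofReal (hnn t), ← Real.rpow_mul (hI0 t), ← ENNReal.ofReal_rpow_of_nonneg (hI0 t) (by positivity), one_div_mul_eq_div]
      exact ENNReal.rpow_le_rpow (hV2 t) (by positivity)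
    · rw [ENNReal.ofReal_rpow_of_nonneg hB0 hq0.le]
  rw [ENNReal.ofReal_le_ofReal_iff (by positivity)] at hJ
  calc _ ≤ (B ^ q) ^ (1 / q) := by
        refine Real.rpow_le_rpow (integral_nonneg fun t => Real.rpow_nonneg (Real.rpow_nonneg (hI0 t) _) _) hJ (by positivity)
    _ = B := by rw [← Real.rpow_mul hB0, mul_one_div_cancel hq0.ne', Real.rpow_one]
end dual

section strich
variable {E : Type*} [NormedAddCommGroup E] [InnerProductSpace ℝ E] [FiniteDimensional ℝ E]
  [MeasurableSpace E] [BorelSpace E]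

lemma exists_chi (c₀ c₁ : ℝ) (h₀ : 0 < c₀) (h₁ : c₀ ≤ c₁) : ∃ χ : E → ℝ, ContDiff ℝ ∞ χ ∧ HasCompactSupport χ ∧
    (∀ ξ, 0 ≤ χ ξ) ∧ (∀ ξ, χ ξ ≤ 1) ∧ (∀ ξ, c₀ ≤ ‖ξ‖ → ‖ξ‖ ≤ c₁ → χ ξ = 1) ∧
    ∀ ξ, χ ξ ≠ 0 → c₀ / 2 ≤ ‖ξ‖ ∧ ‖ξ‖ ≤ 2 * c₁ := by
  have h1 : 0 < c₁ := by linarith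
  set χ : E → ℝ := fun ξ => Real.smoothTransition ((‖ξ‖ ^ 2 - c₀ ^ 2 / 4) / (3 * c₀ ^ 2 / 4)) *
    Real.smoothTransition ((4 * c₁ ^ 2 - ‖ξ‖ ^ 2) / (3 * c₁ ^ 2)) with hχ
  have hs : ∀ ξ, χ ξ ≠ 0 → c₀ / 2 ≤ ‖ξ‖ ∧ ‖ξ‖ ≤ 2 * c₁ := by
    intro ξ h
    constructor
    · by_contra! hh
      apply h
      simp only [hχ]
      rw [Real.smoothTransition.zero_of_nonpos, zero_mul]
      apply div_nonpos_of_nonpos_of_nonneg _ (by positivity)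
      nlinarith [norm_nonneg ξ]
    · by_contra! hh
      apply h
      simp only [hχ]
      rw [Real.smoothTransition.zero_of_nonpos (x := (4 * c₁ ^ 2 - ‖ξ‖ ^ 2) / (3 * c₁ ^ 2)), mul_zero]
      apply div_nonpos_of_nonpos_of_nonneg _ (by positivity)
      nlinarith [norm_nonneg ξ]
  refine ⟨χ, ?_, ?_, ?_, ?_, ?_, hs⟩
  · apply ContDiff.mul
    · exact Real.smoothTransition.contDiff.comp (((contDiff_norm_sq ℝ).sub contDiff_const).div_const _)
    · exact Real.smoothTransition.contDiff.comp ((contDiff_const.sub (contDiff_norm_sq ℝ)).div_const _)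
  · apply HasCompactSupport.intro (isCompact_closedBall (0:E) (2 * c₁))
    intro ξ hξ
    by_contra h
    exact hξ (by simpa using (hs ξ h).2)
  · intro ξ; exact mul_nonneg (Real.smoothTransition.nonneg _) (Real.smoothTransition.nonneg _)
  · intro ξ; exact mul_le_one₀ (Real.smoothTransition.le_one _) (Real.smoothTransition.nonneg _) (Real.smoothTransition.le_one _)
  · intro ξ ha hb
    simp only [hχ]
    rw [Real.smoothTransition.one_of_one_le, Real.smoothTransition.one_of_one_le, mul_one]
    · rw [le_div_iff₀ (by positivity)]; nlinarith [norm_nonneg ξ]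
    · rw [le_div_iff₀ (by positivity)]; nlinarith [norm_nonneg ξ]

lemma strich (c₀ c₁ : ℝ) (h₀ : 0 < c₀) (h₁ : c₀ ≤ c₁) (m : ℝ) (hm : 0 < m) (q r : ℝ) (hq : 2 < q) (hr : 2 < r)
    (hqr : 1 / q = (Module.finrank ℝ E : ℝ) / 2 * (1 / 2 - 1 / r)) :
    ∃ K, 0 < K ∧ ∀ L, 0 < L → ∀ G : E → ℂ, Continuous G → HasCompactSupport G →
      (∀ ξ, G ξ ≠ 0 → c₀ ≤ ‖L⁻¹ • ξ‖ ∧ ‖L⁻¹ • ξ‖ ≤ c₁) →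
      (∫ t in Set.Icc (0:ℝ) 1, ((∫ x, ‖wv m G t x‖ ^ r) ^ (1 / r)) ^ q) ^ (1 / q) ≤
        K * L ^ (3 * (Module.finrank ℝ E : ℝ) / 4 * (1 / 2 - 1 / r)) * √(∫ ξ, ‖G ξ‖ ^ 2) := by
  obtain ⟨χ, hχ, hχc, hχ0, hχ1, hχe, hχs⟩ := exists_chi (E := E) c₀ c₁ h₀ h₁
  obtain ⟨C, hC, hk⟩ := kern_bound χ hχ (c₀ / 2) (2 * c₁) (by positivity) hχs m hm
  set n : ℝ := (Module.finrank ℝ E : ℝ) with hn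
  set a : ℝ := 2 / q with ha
  have hq0 : 0 < q := by linarith
  have hr0 : 0 < r := by linarith
  have ha0 : 0 < a := by positivity
  have ha1 : a < 1 := by rw [ha, div_lt_one hq0]; exact hq
  have haq : a = n / 2 * (1 - 2 / r) := by
    rw [ha, show (2:ℝ) / q = 2 * (1 / q) by ring, hqr]; ring
  set P : ℝ := ((2 * π) ^ (Module.finrank ℝ E)) ^ (2 / r) with hP
  have hPpos : 0 < P := by positivity
  set K1 : ℝ := 2*(2/(1-a)+2^(a/2)) with hK1
  have hK1pos : 0 < K1 := by
    have : 0 < 1 - a := by linarith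
    positivity
  refine ⟨√(C ^ (1 - 2 / r) * P * K1), by positivity, ?_⟩
  intro L hL G hG hGc hGs
  set A : ℝ := C * L ^ (3 * n / 4) with hA
  have hA0 : 0 < A := by positivity
  set D : ℝ := A ^ (1 - 2 / r) * P with hD
  have hD0 : 0 < D := by positivity
  have hsq : √(D * K1) = √(C ^ (1 - 2 / r) * P * K1) * L ^ (3 * n / 4 * (1 / 2 - 1 / r)) := by
    have : D * K1 = (C ^ (1 - 2 / r) * P * K1) * (L ^ (3 * n / 4 * (1 / 2 - 1 / r))) ^ 2 := by
      rw [hD, hA, Real.mul_rpow hC.le (by positivity), ← Real.rpow_mul hL.le, ← Real.rpow_natCast, ← Real.rpow_mul hL.le]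
      have : 3 * n / 4 * (1 / 2 - 1 / r) * ((2:ℕ):ℝ) = 3 * n / 4 * (1 - 2 / r) := by push_cast; ring
      rw [this]; ring
    rw [this, Real.sqrt_mul (by positivity), Real.sqrt_sq (by positivity)]
  refine (dual_full (fun z => wv m G z.1 z.2) (wv_continuous m G hG hGc) r q hr hq
    (√(D * K1) * √(∫ ξ, ‖G ξ‖ ^ 2)) (by positivity) ?_).trans (le_of_eq (by rw [hsq]))
  intro R F hF hFi hFn hFε
  have htt := ttstar χ hχ hχc hχ0 hχ1 m L hL R A hA0.le r a hr ha0 ha1 haq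
    (fun t s ht hs hts x => hk L hL t s ht hs hts x) F hF hFi hFn hFε
  have hpl := pairing_le χ hχ.continuous hχc hχ0 hχ1 m L hL G hG hGc
    (fun ξ h => hχe _ (hGs ξ h).1 (hGs ξ h).2) F hF hFi
  have hX0 : 0 ≤ ∫ ξ, χ (L⁻¹ • ξ) * ‖Pop m F ξ‖ ^ 2 := integral_nonneg fun ξ => mul_nonneg (hχ0 _) (by positivity)
  have e1 : 2 / (2 - a) = q / (q - 1) := by
    have : q - 1 ≠ 0 := by linarith
    have h3 : 2 - a ≠ 0 := by linarith
    rw [div_eq_div_iff h3 this, ha]; field_simp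
  have e2 : (2 - a) * (1 / 2) = 1 - 1 / q := by rw [ha]; ring
  rw [e1] at htt
  set I := ∫⁻ t, (ENNReal.ofReal ((∫ x, ‖F (t, x)‖ ^ (r / (r - 1))) ^ (1 - 1 / r))) ^ (q / (q - 1)) with hI
  calc ‖∫ z, F z * wv m G z.1 z.2 ∂(rho.prod volume)‖ₑ
      = ENNReal.ofReal ‖∫ z, F z * wv m G z.1 z.2 ∂(rho.prod volume)‖ := (ofReal_norm _).symm
    _ ≤ ENNReal.ofReal (√(∫ ξ, ‖G ξ‖ ^ 2) * √(∫ ξ, χ (L⁻¹ • ξ) * ‖Pop m F ξ‖ ^ 2)) := ENNReal.ofReal_le_ofReal hpl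
    _ = ENNReal.ofReal (√(∫ ξ, ‖G ξ‖ ^ 2)) * (ENNReal.ofReal (∫ ξ, χ (L⁻¹ • ξ) * ‖Pop m F ξ‖ ^ 2)) ^ (1 / 2 : ℝ) := by
        rw [ENNReal.ofReal_mul (by positivity), ENNReal.ofReal_rpow_of_nonneg hX0 (by norm_num), ← Real.sqrt_eq_rpow]
    _ ≤ ENNReal.ofReal (√(∫ ξ, ‖G ξ‖ ^ 2)) * (ENNReal.ofReal D * (ENNReal.ofReal K1 * I ^ (2 - a))) ^ (1 / 2 : ℝ) := by
        gcongr
    _ = ENNReal.ofReal (√(D * K1) * √(∫ ξ, ‖G ξ‖ ^ 2)) * I ^ (1 - 1 / q) := by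
        rw [← mul_assoc (ENNReal.ofReal D), ← ENNReal.ofReal_mul hD0.le, ENNReal.mul_rpow_of_nonneg _ _ (by norm_num),
          ← ENNReal.rpow_mul, e2, ENNReal.ofReal_rpow_of_nonneg (by positivity) (by norm_num), ← Real.sqrt_eq_rpow,
          ENNReal.ofReal_mul (by positivity)]
        ring
end strich

end Helpers

/-- frequency-localized Strichartz estimate with loss
`2^{2j(3(d−1)/4)(1/2−1/r)}` for the half-wave equation `∂_t²f + μ|∇|f = 0`. -/
theorem stmt13 {d : ℕ} (hd : 2 ≤ d) (μ : ℝ) (hμ : 0 < μ)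
    (c₀ c₁ : ℝ) (hc₀ : 0 < c₀) (hc₀₁ : c₀ ≤ c₁)
    (ψ : EuclideanSpace ℝ (Fin (d - 1)) → ℝ)
    (hψ : ContDiff ℝ (⊤ : ℕ∞) ψ) (hψc : HasCompactSupport ψ)
    (hsupp : tsupport ψ ⊆
      {η : EuclideanSpace ℝ (Fin (d - 1)) | c₀ ≤ ‖η‖ ∧ ‖η‖ ≤ c₁})
    (q r : ℝ) (hq : 2 < q) (hr : 2 ≤ r)
    (hqr : 1 / q = (((d : ℝ) - 1) / 2) * (1 / 2 - 1 / r)) :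
    ∃ C : ℝ, 0 < C ∧
      ∀ j : ℕ, ∀ f₀ : SchwartzMap (EuclideanSpace ℝ (Fin (d - 1))) ℂ,
        (∫ t in Set.Icc (0 : ℝ) 1,
            ((∫ x' : EuclideanSpace ℝ (Fin (d - 1)),
              ‖halfWave d μ ψ j (fun x => f₀ x) t x'‖ ^ r) ^ (1 / r)) ^ q) ^ (1 / q)
          ≤ C * (2 : ℝ) ^ (2 * (j : ℝ) * (3 * ((d : ℝ) - 1) / 4) * (1 / 2 - 1 / r)) *
              (∫ x' : EuclideanSpace ℝ (Fin (d - 1)),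
                ‖cutoff d ψ j (fun x => f₀ x) x'‖ ^ 2) ^ (1 / (2 : ℝ)) := by
  have hr2 : 2 < r := by
    rcases hr.eq_or_lt with h | h
    · exfalso
      rw [← h, sub_self, mul_zero] at hqr
      have : 0 < 1 / q := by positivity
      linarith
    · exact h
  have hfr : (Module.finrank ℝ (EuclideanSpace ℝ (Fin (d - 1))) : ℝ) = (d : ℝ) - 1 := by
    rw [finrank_euclideanSpace_fin, Nat.cast_sub (by omega)]; simp
  obtain ⟨K, hK, hmain⟩ := strich (E := EuclideanSpace ℝ (Fin (d - 1))) c₀ c₁ hc₀ hc₀₁ (√μ) (Real.sqrt_pos.2 hμ)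
    q r hq hr2 (by rw [hfr]; exact hqr)
  set W : ℝ := (2 * π) ^ (Module.finrank ℝ (EuclideanSpace ℝ (Fin (d - 1)))) with hW
  have hWpos : 0 < W := by positivity
  refine ⟨K / √W, by positivity, fun j f₀ => ?_⟩
  set L : ℝ := (2:ℝ) ^ (2 * j) with hL
  have hLpos : 0 < L := by positivity
  set c : ℂ := (((2 * π) ^ ((1 : ℤ) - (d : ℤ)) : ℝ) : ℂ) with hc
  set G : EuclideanSpace ℝ (Fin (d - 1)) → ℂ := fun ξ => c * ((ψ (L⁻¹ • ξ) : ℂ) * fhat (fun x => f₀ x) ξ) with hG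
  have hfs : ContDiff ℝ (⊤ : ℕ∞) (fhat fun x => f₀ x) := by
    have h1 : ContDiff ℝ (⊤ : ℕ∞) (ft fun x => f₀ x) := by
      apply ft_contDiff
      intro k
      exact f₀.integrable_pow_mul volume k
    have h2 : (fhat fun x => f₀ x) = fun ξ => ft (fun x => f₀ x) (-ξ) := by
      funext ξ
      unfold fhat ft
      congr 1; funext x
      rw [inner_neg_left, real_inner_comm]
      push_cast
      rw [mul_neg, neg_mul]
    rw [h2]
    exact h1.comp contDiff_neg
  have hψL : ContDiff ℝ (⊤ : ℕ∞) fun ξ => (ψ (L⁻¹ • ξ) : ℂ) :=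
    Complex.ofRealCLM.contDiff.comp (hψ.comp (contDiff_const_smul _))
  have hGs : ContDiff ℝ (⊤ : ℕ∞) G := contDiff_const.mul (hψL.mul hfs)
  have hψc' : HasCompactSupport fun ξ => ψ (L⁻¹ • ξ) := hψc.comp_smul (inv_ne_zero hLpos.ne')
  have hGne : ∀ ξ, G ξ ≠ 0 → ψ (L⁻¹ • ξ) ≠ 0 := by
    intro ξ h h0
    apply h
    simp only [hG, h0]; simp
  have hGc : HasCompactSupport G := by
    apply hψc'.mono
    intro ξ h
    exact hGne ξ h
  have hhw : ∀ t x, halfWave d μ ψ j (fun x => f₀ x) t x = wv (√μ) G t x := by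
    intro t x
    unfold halfWave wv ft
    rw [← integral_const_mul]
    congr 1; funext ξ
    simp only [hG]; ring
  have hcut : ∀ x, cutoff d ψ j (fun x => f₀ x) x = ft G x := by
    intro x
    unfold cutoff ft
    rw [← integral_const_mul]
    congr 1; funext ξ
    simp only [hG]; ring
  simp_rw [hhw, hcut]
  have hpl := (ft_plancherel G hGs hGc).2
  refine (hmain L hLpos G hGs.continuous hGc fun ξ h => hsupp (subset_tsupport _ (hGne ξ h))).trans (le_of_eq ?_)
  rw [hpl, ← Real.sqrt_eq_rpow, Real.sqrt_mul hWpos.le, hfr]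
  have hLp : L ^ (3 * ((d:ℝ) - 1) / 4 * (1 / 2 - 1 / r)) =
      (2 : ℝ) ^ (2 * (j : ℝ) * (3 * ((d : ℝ) - 1) / 4) * (1 / 2 - 1 / r)) := by
    rw [hL, ← Real.rpow_natCast, ← Real.rpow_mul (by norm_num)]
    congr 1; push_cast; ring
  rw [hLp]
  have : √W ≠ 0 := (Real.sqrt_pos.2 hWpos).ne'
  field_simp

end
end

section
/- Let d ≥ 2, κ > 0, μ > 0, and let b : [0,∞) → ℝ be continuous, C² on (0,∞) with b, b', b'' locally bounded on [0,∞), satisfying the eigenfunction equation κ y b''(y) + b'(y) + (μ − κ y) b(y) = 0 for all y > 0. Let φ₀ ∈ 𝒮(ℝ^{d−1}) with φ̂₀ smooth and compactly supported in ℝ^{d−1} \ {0}. Define u : ℝ × (0,∞) × ℝ^{d−1} → ℂ by u(t, x_d, x′) = (2π)^{1−d} ∫ e^{i x′·ξ′} b(|ξ′| x_d) cos(t μ^{1/2} |ξ′|^{1/2}) φ̂₀(ξ′) dξ′. Then u is smooth on ℝ × Ω, satisfies the acoustic wave equation ∂_t² u − κ x_d Δ_x u − ∂_{x_d} u = 0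 there, and has initial data u(0, x) = (2π)^{1−d} ∫ e^{i x′·ξ′} b(|ξ′| x_d) φ̂₀(ξ′) dξ′ and ∂_t u(0, x) = 0. -/
open Real MeasureTheory
open scoped RealInnerProductSpace

noncomputable section

section helpers
open Set Filter Topology
open scoped ContDiff Convolution

theorem aux_b_smooth (κ μ : ℝ) (hκ : 0 < κ) (b : ℝ → ℝ)
    (hbC2 : ContDiffOn ℝ 2 b (Set.Ioi 0))
    (hODE : ∀ y : ℝ, 0 < y →
      κ * y * deriv (deriv b) y + deriv b y + (μ - κ * y) * b y = 0) :
    ContDiffOn ℝ ∞ b (Set.Ioi 0) := by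
  have h1 : ContDiffOn ℝ (1 + 1) b (Set.Ioi 0) := by simpa [one_add_one_eq_two] using hbC2
  rw [contDiffOn_succ_iff_deriv_of_isOpen isOpen_Ioi] at h1
  obtain ⟨hb, -, hb'⟩ := h1
  have hdb' : DifferentiableOn ℝ (deriv b) (Ioi 0) := hb'.differentiableOn (by norm_num)
  have key : ∀ n : ℕ, ContDiffOn ℝ n b (Ioi 0) ∧ ContDiffOn ℝ n (deriv b) (Ioi 0) := by
    intro n
    induction n with
    | zero =>
      exact ⟨hbC2.of_le (by norm_num), hb'.of_le (by norm_num)⟩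
    | succ n ih =>
      obtain ⟨i1, i2⟩ := ih
      push_cast
      refine ⟨(contDiffOn_succ_iff_deriv_of_isOpen isOpen_Ioi).2 ⟨hb, by simp, i2⟩,
        (contDiffOn_succ_iff_deriv_of_isOpen isOpen_Ioi).2 ⟨hdb', by simp, ?_⟩⟩
      have : ContDiffOn ℝ n (fun y => -(deriv b y + (μ - κ * y) * b y) / (κ * y)) (Ioi 0) := by
        refine ContDiffOn.div ?_ ?_ ?_
        · refine (i2.add (ContDiffOn.mul ?_ i1)).neg
          fun_prop
        · fun_prop
        · intro y hy
          exact mul_ne_zero hκ.ne' (ne_of_gt hy)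
      refine this.congr fun y hy => ?_
      have hy' : (0:ℝ) < y := hy
      have := hODE y hy
      field_simp
      linarith
  exact contDiffOn_infty.2 fun n => (key n).1

variable {E : Type*} [NormedAddCommGroup E] [InnerProductSpace ℝ E] [FiniteDimensional ℝ E]
  [MeasurableSpace E] [BorelSpace E]

theorem aux_smooth_int {P : Type*} [NormedAddCommGroup P] [NormedSpace ℝ P]
    (s : Set P) (hs : IsOpen s) (G : P → E → ℂ) (φ : E → ℂ)
    (hG : ∀ p ∈ s, ∀ ξ ≠ 0, ContDiffAt ℝ ∞ (fun q : P × E => G q.1 q.2) (p, ξ))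
    (hφs : ContDiff ℝ ∞ φ) (hφc : HasCompactSupport φ) (hφ0 : (0 : E) ∉ tsupport φ) :
    ContDiffOn ℝ ∞ (fun p => ∫ ξ, G p ξ * φ ξ) s := by
  have hk : IsCompact (-(tsupport φ)) := by
    rw [← Set.image_neg_eq_neg]
    exact IsCompact.image hφc continuous_neg
  have hg : ContDiffOn ℝ ((⊤ : ℕ∞) : WithTop ℕ∞)
      (fun q : P × E => G q.1 (-q.2) * φ (-q.2)) (s ×ˢ univ) := by
    rintro ⟨p, ξ⟩ ⟨hp, -⟩
    apply ContDiffAt.contDiffWithinAt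
    by_cases h : -ξ ∈ tsupport φ
    · have h0 : -ξ ≠ 0 := fun h' => hφ0 (h' ▸ h)
      have h2 : ContDiffAt ℝ ∞ (fun q : P × E => (q.1, -q.2)) (p, ξ) := by fun_prop
      exact ((hG p hp (-ξ) h0).comp (p, ξ) h2).mul (hφs.contDiffAt.comp (p, ξ) contDiffAt_snd.neg)
    · have h1 : φ =ᶠ[𝓝 (-ξ)] 0 := notMem_tsupport_iff_eventuallyEq.1 h
      have h2 : Tendsto (fun q : P × E => -q.2) (𝓝 (p, ξ)) (𝓝 (-ξ)) := by
        apply Continuous.tendsto' <;> first | fun_prop | rfl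
      have h3 : (fun q : P × E => G q.1 (-q.2) * φ (-q.2)) =ᶠ[𝓝 (p, ξ)] fun _ => 0 := by
        filter_upwards [h2.eventually h1] with q hq
        rw [hq]; simp
      exact (contDiffAt_const).congr_of_eventuallyEq h3
  have := contDiffOn_convolution_right_with_param (𝕜 := ℝ) (μ := (volume : Measure E))
    (f := fun _ : E => (1 : ℝ)) (n := ⊤) (ContinuousLinearMap.lsmul ℝ ℝ)
    (g := fun p x => G p (-x) * φ (-x)) hs hk
    (by
      intro p x hp hx
      have : φ (-x) = 0 := image_eq_zero_of_notMem_tsupport (by simpa using hx)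
      simp [this])
    (locallyIntegrable_const _) hg
  have h2 : ContDiffOn ℝ ∞ (fun p : P => (p, (0 : E))) s := by fun_prop
  have h3 := this.comp h2 (fun p hp => ⟨hp, mem_univ _⟩)
  refine h3.congr fun p hp => ?_
  simp [convolution]

theorem aux_integrable (φ : E → ℂ) (hφs : Continuous φ) (hφc : HasCompactSupport φ)
    (hφ0 : (0 : E) ∉ tsupport φ) (A : E → ℂ) (hA : ContinuousOn A {0}ᶜ) :
    Integrable (fun ξ => A ξ * φ ξ) := by
  have hsub : tsupport φ ⊆ {0}ᶜ := fun x hx h => hφ0 (by rwa [mem_singleton_iff.1 h] at hx)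
  have : IntegrableOn (fun ξ => A ξ * φ ξ) (tsupport φ) :=
    ((hA.mono hsub).mul hφs.continuousOn).integrableOn_compact hφc
  refine (integrableOn_iff_integrable_of_support_subset ?_).1 this
  intro x hx
  apply subset_tsupport
  intro h
  apply hx
  simp [h]

theorem aux_deriv (φ : E → ℂ) (hφs : Continuous φ) (hφc : HasCompactSupport φ)
    (hφ0 : (0 : E) ∉ tsupport φ) (s : Set ℝ) (hs : IsOpen s) (G G' : ℝ → E → ℂ)
    (hG : ∀ t ∈ s, ContinuousOn (G t) {0}ᶜ)
    (hG' : ContinuousOn (fun q : ℝ × E => G' q.1 q.2) (s ×ˢ {0}ᶜ))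
    (hd : ∀ t ∈ s, ∀ ξ ≠ 0, HasDerivAt (fun t => G t ξ) (G' t ξ) t) (t : ℝ) (ht : t ∈ s) :
    HasDerivAt (fun t => ∫ ξ, G t ξ * φ ξ) (∫ ξ, G' t ξ * φ ξ) t := by
  have hsub : tsupport φ ⊆ {0}ᶜ := fun x hx h => hφ0 (by rwa [mem_singleton_iff.1 h] at hx)
  obtain ⟨ε, hε, hball⟩ := Metric.nhds_basis_closedBall.mem_iff.1 (hs.mem_nhds ht)
  have hK : IsCompact (Metric.closedBall t ε ×ˢ tsupport φ) :=
    (isCompact_closedBall t ε).prod hφc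
  obtain ⟨C, hC⟩ := hK.exists_bound_of_continuousOn (hG'.mono (prod_mono hball hsub))
  have hG'c : ∀ t ∈ s, ContinuousOn (G' t) {0}ᶜ := fun t ht =>
    hG'.comp (f := fun ξ : E => (t, ξ)) (by fun_prop) (fun ξ hξ => ⟨ht, hξ⟩)
  have hz : ∀ ξ, ξ ∉ tsupport φ → φ ξ = 0 := fun ξ h => image_eq_zero_of_notMem_tsupport h
  refine (hasDerivAt_integral_of_dominated_loc_of_deriv_le (F := fun t ξ => G t ξ * φ ξ)
    (F' := fun t ξ => G' t ξ * φ ξ) (bound := fun ξ => C * ‖φ ξ‖)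
    (Metric.closedBall_mem_nhds t hε) ?_ ?_ ?_ ?_ ?_ ?_).2
  · filter_upwards [hs.mem_nhds ht] with r hr
    exact (aux_integrable φ hφs hφc hφ0 _ (hG r hr)).aestronglyMeasurable
  · exact aux_integrable φ hφs hφc hφ0 _ (hG t ht)
  · exact (aux_integrable φ hφs hφc hφ0 _ (hG'c t ht)).aestronglyMeasurable
  · refine Eventually.of_forall fun ξ r hr => ?_
    by_cases h : ξ ∈ tsupport φ
    · rw [norm_mul]
      exact mul_le_mul_of_nonneg_right (hC (r, ξ) ⟨hr, h⟩) (norm_nonneg _)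
    · simp [hz ξ h]
  · exact ((hφs.integrable_of_hasCompactSupport hφc).norm).const_mul C
  · refine Eventually.of_forall fun ξ r hr => ?_
    by_cases h : ξ ∈ tsupport φ
    · exact (hd r (hball hr) ξ (hsub h)).mul_const _
    · simpa [hz ξ h] using hasDerivAt_const r (0:ℂ)

/-- time derivatives -/
theorem aux_time (φ : E → ℂ) (hφs : Continuous φ) (hφc : HasCompactSupport φ)
    (hφ0 : (0 : E) ∉ tsupport φ) (A : E → ℂ) (hA : ContinuousOn A {0}ᶜ) (m : ℝ) (hm : 0 < m) :
    deriv (fun s => ∫ ξ, A ξ * (Real.cos (s * √m * √‖ξ‖) : ℂ) * φ ξ) 0 = 0 ∧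
    ∀ t, deriv (fun r => deriv (fun s => ∫ ξ, A ξ * (Real.cos (s * √m * √‖ξ‖) : ℂ) * φ ξ) r) t
      = ∫ ξ, A ξ * (-(m * ‖ξ‖) * (Real.cos (t * √m * √‖ξ‖) : ℂ)) * φ ξ := by
  have hA' : ContinuousOn (fun q : ℝ × E => A q.2) (univ ×ˢ {0}ᶜ) :=
    hA.comp continuousOn_snd (fun q hq => hq.2)
  have h1 : ∀ t, HasDerivAt (fun s => ∫ ξ, A ξ * (Real.cos (s * √m * √‖ξ‖) : ℂ) * φ ξ)
      (∫ ξ, A ξ * ((-Real.sin (t * √m * √‖ξ‖) * (√m * √‖ξ‖) : ℝ) : ℂ) * φ ξ) t := by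
    intro t
    refine aux_deriv φ hφs hφc hφ0 univ isOpen_univ
      (fun s ξ => A ξ * (Real.cos (s * √m * √‖ξ‖) : ℂ))
      (fun t ξ => A ξ * ((-Real.sin (t * √m * √‖ξ‖) * (√m * √‖ξ‖) : ℝ) : ℂ))
      (fun t _ => hA.mul (by fun_prop)) (hA'.mul (by fun_prop)) ?_ t (mem_univ _)
    intro t _ ξ _
    refine HasDerivAt.const_mul _ (HasDerivAt.ofReal_comp ?_)
    have := (((hasDerivAt_id t).mul_const (√m)).mul_const (√‖ξ‖)).cos
    simpa [mul_assoc] using this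
  have h2 : ∀ t, HasDerivAt
      (fun t => (∫ ξ, A ξ * ((-Real.sin (t * √m * √‖ξ‖) * (√m * √‖ξ‖) : ℝ) : ℂ) * φ ξ))
      (∫ ξ, A ξ * (-(m * ‖ξ‖) * (Real.cos (t * √m * √‖ξ‖) : ℂ)) * φ ξ) t := by
    intro t
    refine aux_deriv φ hφs hφc hφ0 univ isOpen_univ
      (fun t ξ => A ξ * ((-Real.sin (t * √m * √‖ξ‖) * (√m * √‖ξ‖) : ℝ) : ℂ))
      (fun t ξ => A ξ * (-(m * ‖ξ‖) * (Real.cos (t * √m * √‖ξ‖) : ℂ)))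
      (fun t _ => hA.mul (by fun_prop)) (hA'.mul (by fun_prop)) ?_ t (mem_univ _)
    intro t _ ξ _
    refine HasDerivAt.const_mul _ ?_
    have := ((((hasDerivAt_id t).mul_const (√m)).mul_const (√‖ξ‖)).sin.neg.mul_const
      (√m * √‖ξ‖)).ofReal_comp
    refine this.congr_deriv ?_
    rw [show -((m:ℂ) * (‖ξ‖:ℂ)) = ((-(√m * √m * (√‖ξ‖ * √‖ξ‖)) : ℝ) : ℂ) by
      rw [Real.mul_self_sqrt hm.le, Real.mul_self_sqrt (norm_nonneg _)]; push_cast; ring]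
    simp only [id]
    push_cast
    ring
  constructor
  · rw [(h1 0).deriv]; simp
  · intro t
    rw [funext fun r => (h1 r).deriv]
    exact (h2 t).deriv

/-- normal derivatives -/
theorem aux_normal (φ : E → ℂ) (hφs : Continuous φ) (hφc : HasCompactSupport φ)
    (hφ0 : (0 : E) ∉ tsupport φ) (A B : E → ℂ) (hA : ContinuousOn A {0}ᶜ)
    (hB : ContinuousOn B {0}ᶜ) (b : ℝ → ℝ) (hb : ContDiffOn ℝ ∞ b (Ioi 0)) (x : ℝ) (hx : 0 < x) :
    deriv (fun s => ∫ ξ, A ξ * (b (‖ξ‖ * s) : ℂ) * B ξ * φ ξ) x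
      = ∫ ξ, A ξ * (‖ξ‖ * deriv b (‖ξ‖ * x) : ℂ) * B ξ * φ ξ ∧
    deriv (fun r => deriv (fun s => ∫ ξ, A ξ * (b (‖ξ‖ * s) : ℂ) * B ξ * φ ξ) r) x
      = ∫ ξ, A ξ * (‖ξ‖ ^ 2 * deriv (deriv b) (‖ξ‖ * x) : ℂ) * B ξ * φ ξ := by
  have hA' : ContinuousOn (fun q : ℝ × E => A q.2) (Ioi 0 ×ˢ {0}ᶜ) :=
    hA.comp continuousOn_snd (fun q hq => hq.2)
  have hB' : ContinuousOn (fun q : ℝ × E => B q.2) (Ioi 0 ×ˢ {0}ᶜ) :=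
    hB.comp continuousOn_snd (fun q hq => hq.2)
  obtain ⟨hb0, hb1⟩ := (contDiffOn_infty_iff_deriv_of_isOpen isOpen_Ioi).1 hb
  obtain ⟨hb1d, hb2⟩ := (contDiffOn_infty_iff_deriv_of_isOpen isOpen_Ioi).1 hb1
  have hc : ∀ h : ℝ → ℝ, ContinuousOn h (Ioi 0) →
      ContinuousOn (fun q : ℝ × E => (h (‖q.2‖ * q.1) : ℂ)) (Ioi 0 ×ˢ {0}ᶜ) := by
    intro h hh
    refine Complex.continuous_ofReal.comp_continuousOn (hh.comp (by fun_prop) ?_)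
    rintro ⟨t, ξ⟩ ⟨ht, hξ⟩
    exact mul_pos (norm_pos_iff.2 hξ) ht
  have hc2 : ∀ h : ℝ → ℝ, ContinuousOn h (Ioi 0) → ∀ t ∈ Ioi (0:ℝ),
      ContinuousOn (fun ξ : E => (h (‖ξ‖ * t) : ℂ)) {0}ᶜ := fun h hh t ht =>
    (hc h hh).comp (f := fun ξ : E => (t, ξ)) (by fun_prop) (fun ξ hξ => ⟨ht, hξ⟩)
  have hder : ∀ h : ℝ → ℝ, DifferentiableOn ℝ h (Ioi 0) → ∀ t ∈ Ioi (0:ℝ), ∀ ξ : E, ξ ≠ 0 →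
      HasDerivAt (fun t => (h (‖ξ‖ * t) : ℂ)) (‖ξ‖ * deriv h (‖ξ‖ * t) : ℂ) t := by
    intro h hh t ht ξ hξ
    have hp : 0 < ‖ξ‖ * t := mul_pos (norm_pos_iff.2 hξ) ht
    have h1 := (hh.differentiableAt (Ioi_mem_nhds hp)).hasDerivAt
    have h2 : HasDerivAt (fun t => ‖ξ‖ * t) ‖ξ‖ t := by
      simpa using (hasDerivAt_id t).const_mul ‖ξ‖
    have := (h1.comp t h2).ofReal_comp
    refine this.congr_deriv ?_
    push_cast; ring
  have h1 : ∀ t ∈ Ioi (0:ℝ), HasDerivAt (fun s => ∫ ξ, A ξ * (b (‖ξ‖ * s) : ℂ) * B ξ * φ ξ)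
      (∫ ξ, A ξ * (‖ξ‖ * deriv b (‖ξ‖ * t) : ℂ) * B ξ * φ ξ) t := by
    refine aux_deriv φ hφs hφc hφ0 (Ioi 0) isOpen_Ioi
      (fun s ξ => A ξ * (b (‖ξ‖ * s) : ℂ) * B ξ)
      (fun t ξ => A ξ * (‖ξ‖ * deriv b (‖ξ‖ * t) : ℂ) * B ξ)
      (fun t ht => (hA.mul (hc2 b hb.continuousOn t ht)).mul hB)
      ((hA'.mul (ContinuousOn.mul (by fun_prop) (hc _ hb1.continuousOn))).mul hB') ?_
    intro t ht ξ hξ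
    exact ((hder b hb0 t ht ξ hξ).const_mul _).mul_const _
  have h2 : ∀ t ∈ Ioi (0:ℝ), HasDerivAt
      (fun t => ∫ ξ, A ξ * (‖ξ‖ * deriv b (‖ξ‖ * t) : ℂ) * B ξ * φ ξ)
      (∫ ξ, A ξ * (‖ξ‖ ^ 2 * deriv (deriv b) (‖ξ‖ * t) : ℂ) * B ξ * φ ξ) t := by
    refine aux_deriv φ hφs hφc hφ0 (Ioi 0) isOpen_Ioi
      (fun t ξ => A ξ * (‖ξ‖ * deriv b (‖ξ‖ * t) : ℂ) * B ξ)
      (fun t ξ => A ξ * (‖ξ‖ ^ 2 * deriv (deriv b) (‖ξ‖ * t) : ℂ) * B ξ)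
      (fun t ht => (hA.mul (ContinuousOn.mul (by fun_prop) (hc2 _ hb1.continuousOn t ht))).mul hB)
      ((hA'.mul (ContinuousOn.mul (by fun_prop) (hc _ hb2.continuousOn))).mul hB') ?_
    intro t ht ξ hξ
    have := (((hder _ hb1d t ht ξ hξ).const_mul (‖ξ‖ : ℂ)).const_mul (A ξ)).mul_const (B ξ)
    exact this.congr_deriv (by ring)
  refine ⟨(h1 x hx).deriv, ?_⟩
  have : (fun r => deriv (fun s => ∫ ξ, A ξ * (b (‖ξ‖ * s) : ℂ) * B ξ * φ ξ) r) =ᶠ[𝓝 x]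
      (fun t => ∫ ξ, A ξ * (‖ξ‖ * deriv b (‖ξ‖ * t) : ℂ) * B ξ * φ ξ) := by
    filter_upwards [Ioi_mem_nhds hx] with r hr
    exact (h1 r hr).deriv
  rw [this.deriv_eq]
  exact (h2 x hx).deriv

/-- tangential derivative -/
theorem aux_tan1 (φ : E → ℂ) (hφs : ContDiff ℝ ∞ φ) (hφc : HasCompactSupport φ)
    (hφ0 : (0 : E) ∉ tsupport φ) (A : E → ℂ) (hA : ContDiffOn ℝ ∞ A {0}ᶜ) (e : E) (z : E) :
    fderiv ℝ (fun z => ∫ ξ, Complex.exp (Complex.I * (⟪z, ξ⟫ : ℝ)) * A ξ * φ ξ) z e =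
      ∫ ξ, Complex.exp (Complex.I * (⟪z, ξ⟫ : ℝ)) * (Complex.I * (⟪e, ξ⟫ : ℝ) * A ξ) * φ ξ := by
  have hsm : ContDiffOn ℝ ∞
      (fun z => ∫ ξ, Complex.exp (Complex.I * (⟪z, ξ⟫ : ℝ)) * A ξ * φ ξ) univ := by
    refine aux_smooth_int univ isOpen_univ
      (fun z ξ => Complex.exp (Complex.I * (⟪z, ξ⟫ : ℝ)) * A ξ) φ ?_ hφs hφc hφ0
    intro p _ ξ hξ
    have h1 : ContDiffAt ℝ ∞ A ξ := hA.contDiffAt (isOpen_compl_singleton.mem_nhds hξ)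
    refine ContDiffAt.mul ?_ (h1.comp (p, ξ) contDiffAt_snd)
    refine ContDiffAt.cexp (contDiffAt_const.mul ?_)
    exact Complex.ofRealCLM.contDiff.contDiffAt.comp _ (contDiffAt_fst.inner ℝ contDiffAt_snd)
  have hdf : DifferentiableAt ℝ
      (fun z => ∫ ξ, Complex.exp (Complex.I * (⟪z, ξ⟫ : ℝ)) * A ξ * φ ξ) z :=
    (contDiffOn_univ.1 hsm).contDiffAt.differentiableAt (by simp)
  rw [← hdf.lineDeriv_eq_fderiv]
  have hAc := hA.continuousOn
  have hA' : ContinuousOn (fun q : ℝ × E => A q.2) (univ ×ˢ {0}ᶜ) :=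
    hAc.comp continuousOn_snd (fun q hq => hq.2)
  have := aux_deriv φ hφs.continuous hφc hφ0 univ isOpen_univ
      (fun s ξ => Complex.exp (Complex.I * (⟪z + s • e, ξ⟫ : ℝ)) * A ξ)
      (fun s ξ => Complex.exp (Complex.I * (⟪z + s • e, ξ⟫ : ℝ)) * (Complex.I * (⟪e, ξ⟫ : ℝ) * A ξ))
      (fun t _ => ContinuousOn.mul (by fun_prop) hAc)
      (ContinuousOn.mul (by fun_prop) (ContinuousOn.mul (by fun_prop) hA')) (by
        intro t _ ξ _
        have h0 : HasDerivAt (fun s : ℝ => ⟪z + s • e, ξ⟫) ⟪e, ξ⟫ t := by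
          simp only [inner_add_left, inner_smul_left]
          simpa using ((hasDerivAt_id t).mul_const ⟪e, ξ⟫).const_add ⟪z, ξ⟫
        have := ((h0.ofReal_comp.const_mul Complex.I).cexp).mul_const (A ξ)
        exact this.congr_deriv (by ring)) 0 (mem_univ _)
  rw [lineDeriv]
  rw [this.deriv]
  simp

theorem aux_tan2 (φ : E → ℂ) (hφs : ContDiff ℝ ∞ φ) (hφc : HasCompactSupport φ)
    (hφ0 : (0 : E) ∉ tsupport φ) (A : E → ℂ) (hA : ContDiffOn ℝ ∞ A {0}ᶜ) (e : E) (z : E) :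
    fderiv ℝ (fun z => fderiv ℝ
      (fun z => ∫ ξ, Complex.exp (Complex.I * (⟪z, ξ⟫ : ℝ)) * A ξ * φ ξ) z e) z e =
      ∫ ξ, Complex.exp (Complex.I * (⟪z, ξ⟫ : ℝ)) * (-(⟪e, ξ⟫ : ℝ) ^ 2 * A ξ) * φ ξ := by
  rw [funext fun z => aux_tan1 φ hφs hφc hφ0 A hA e z]
  rw [aux_tan1 φ hφs hφc hφ0 (fun ξ => Complex.I * (⟪e, ξ⟫ : ℝ) * A ξ)]
  · congr 1
    ext ξ
    linear_combination (Complex.exp (Complex.I * (⟪z, ξ⟫ : ℝ)) * (⟪e, ξ⟫ : ℝ) ^ 2 * A ξ * φ ξ) *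
      Complex.I_mul_I
  · refine ContDiffOn.mul (contDiffOn_const.mul ?_) hA
    exact (Complex.ofRealCLM.contDiff.comp (contDiff_const.inner ℝ contDiff_id)).contDiffOn

end helpers

/-- a gallery mode whose normal profile solves the eigenfunction
ODE, evolved by the tangential half-wave flow, is a smooth solution of the
acoustic wave equation `∂_t²u − κx_dΔu − ∂_{x_d}u = 0` on ℝ × Ω with initial
data `(u₀, 0)`. -/
theorem stmt14 {d : ℕ} (hd : 2 ≤ d) (κ μ : ℝ) (hκ : 0 < κ) (hμ : 0 < μ)
    (b : ℝ → ℝ) (hbcont : ContinuousOn b (Set.Ici 0))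
    (hbC2 : ContDiffOn ℝ 2 b (Set.Ioi 0))
    (hbloc : ∀ K : Set ℝ, IsCompact K → K ⊆ Set.Ici 0 → ∃ C : ℝ,
      ∀ y ∈ K ∩ Set.Ioi 0,
        |b y| + |deriv b y| + |deriv (deriv b) y| ≤ C)
    (hODE : ∀ y : ℝ, 0 < y →
      κ * y * deriv (deriv b) y + deriv b y + (μ - κ * y) * b y = 0)
    (φ₀ : SchwartzMap (EuclideanSpace ℝ (Fin (d - 1))) ℂ)
    (φhat : EuclideanSpace ℝ (Fin (d - 1)) → ℂ)
    (hφhat : φhat = fun ξ => ∫ x : EuclideanSpace ℝ (Fin (d - 1)),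
      Complex.exp (-Complex.I * (⟪x, ξ⟫ : ℝ)) * φ₀ x)
    (hφs : ContDiff ℝ (⊤ : ℕ∞) φhat) (hφc : HasCompactSupport φhat)
    (hφ0 : (0 : EuclideanSpace ℝ (Fin (d - 1))) ∉ tsupport φhat)
    (u : ℝ → ℝ → EuclideanSpace ℝ (Fin (d - 1)) → ℂ)
    (hu : u = fun t xd x' =>
      (((2 * π) ^ ((1 : ℤ) - (d : ℤ)) : ℝ) : ℂ) *
        ∫ ξ : EuclideanSpace ℝ (Fin (d - 1)),
          Complex.exp (Complex.I * (⟪x', ξ⟫ : ℝ)) * (b (‖ξ‖ * xd) : ℂ) *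
            (Real.cos (t * Real.sqrt μ * Real.sqrt ‖ξ‖) : ℂ) * φhat ξ) :
    ContDiffOn ℝ (⊤ : ℕ∞)
      (fun p : ℝ × ℝ × EuclideanSpace ℝ (Fin (d - 1)) => u p.1 p.2.1 p.2.2)
      (Set.univ ×ˢ Set.Ioi 0 ×ˢ Set.univ) ∧
    (∀ t : ℝ, ∀ xd : ℝ, 0 < xd → ∀ x' : EuclideanSpace ℝ (Fin (d - 1)),
      deriv (fun s => deriv (fun s' => u s' xd x') s) t
        - ((κ * xd : ℝ) : ℂ) *
            (deriv (fun y => deriv (fun y' => u t y' x') y) xd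
              + ∑ i : Fin (d - 1),
                  fderiv ℝ (fun z => fderiv ℝ (fun z' => u t xd z') z
                    (EuclideanSpace.single i 1)) x' (EuclideanSpace.single i 1))
        - deriv (fun y => u t y x') xd = 0) ∧
    (∀ xd : ℝ, 0 < xd → ∀ x' : EuclideanSpace ℝ (Fin (d - 1)),
      u 0 xd x' = (((2 * π) ^ ((1 : ℤ) - (d : ℤ)) : ℝ) : ℂ) *
          ∫ ξ : EuclideanSpace ℝ (Fin (d - 1)),
            Complex.exp (Complex.I * (⟪x', ξ⟫ : ℝ)) * (b (‖ξ‖ * xd) : ℂ) * φhat ξ ∧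
      deriv (fun s => u s xd x') 0 = 0) := by
  have hbs : ContDiffOn ℝ (⊤ : ℕ∞) b (Set.Ioi 0) := aux_b_smooth κ μ hκ b hbC2 hODE
  obtain ⟨ψ, hψ⟩ : ∃ ψ : EuclideanSpace ℝ (Fin (d - 1)) → ℂ,
      ψ = fun ξ => (((2 * π) ^ ((1 : ℤ) - (d : ℤ)) : ℝ) : ℂ) * φhat ξ := ⟨_, rfl⟩
  have hψs : ContDiff ℝ (⊤ : ℕ∞) ψ := by rw [hψ]; exact contDiff_const.mul hφs
  have hψsub : tsupport ψ ⊆ tsupport φhat := by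
    rw [hψ]; exact tsupport_mul_subset_right
  have hψc : HasCompactSupport ψ := by rw [hψ]; exact hφc.mul_left
  have hψ0 : (0 : EuclideanSpace ℝ (Fin (d - 1))) ∉ tsupport ψ := fun h => hφ0 (hψsub h)
  have hu' : ∀ t xd x', u t xd x' = ∫ ξ : EuclideanSpace ℝ (Fin (d - 1)),
          Complex.exp (Complex.I * (⟪x', ξ⟫ : ℝ)) * (b (‖ξ‖ * xd) : ℂ) *
            (Real.cos (t * Real.sqrt μ * Real.sqrt ‖ξ‖) : ℂ) * ψ ξ := by
    intro t xd x'
    rw [hu, hψ]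
    simp only []
    rw [← integral_const_mul]
    congr 1
    ext ξ
    ring
  have hof : ContDiff ℝ (⊤ : ℕ∞) (fun x : ℝ => (x : ℂ)) := Complex.ofRealCLM.contDiff
  have hbξ : ∀ y : ℝ, 0 < y → ContDiffOn ℝ (⊤ : ℕ∞)
      (fun ξ : EuclideanSpace ℝ (Fin (d - 1)) => (b (‖ξ‖ * y) : ℂ)) {0}ᶜ := by
    intro y hy ξ hξ
    have hp : 0 < ‖ξ‖ * y := mul_pos (norm_pos_iff.2 hξ) hy
    have h1 : ContDiffAt ℝ (⊤ : ℕ∞) b (‖ξ‖ * y) := hbs.contDiffAt (Ioi_mem_nhds hp)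
    exact (hof.contDiffAt.comp ξ (h1.comp (f := fun ξ : EuclideanSpace ℝ (Fin (d - 1)) => ‖ξ‖ * y) ξ
      ((contDiffAt_id.norm ℝ hξ).mul contDiffAt_const))).contDiffWithinAt
  have hcξ : ∀ t : ℝ, ContDiffOn ℝ (⊤ : ℕ∞) (fun ξ : EuclideanSpace ℝ (Fin (d - 1)) =>
      (Real.cos (t * Real.sqrt μ * Real.sqrt ‖ξ‖) : ℂ)) {0}ᶜ := by
    intro t ξ hξ
    refine (hof.contDiffAt.comp ξ (ContDiffAt.cos ?_)).contDiffWithinAt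
    exact contDiffAt_const.mul ((contDiffAt_id.norm ℝ hξ).sqrt (norm_ne_zero_iff.2 hξ))
  have heξ : ∀ x' : EuclideanSpace ℝ (Fin (d - 1)), Continuous
      (fun ξ : EuclideanSpace ℝ (Fin (d - 1)) => Complex.exp (Complex.I * (⟪x', ξ⟫ : ℝ))) := by
    intro x'; fun_prop
  refine ⟨?_, ?_, ?_⟩
  · simp only [hu']
    refine aux_smooth_int (P := ℝ × ℝ × EuclideanSpace ℝ (Fin (d - 1)))
      (Set.univ ×ˢ Set.Ioi 0 ×ˢ Set.univ)
      (isOpen_univ.prod (isOpen_Ioi.prod isOpen_univ))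
      (fun p ξ => Complex.exp (Complex.I * (⟪p.2.2, ξ⟫ : ℝ)) * (b (‖ξ‖ * p.2.1) : ℂ) *
            (Real.cos (p.1 * Real.sqrt μ * Real.sqrt ‖ξ‖) : ℂ)) ψ ?_ hψs hψc hψ0
    rintro ⟨t, y, x'⟩ ⟨-, hy, -⟩ ξ hξ
    have hp : 0 < ‖ξ‖ * y := mul_pos (norm_pos_iff.2 hξ) hy
    have h1 : ContDiffAt ℝ (⊤ : ℕ∞) b (‖ξ‖ * y) := hbs.contDiffAt (Ioi_mem_nhds hp)
    have hn : ContDiffAt ℝ (⊤ : ℕ∞) (fun q : (ℝ × ℝ × EuclideanSpace ℝ (Fin (d - 1))) ×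
        EuclideanSpace ℝ (Fin (d - 1)) => ‖q.2‖) ((t, y, x'), ξ) := contDiffAt_snd.norm ℝ hξ
    refine ContDiffAt.mul (ContDiffAt.mul ?_ ?_) ?_
    · refine ContDiffAt.cexp (contDiffAt_const.mul (hof.contDiffAt.comp _ ?_))
      exact ContDiffAt.inner ℝ (by fun_prop) contDiffAt_snd
    · refine hof.contDiffAt.comp _ (h1.comp (f := fun q : (ℝ × ℝ × EuclideanSpace ℝ (Fin (d - 1))) ×
        EuclideanSpace ℝ (Fin (d - 1)) => ‖q.2‖ * q.1.2.1) ((t, y, x'), ξ) (hn.mul (by fun_prop)))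
    · refine hof.contDiffAt.comp _ (ContDiffAt.cos ?_)
      exact ContDiffAt.mul (by fun_prop) (hn.sqrt (norm_ne_zero_iff.2 hξ))
  · intro t xd hxd x'
    simp only [hu']
    have hT := (aux_time ψ hψs.continuous hψc hψ0 (fun ξ =>
      Complex.exp (Complex.I * (⟪x', ξ⟫ : ℝ)) * (b (‖ξ‖ * xd) : ℂ))
      ((heξ x').continuousOn.mul (hbξ xd hxd).continuousOn) μ hμ).2 t
    have hN := aux_normal ψ hψs.continuous hψc hψ0 (fun ξ =>
      Complex.exp (Complex.I * (⟪x', ξ⟫ : ℝ)))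
      (fun ξ => (Real.cos (t * Real.sqrt μ * Real.sqrt ‖ξ‖) : ℂ)) (heξ x').continuousOn
      (hcξ t).continuousOn b hbs xd hxd
    have hX := fun e => aux_tan2 ψ hψs hψc hψ0
      (fun ξ => (b (‖ξ‖ * xd) : ℂ) * (Real.cos (t * Real.sqrt μ * Real.sqrt ‖ξ‖) : ℂ))
      ((hbξ xd hxd).mul (hcξ t)) e x'
    simp only [← mul_assoc] at hX
    simp only [← mul_assoc] at hT hN
    rw [hT, hN.1, hN.2]
    simp only [hX]
    obtain ⟨hb0, hb1⟩ := (contDiffOn_infty_iff_deriv_of_isOpen isOpen_Ioi).1 hbs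
    obtain ⟨hb1d, hb2⟩ := (contDiffOn_infty_iff_deriv_of_isOpen isOpen_Ioi).1 hb1
    have hc2 : ∀ h : ℝ → ℝ, ContinuousOn h (Set.Ioi 0) →
      ContinuousOn (fun ξ : EuclideanSpace ℝ (Fin (d - 1)) => (h (‖ξ‖ * xd) : ℂ)) {0}ᶜ := by
      intro h hh
      refine Complex.continuous_ofReal.comp_continuousOn (hh.comp (by fun_prop) ?_)
      intro ξ hξ
      exact mul_pos (norm_pos_iff.2 hξ) hxd
    have c1 := hc2 _ hbs.continuousOn
    have c2 := hc2 _ hb1.continuousOn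
    have c3 := hc2 _ hb2.continuousOn
    have c4 := (hcξ t).continuousOn
    have c5 := (heξ x').continuousOn (s := {0}ᶜ)
    have I := fun A hA => aux_integrable ψ hψs.continuous hψc hψ0 A hA
    have c6 : ContinuousOn (fun ξ : EuclideanSpace ℝ (Fin (d - 1)) => (‖ξ‖ : ℂ)) {0}ᶜ := by fun_prop
    have c7 : ∀ e : EuclideanSpace ℝ (Fin (d - 1)),
      ContinuousOn (fun ξ : EuclideanSpace ℝ (Fin (d - 1)) => ((⟪e, ξ⟫ : ℝ) : ℂ)) {0}ᶜ := by
      intro e; fun_prop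
    have j1 := I _ (((c5.mul c1).mul ((continuousOn_const (c := (μ : ℂ))).mul c6).neg).mul c4)
    have j2 := I _ (((c5.mul (c6.pow 2)).mul c3).mul c4)
    have j3 := fun e => I _ (((c5.mul ((c7 e).pow 2).neg).mul c1).mul c4)
    have j4 := I _ (((c5.mul c6).mul c2).mul c4)
    have j3s := integrable_finsetSum Finset.univ
      (fun (i : Fin (d - 1)) _ => j3 (EuclideanSpace.single i 1))
    rw [← integral_finsetSum, ← integral_add, ← integral_const_mul, ← integral_sub, ← integral_sub]
    · apply integral_eq_zero_of_ae
      refine Filter.Eventually.of_forall fun ξ => ?_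
      by_cases hξ : ξ = 0
      · have : ψ ξ = 0 := by rw [hξ]; exact image_eq_zero_of_notMem_tsupport hψ0
        simp [this]
      · have ho := hODE (‖ξ‖ * xd) (mul_pos (norm_pos_iff.2 hξ) hxd)
        have ho' : (κ : ℂ) * (‖ξ‖ * xd) * (deriv (deriv b) (‖ξ‖ * xd) : ℝ) +
          (deriv b (‖ξ‖ * xd) : ℝ) + (μ - κ * (‖ξ‖ * xd)) * (b (‖ξ‖ * xd) : ℝ) = 0 := by
          exact_mod_cast ho
        have hs : ∑ i : Fin (d - 1), (((⟪EuclideanSpace.single i (1 : ℝ), ξ⟫ : ℝ) : ℂ)) ^ 2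
            = (‖ξ‖ : ℂ) ^ 2 := by
          have := EuclideanSpace.real_norm_sq_eq ξ
          simp only [EuclideanSpace.inner_single_left, map_one, one_mul]
          exact_mod_cast this.symm
        simp only [mul_neg, neg_mul, Finset.sum_neg_distrib, ← Finset.sum_mul, ← Finset.mul_sum, hs,
          Pi.zero_apply]
        simp only [Complex.ofReal_mul]
        linear_combination (-(Complex.exp (Complex.I * (⟪x', ξ⟫ : ℝ)) * ‖ξ‖ *
          (Real.cos (t * Real.sqrt μ * Real.sqrt ‖ξ‖) : ℂ) * ψ ξ)) * ho'
    · exact j1.sub ((j2.add j3s).const_mul _)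
    · exact j4
    · exact j1
    · exact (j2.add j3s).const_mul _
    · exact j2
    · exact j3s
    · exact fun i _ => j3 _
  · intro xd hxd x'
    constructor
    · rw [hu]; simp
    · simp only [hu']
      exact (aux_time ψ hψs.continuous hψc hψ0 (fun ξ =>
        Complex.exp (Complex.I * (⟪x', ξ⟫ : ℝ)) * (b (‖ξ‖ * xd) : ℂ))
        ((heξ x').continuousOn.mul (hbξ xd hxd).continuousOn) μ hμ).1

end
end
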